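/- arXiv:2105.04748 — 3 statements merged into one kernel-verified Lean document; each statement's English description precedes it below -/
import Mathlib

section
/- Let δ(x, y) = y³ − y·x³ (an E₇-type singular impasse curve). Let X = (P, Q) be real-analytic on a neighborhood of the origin in ℝ² with P(0,0) ≠ 0 and Q(x, 0) = 0 for all x in a neighborhood of 0. Then the constrained system (X, δ) is orientation-preserving C⁰-orbitally equivalent at (0, 0) to the constrained system (Y, δ), where Y is the constant vector field Y ≡ (P(0,0), 0). -/
/-- A phase curve of the vector field `X` in the set `V`: a differentiable curve
`c : J → V` on a nondegenerate interval `J` with `c'(t) = X(c(t))` for all `t ∈ J`. -/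
def IsPhaseCurve (X : ℝ × ℝ → ℝ × ℝ) (V : Set (ℝ × ℝ)) (J : Set ℝ) (c : ℝ → ℝ × ℝ) : Prop :=
  J.OrdConnected ∧ J.Nontrivial ∧ (∀ t ∈ J, c t ∈ V) ∧
    ∀ t ∈ J, HasDerivWithinAt c (X (c t)) J t

/-- The planar constrained systems `(X, δ)` and `(Y, γ)` are orientation-preserving
`C⁰`-orbitally equivalent at `(p₁, p₂)`: there are open neighborhoods `V₁ ∋ p₁`, `V₂ ∋ p₂`
and a homeomorphism `Φ : V₁ → V₂` sending `p₁` to `p₂` and impasse set to impasse set, which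
carries phase curves of `X` off the impasse set onto phase curves of `Y` off the impasse set
up to continuous strictly increasing reparametrizations, and conversely for `Φ⁻¹`. -/
def OrbitallyEquivAt (X : ℝ × ℝ → ℝ × ℝ) (δ : ℝ × ℝ → ℝ) (p₁ : ℝ × ℝ)
    (Y : ℝ × ℝ → ℝ × ℝ) (γ : ℝ × ℝ → ℝ) (p₂ : ℝ × ℝ) : Prop :=
  ∃ (V₁ V₂ : Set (ℝ × ℝ)) (Φ Φinv : ℝ × ℝ → ℝ × ℝ),
    IsOpen V₁ ∧ IsOpen V₂ ∧ p₁ ∈ V₁ ∧ p₂ ∈ V₂ ∧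
    -- Φ is a homeomorphism from V₁ onto V₂ with inverse Φinv
    ContinuousOn Φ V₁ ∧ ContinuousOn Φinv V₂ ∧
    Set.MapsTo Φ V₁ V₂ ∧ Set.MapsTo Φinv V₂ V₁ ∧
    (∀ z ∈ V₁, Φinv (Φ z) = z) ∧ (∀ z ∈ V₂, Φ (Φinv z) = z) ∧
    Φ p₁ = p₂ ∧
    -- Φ maps the impasse set to the impasse set
    Φ '' ({z | δ z = 0} ∩ V₁) = {z | γ z = 0} ∩ V₂ ∧
    -- Φ maps phase curves of X to phase curves of Y, preserving orientation
    (∀ (J : Set ℝ) (c : ℝ → ℝ × ℝ),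
      IsPhaseCurve X (V₁ \ {z | δ z = 0}) J c →
      ∃ (J' : Set ℝ) (d : ℝ → ℝ × ℝ) (τ : ℝ → ℝ),
        IsPhaseCurve Y (V₂ \ {z | γ z = 0}) J' d ∧
        ContinuousOn τ J ∧ StrictMonoOn τ J ∧ τ '' J = J' ∧
        ∀ t ∈ J, Φ (c t) = d (τ t)) ∧
    -- Φ⁻¹ maps phase curves of Y to phase curves of X, preserving orientation
    (∀ (J : Set ℝ) (d : ℝ → ℝ × ℝ),
      IsPhaseCurve Y (V₂ \ {z | γ z = 0}) J d →
      ∃ (J' : Set ℝ) (c : ℝ → ℝ × ℝ) (τ : ℝ → ℝ),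
        IsPhaseCurve X (V₁ \ {z | δ z = 0}) J' c ∧
        ContinuousOn τ J ∧ StrictMonoOn τ J ∧ τ '' J = J' ∧
        ∀ t ∈ J, Φinv (d t) = c (τ t))

/-! The leaves `y = φ (x, h)` of the slope equation `y' = Q / P`, labelled by their height `h` over
`x = 0`, straighten `X`: in the chart `(x, h) ↦ (x, φ (x, h))` its phase curves run along the
horizontals in the direction of the sign of `P (0, 0)`. The axis `y = 0` is itself a leaf, so there
the impasse set reads `h = 0` or `x = |φ (x, h)| ^ (2 / 3)`, while for the constant field it is
`h = 0` or `x = |h| ^ (2 / 3)`. The shear `(x, h) ↦ (x - |φ (x, h)| ^ (2 / 3) + |h| ^ (2 / 3), h)`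
carries the first set to the second. By Grönwall's inequality `|φ|` grows along a leaf by a factor
of at most `exp (L * Δx)`, so close to the origin the shear is strictly increasing on each
horizontal; hence it is a homeomorphism onto its image that respects the direction of the arcs. -/

open Set Filter Topology

section Gronwall

variable {E : Type*} [NormedAddCommGroup E] [NormedSpace ℝ E] {u u' : ℝ → E} {J : Set ℝ} {K : ℝ}

lemma norm_le_norm_mul_exp_of_norm_deriv_le (hJ : J.OrdConnected)
    (hu : ∀ t ∈ J, HasDerivWithinAt u (u' t) J t) (hK : ∀ t ∈ J, ‖u' t‖ ≤ K * ‖u t‖)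
    {s t : ℝ} (hs : s ∈ J) (ht : t ∈ J) : ‖u t‖ ≤ ‖u s‖ * Real.exp (K * |t - s|) := by
  wlog hst : s ≤ t generalizing u u' J s t
  · have hneg : MapsTo Neg.neg (Neg.neg ⁻¹' J) J := fun _ h => h
    have hreflect := @this (u ∘ Neg.neg) (fun x => -u' (-x)) (Neg.neg ⁻¹' J)
      ⟨fun x hx y hy z hz => hJ.out hy hx ⟨neg_le_neg hz.2, neg_le_neg hz.1⟩⟩
      (fun x hx => by simpa using (hu (-x) hx).scomp x (hasDerivWithinAt_neg x _) hneg)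
      (fun x hx => by simpa using hK (-x) hx) (-s) (-t) (by simpa using hs) (by simpa using ht)
      (neg_le_neg (not_le.1 hst).le)
    simpa [neg_add_eq_sub, abs_sub_comm] using hreflect
  have hsub : Icc s t ⊆ J := hJ.out hs ht
  have hright (x : ℝ) (hx : x ∈ Ico s t) : HasDerivWithinAt u (u' x) (Ici x) x :=
    (hu x (hsub (Ico_subset_Icc_self hx))).mono_of_mem_nhdsWithin <|
      mem_of_superset (Icc_mem_nhdsGE hx.2) ((Icc_subset_Icc_left hx.1).trans hsub)
  have hbound := norm_le_gronwallBound_of_norm_deriv_right_le (ε := 0)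
    (fun x hx => ((hu x (hsub hx)).continuousWithinAt).mono hsub) hright le_rfl
    (fun x hx => by simpa using hK x (hsub (Ico_subset_Icc_self hx))) t (right_mem_Icc.2 hst)
  rwa [gronwallBound_ε0, ← abs_of_nonneg (sub_nonneg.2 hst)] at hbound

lemma eq_zero_of_norm_deriv_le_continuousOn_mul {k : ℝ → ℝ} (hJ : J.OrdConnected)
    (hk : ContinuousOn k J) (hu : ∀ t ∈ J, HasDerivWithinAt u (u' t) J t)
    (hbound : ∀ t ∈ J, ‖u' t‖ ≤ k t * ‖u t‖) {s t : ℝ} (hs : s ∈ J) (ht : t ∈ J)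
    (hus : u s = 0) : u t = 0 := by
  have hsub : uIcc s t ⊆ J := hJ.uIcc_subset hs ht
  obtain ⟨C, hC⟩ := isCompact_uIcc.bddAbove_image (hk.mono hsub)
  have hgrowth := norm_le_norm_mul_exp_of_norm_deriv_le ordConnected_uIcc
    (fun x hx => (hu x (hsub hx)).mono hsub)
    (fun x hx => (hbound x (hsub hx)).trans <|
      mul_le_mul_of_nonneg_right (hC (mem_image_of_mem k hx)) (norm_nonneg _))
    left_mem_uIcc right_mem_uIcc
  simpa [hus] using hgrowth

lemma lt_of_lt_of_hasDerivWithinAt_lipschitz {F : ℝ × ℝ → ℝ} {L : NNReal} {y z : ℝ → ℝ}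
    (hF : LipschitzWith L F) (hJ : J.OrdConnected)
    (hy : ∀ x ∈ J, HasDerivWithinAt y (F (x, y x)) J x)
    (hz : ∀ x ∈ J, HasDerivWithinAt z (F (x, z x)) J x)
    {s t : ℝ} (hs : s ∈ J) (ht : t ∈ J) (hst : y s < z s) : y t < z t := by
  have hsub : uIcc s t ⊆ J := hJ.uIcc_subset hs ht
  have hdiff (x : ℝ) (hx : x ∈ J) :
      HasDerivWithinAt (fun x => z x - y x) (F (x, z x) - F (x, y x)) J x :=
    (hz x hx).sub (hy x hx)
  have hLip (x : ℝ) : ‖F (x, z x) - F (x, y x)‖ ≤ L * ‖z x - y x‖ := by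
    simpa [dist_eq_norm] using hF.dist_le_mul (x, z x) (x, y x)
  by_contra! hle
  obtain ⟨x, hx, hx0⟩ : (0 : ℝ) ∈ (fun x => z x - y x) '' uIcc s t :=
    intermediate_value_uIcc (fun x hx => (hdiff x (hsub hx)).continuousWithinAt.mono hsub)
      (mem_uIcc.2 (.inr ⟨sub_nonpos.2 hle, (sub_pos.2 hst).le⟩))
  have hzero := eq_zero_of_norm_deriv_le_continuousOn_mul hJ continuousOn_const hdiff
    (fun x _ => hLip x) (hsub hx) hs hx0
  exact (sub_pos.2 hst).ne' hzero

end Gronwall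

section Shear

variable {X : Type*} [TopologicalSpace X] {U : Set (X × ℝ)} {f : X × ℝ → ℝ}

lemma isOpen_image_fst_prodMk_of_strictMonoOn (hU : IsOpen U) (hf : ContinuousOn f U)
    (hmono : ∀ x, StrictMonoOn (fun y => f (x, y)) (Prod.mk x ⁻¹' U)) :
    IsOpen ((fun z => (z.1, f z)) '' U) := by
  rw [isOpen_iff_mem_nhds, forall_mem_image]
  rintro ⟨x₀, y₀⟩ h₀
  obtain ⟨V, hV, W, hW, hVW⟩ := mem_nhds_prod_iff.1 (hU.mem_nhds h₀)
  obtain ⟨ε, hε, hεW⟩ := Metric.nhds_basis_closedBall.mem_iff.1 hW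
  rw [Real.closedBall_eq_Icc] at hεW
  have hmem {x : X} (hx : x ∈ V) {y : ℝ} (hy : y ∈ Icc (y₀ - ε) (y₀ + ε)) : (x, y) ∈ U :=
    hVW ⟨hx, hεW hy⟩
  have hx₀ : x₀ ∈ V := mem_of_mem_nhds hV
  have hy₀ : y₀ ∈ Icc (y₀ - ε) (y₀ + ε) := ⟨by linarith, by linarith⟩
  have hbot : y₀ - ε ∈ Icc (y₀ - ε) (y₀ + ε) := left_mem_Icc.2 (by linarith)
  have htop : y₀ + ε ∈ Icc (y₀ - ε) (y₀ + ε) := right_mem_Icc.2 (by linarith)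
  have hcont {y : ℝ} (hy : y ∈ Icc (y₀ - ε) (y₀ + ε)) :
      ContinuousAt (fun w : X × ℝ => f (w.1, y)) (x₀, f (x₀, y₀)) :=
    ContinuousAt.comp' (f := fun w : X × ℝ => (w.1, y))
      (hf.continuousAt (hU.mem_nhds (hmem hx₀ hy))) (by fun_prop)
  filter_upwards [continuousAt_fst.preimage_mem_nhds hV,
    (hcont hbot).eventually_lt continuousAt_snd
      (hmono x₀ (hmem hx₀ hbot) (hmem hx₀ hy₀) (by linarith)),
    continuousAt_snd.eventually_lt (hcont htop)
      (hmono x₀ (hmem hx₀ hy₀) (hmem hx₀ htop) (by linarith))] with w hwV hlower hupper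
  obtain ⟨y, hy, hyw⟩ := intermediate_value_Icc (by linarith)
    (hf.comp (t := U) (by fun_prop) fun y hy => hmem hwV hy) ⟨hlower.le, hupper.le⟩
  exact ⟨(w.1, y), hmem hwV hy, Prod.ext rfl hyw⟩

lemma exists_openPartialHomeomorph_eq_fst_prodMk [Nonempty X] (hU : IsOpen U)
    (hf : ContinuousOn f U) (hmono : ∀ x, StrictMonoOn (fun y => f (x, y)) (Prod.mk x ⁻¹' U)) :
    ∃ e : OpenPartialHomeomorph (X × ℝ) (X × ℝ), e.source = U ∧ ∀ z, e z = (z.1, f z) := by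
  have hinj : InjOn (fun z : X × ℝ => (z.1, f z)) U := by
    rintro ⟨x, y⟩ hz ⟨x', y'⟩ hz' heq
    obtain ⟨rfl, hy⟩ := Prod.mk.inj heq
    rw [(hmono x).injOn hz hz' hy]
  refine ⟨OpenPartialHomeomorph.ofContinuousOpenRestrict (hinj.toPartialEquiv _ U)
    (continuousOn_fst.prodMk hf) ?_ hU, rfl, fun _ => rfl⟩
  intro O hO
  obtain ⟨O', hO', rfl⟩ := isOpen_induced_iff.1 hO
  have himage := isOpen_image_fst_prodMk_of_strictMonoOn (hU.inter hO')
    (hf.mono inter_subset_left) fun x => (hmono x).mono (preimage_mono inter_subset_left)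
  convert himage using 1
  ext w
  simp [and_assoc, and_left_comm]

lemma exists_openPartialHomeomorph_eq_prodMk_snd {V : Set (ℝ × ℝ)} {s : ℝ × ℝ → ℝ} (hV : IsOpen V)
    (hs : ContinuousOn s V) (hmono : ∀ y, StrictMonoOn (fun x => s (x, y)) {x | (x, y) ∈ V}) :
    ∃ e : OpenPartialHomeomorph (ℝ × ℝ) (ℝ × ℝ), e.source = V ∧ ∀ z, e z = (s z, z.2) := by
  obtain ⟨e, hsource, he⟩ := exists_openPartialHomeomorph_eq_fst_prodMk
    (hV.preimage continuous_swap) (hs.comp continuous_swap.continuousOn (mapsTo_preimage _ _)) hmono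
  let swap := Homeomorph.prodComm ℝ ℝ
  refine ⟨(swap.transOpenPartialHomeomorph e).transHomeomorph swap, ?_, fun z => ?_⟩
  · ext z
    simp [swap, hsource]
  · simp [swap, he]

end Shear

section Reparametrization

lemma exists_time_of_continuousOn_pos {I : Set ℝ} {f : ℝ → ℝ} (hIo : IsOpen I)
    (hI : I.OrdConnected) (hf : ContinuousOn f I) (hpos : ∀ x ∈ I, 0 < f x) :
    ∃ T g : ℝ → ℝ, ContinuousOn T I ∧ StrictMonoOn T I ∧
      ∀ x ∈ I, g (T x) = x ∧ HasDerivAt g (f x) (T x) := by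
  rcases I.eq_empty_or_nonempty with rfl | ⟨x₀, hx₀⟩
  · exact ⟨id, id, by simp [StrictMonoOn]⟩
  let T : ℝ → ℝ := fun x => ∫ s in x₀..x, (f s)⁻¹
  have hinv : ContinuousOn (fun x => (f x)⁻¹) I := hf.inv₀ fun x hx => (hpos x hx).ne'
  have hT (x : ℝ) (hx : x ∈ I) : HasStrictDerivAt T (f x)⁻¹ x :=
    intervalIntegral.integral_hasStrictDerivAt_right
      (hinv.mono (hI.uIcc_subset hx₀ hx)).intervalIntegrable
      (hinv.stronglyMeasurableAtFilter hIo x hx) (hinv.continuousAt (hIo.mem_nhds hx))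
  have hcont : ContinuousOn T I := fun x hx =>
    (hT x hx).hasDerivAt.continuousAt.continuousWithinAt
  have hmono : StrictMonoOn T I := by
    refine strictMonoOn_of_hasDerivWithinAt_pos hI.convex hcont
      (fun x hx => (hT x (interior_subset hx)).hasDerivAt.hasDerivWithinAt) fun x hx => ?_
    exact inv_pos.2 (hpos x (interior_subset hx))
  have hleft := hmono.injOn.leftInvOn_invFunOn
  refine ⟨T, Function.invFunOn T I, hcont, hmono, fun x hx => ⟨hleft hx, ?_⟩⟩
  simpa using ((hT x hx).to_local_left_inverse (inv_ne_zero (hpos x hx).ne')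
    (eventually_of_mem (hIo.mem_nhds hx) hleft)).hasDerivAt

/-- The curve `γ`, restricted to `J`, is a phase curve of `X` in `V` up to a continuous strictly
increasing change of parameter. -/
def IsReparamPhaseCurve (X : ℝ × ℝ → ℝ × ℝ) (V : Set (ℝ × ℝ)) (J : Set ℝ) (γ : ℝ → ℝ × ℝ) : Prop :=
  ∃ (J' : Set ℝ) (d : ℝ → ℝ × ℝ) (τ : ℝ → ℝ), IsPhaseCurve X V J' d ∧
    ContinuousOn τ J ∧ StrictMonoOn τ J ∧ τ '' J = J' ∧ ∀ t ∈ J, γ t = d (τ t)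

variable {X : ℝ × ℝ → ℝ × ℝ} {V W : Set (ℝ × ℝ)} {J : Set ℝ} {c γ : ℝ → ℝ × ℝ} {t : ℝ}

lemma IsPhaseCurve.ordConnected (hc : IsPhaseCurve X V J c) : J.OrdConnected := hc.1

lemma IsPhaseCurve.nontrivial (hc : IsPhaseCurve X V J c) : J.Nontrivial := hc.2.1

lemma IsPhaseCurve.mapsTo (hc : IsPhaseCurve X V J c) : MapsTo c J V := hc.2.2.1

lemma IsPhaseCurve.hasDerivWithinAt (hc : IsPhaseCurve X V J c) (ht : t ∈ J) :
    HasDerivWithinAt c (X (c t)) J t :=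
  hc.2.2.2 t ht

lemma IsPhaseCurve.of_mapsTo (hc : IsPhaseCurve X V J c) (hW : MapsTo c J W) :
    IsPhaseCurve X W J c :=
  ⟨hc.1, hc.2.1, hW, hc.2.2.2⟩

lemma IsReparamPhaseCurve.of_mapsTo (hγ : IsReparamPhaseCurve X V J γ) (hW : MapsTo γ J W) :
    IsReparamPhaseCurve X W J γ := by
  obtain ⟨_, d, τ, hd, hτ, hτmono, rfl, hγd⟩ := hγ
  refine ⟨_, d, τ, hd.of_mapsTo ?_, hτ, hτmono, rfl, hγd⟩
  rintro _ ⟨t, ht, rfl⟩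
  exact hγd t ht ▸ hW ht

lemma IsPhaseCurve.continuousOn (hc : IsPhaseCurve X V J c) : ContinuousOn c J :=
  fun _ ht => (hc.hasDerivWithinAt ht).continuousWithinAt

lemma IsPhaseCurve.hasDerivWithinAt_fst (hc : IsPhaseCurve X V J c) (ht : t ∈ J) :
    HasDerivWithinAt (fun t => (c t).1) (X (c t)).1 J t :=
  (ContinuousLinearMap.fst ℝ ℝ ℝ).hasFDerivAt.comp_hasDerivWithinAt t (hc.hasDerivWithinAt ht)

lemma IsPhaseCurve.hasDerivWithinAt_snd (hc : IsPhaseCurve X V J c) (ht : t ∈ J) :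
    HasDerivWithinAt (fun t => (c t).2) (X (c t)).2 J t :=
  (ContinuousLinearMap.snd ℝ ℝ ℝ).hasFDerivAt.comp_hasDerivWithinAt t (hc.hasDerivWithinAt ht)

lemma isReparamPhaseCurve_of_smul_deriv {I : Set ℝ} {α v : ℝ → ℝ × ℝ} {f σ : ℝ → ℝ}
    (hIo : IsOpen I) (hI : I.OrdConnected) (hf : ContinuousOn f I) (hpos : ∀ s ∈ I, 0 < f s)
    (hγ : ∀ s ∈ I, HasDerivAt γ (v s) s) (hX : ∀ s ∈ I, X (γ s) = f s • v s)
    (hJ : J.OrdConnected) (hJ' : J.Nontrivial) (hσ : ContinuousOn σ J) (hσmono : StrictMonoOn σ J)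
    (hσI : MapsTo σ J I) (hα : ∀ t ∈ J, γ (σ t) = α t) (hV : MapsTo α J V) :
    IsReparamPhaseCurve X V J α := by
  obtain ⟨T, g, hT, hTmono, hg⟩ := exists_time_of_continuousOn_pos hIo hI hf hpos
  have hτ : ContinuousOn (T ∘ σ) J := hT.comp hσ hσI
  have hτmono : StrictMonoOn (T ∘ σ) J := hTmono.comp hσmono hσI
  have hgτ (t : ℝ) (ht : t ∈ J) : g (T (σ t)) = σ t := (hg _ (hσI ht)).1
  refine ⟨T ∘ σ '' J, γ ∘ g, T ∘ σ, ⟨(hJ.isPreconnected.image _ hτ).ordConnected,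
    hJ'.image_of_injOn hτmono.injOn, ?_, ?_⟩, hτ, hτmono, rfl,
    fun t ht => by simp [hgτ t ht, hα t ht]⟩
  · rintro _ ⟨t, ht, rfl⟩
    simpa [hgτ t ht, hα t ht] using hV ht
  · rintro _ ⟨t, ht, rfl⟩
    have hderiv : HasDerivAt γ (v (σ t)) (g (T (σ t))) := by
      simpa only [hgτ t ht] using hγ _ (hσI ht)
    simpa [hgτ t ht, hX _ (hσI ht)] using
      (hderiv.scomp (T (σ t)) (hg _ (hσI ht)).2).hasDerivWithinAt

end Reparametrization

section Rectification

/-- A curve `a : J → A` on a nondegenerate interval that runs along a horizontal line in the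
direction of the sign of `p`, with no regularity beyond continuity: up to reparametrization, these
are the phase curves in `A` of the constant field `(p, 0)`. -/
structure IsHorizontalArc (p : ℝ) (A : Set (ℝ × ℝ)) (J : Set ℝ) (a : ℝ → ℝ × ℝ) : Prop where
  ordConnected : J.OrdConnected
  nontrivial : J.Nontrivial
  mapsTo : MapsTo a J A
  continuousOn : ContinuousOn a J
  snd_eq : ∀ s ∈ J, ∀ t ∈ J, (a s).2 = (a t).2
  strictMonoOn : StrictMonoOn (fun t => (a t).1 / p) J

/-- The chart `e` straightens the phase curves of `X` in `e.target`: up to reparametrization they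
are the images of the horizontal arcs in `e.source` directed by the sign of `p`. -/
structure IsRectifiedBy (X : ℝ × ℝ → ℝ × ℝ) (p : ℝ) (e : OpenPartialHomeomorph (ℝ × ℝ) (ℝ × ℝ)) :
    Prop where
  isHorizontalArc : ∀ {J c}, IsPhaseCurve X e.target J c →
    IsHorizontalArc p e.source J (e.symm ∘ c)
  isReparamPhaseCurve : ∀ {J a}, IsHorizontalArc p e.source J a →
    IsReparamPhaseCurve X e.target J (e ∘ a)

variable {X Y : ℝ × ℝ → ℝ × ℝ} {p : ℝ} {e e₁ e₂ : OpenPartialHomeomorph (ℝ × ℝ) (ℝ × ℝ)}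
  {δ γ : ℝ × ℝ → ℝ} {J : Set ℝ}

lemma IsRectifiedBy.isReparamPhaseCurve_diff (h₁ : IsRectifiedBy X p e₁)
    (h₂ : IsRectifiedBy Y p e₂) (hsource : e₁.source = e₂.source)
    (hδ : ∀ z ∈ e₁.source, γ (e₂ z) = 0 → δ (e₁ z) = 0) {c : ℝ → ℝ × ℝ}
    (hc : IsPhaseCurve X (e₁.target \ {z | δ z = 0}) J c) :
    IsReparamPhaseCurve Y (e₂.target \ {z | γ z = 0}) J (e₂ ∘ e₁.symm ∘ c) := by
  have harc := h₁.isHorizontalArc (hc.of_mapsTo fun t ht => (hc.mapsTo ht).1)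
  refine (h₂.isReparamPhaseCurve (hsource ▸ harc)).of_mapsTo fun t ht =>
    ⟨e₂.map_source (hsource ▸ harc.mapsTo ht), fun hγ => (hc.mapsTo ht).2 ?_⟩
  simpa [e₁.right_inv (hc.mapsTo ht).1] using hδ _ (harc.mapsTo ht) hγ

lemma OrbitallyEquivAt.of_isRectifiedBy {z₀ p₁ p₂ : ℝ × ℝ} (h₁ : IsRectifiedBy X p e₁)
    (h₂ : IsRectifiedBy Y p e₂) (hsource : e₁.source = e₂.source)
    (hδ : ∀ z ∈ e₁.source, δ (e₁ z) = 0 ↔ γ (e₂ z) = 0) (hz₀ : z₀ ∈ e₁.source)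
    (hp₁ : e₁ z₀ = p₁) (hp₂ : e₂ z₀ = p₂) : OrbitallyEquivAt X δ p₁ Y γ p₂ := by
  have hmaps₁ : MapsTo e₁.symm e₁.target e₂.source := hsource ▸ e₁.mapsTo_symm
  have hmaps₂ : MapsTo e₂.symm e₂.target e₁.source := hsource ▸ e₂.mapsTo_symm
  refine ⟨e₁.target, e₂.target, e₂ ∘ e₁.symm, e₁ ∘ e₂.symm, e₁.open_target, e₂.open_target,
    hp₁ ▸ e₁.map_source hz₀, hp₂ ▸ e₂.map_source (hsource ▸ hz₀),
    e₂.continuousOn.comp e₁.continuousOn_symm hmaps₁,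
    e₁.continuousOn.comp e₂.continuousOn_symm hmaps₂,
    e₂.mapsTo.comp hmaps₁, e₁.mapsTo.comp hmaps₂,
    fun z hz => by simp [e₂.left_inv (hmaps₁ hz), hz],
    fun z hz => by simp [e₁.left_inv (hmaps₂ hz), hz],
    by simp [← hp₁, e₁.left_inv hz₀, hp₂], ?_,
    fun J c hc => h₁.isReparamPhaseCurve_diff h₂ hsource (fun z hz => (hδ z hz).2) hc,
    fun J d hd => h₂.isReparamPhaseCurve_diff h₁ hsource.symm
      (fun z hz => (hδ z (hsource ▸ hz)).1) hd⟩
  ext w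
  constructor
  · rintro ⟨z, ⟨hz, hzV⟩, rfl⟩
    exact ⟨(hδ _ (e₁.map_target hzV)).1 (by simpa [hzV] using hz), e₂.map_source (hmaps₁ hzV)⟩
  · rintro ⟨hw, hwV⟩
    exact ⟨e₁ (e₂.symm w), ⟨(hδ _ (hmaps₂ hwV)).2 (by simpa [hwV] using hw),
      e₁.map_source (hmaps₂ hwV)⟩, by simp [e₁.left_inv (hmaps₂ hwV), hwV]⟩

lemma div_lt_div_iff_of_strictMonoOn {s : ℝ → ℝ} {D : Set ℝ} (hs : StrictMonoOn s D) {x y : ℝ}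
    (hx : x ∈ D) (hy : y ∈ D) : s x / p < s y / p ↔ x / p < y / p := by
  rcases lt_trichotomy p 0 with hp | rfl | hp
  · simp only [div_lt_div_right_of_neg hp, hs.lt_iff_lt hy hx]
  · simp
  · simp only [div_lt_div_iff_of_pos_right hp, hs.lt_iff_lt hx hy]

lemma IsHorizontalArc.map {A B : Set (ℝ × ℝ)} {a : ℝ → ℝ × ℝ} {g : ℝ × ℝ → ℝ × ℝ}
    (ha : IsHorizontalArc p A J a) (hg : ContinuousOn g A) (hAB : MapsTo g A B)
    (hsnd : ∀ z ∈ A, (g z).2 = z.2)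
    (hlt : ∀ z ∈ A, ∀ w ∈ A, z.2 = w.2 → z.1 / p < w.1 / p → (g z).1 / p < (g w).1 / p) :
    IsHorizontalArc p B J (g ∘ a) where
  ordConnected := ha.ordConnected
  nontrivial := ha.nontrivial
  mapsTo := hAB.comp ha.mapsTo
  continuousOn := hg.comp ha.continuousOn ha.mapsTo
  snd_eq s hs t ht := by simp [hsnd _ (ha.mapsTo hs), hsnd _ (ha.mapsTo ht), ha.snd_eq s hs t ht]
  strictMonoOn s hs t ht hst :=
    hlt _ (ha.mapsTo hs) _ (ha.mapsTo ht) (ha.snd_eq s hs t ht) (ha.strictMonoOn hs ht hst)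

lemma IsRectifiedBy.of_shear (hX : IsRectifiedBy X p (.refl (ℝ × ℝ))) {s : ℝ × ℝ → ℝ}
    (he : ∀ z, e z = (s z, z.2))
    (hmono : ∀ y, StrictMonoOn (fun x => s (x, y)) {x | (x, y) ∈ e.source}) :
    IsRectifiedBy X p e := by
  have hlt_iff : ∀ z ∈ e.source, ∀ w ∈ e.source, z.2 = w.2 →
      ((e z).1 / p < (e w).1 / p ↔ z.1 / p < w.1 / p) := by
    rintro ⟨x, y⟩ hz ⟨x', _⟩ hw rfl
    simpa only [he] using div_lt_div_iff_of_strictMonoOn (hmono y) hz hw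
  have hsnd (w : ℝ × ℝ) (hw : w ∈ e.target) : (e.symm w).2 = w.2 := by
    simpa only [he] using congrArg Prod.snd (e.right_inv hw)
  constructor
  · intro J c hc
    have harc := hX.isHorizontalArc (hc.of_mapsTo (mapsTo_univ c J))
    refine IsHorizontalArc.map (A := e.target) { harc with mapsTo := hc.mapsTo } e.continuousOn_symm
      e.mapsTo_symm hsnd fun z hz w hw hzw hlt => ?_
    rw [← hlt_iff _ (e.map_target hz) _ (e.map_target hw) (by rw [hsnd z hz, hsnd w hw, hzw])]
    rwa [e.right_inv hz, e.right_inv hw]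
  · intro J a ha
    have harc := ha.map e.continuousOn e.mapsTo (fun z _ => by rw [he])
      fun z hz w hw hzw => (hlt_iff z hz w hw hzw).2
    exact (hX.isReparamPhaseCurve { harc with mapsTo := mapsTo_univ _ _ }).of_mapsTo harc.mapsTo

end Rectification

section Leaves

/-- The leaves of the scalar equation `y' = F (x, y)` over the interval `I` as a family `φ`:
`φ (x, h)` is the height above `x` of the leaf that crosses the axis `x = 0` at height `h ∈ H`. -/
structure IsLeafFamily (F φ : ℝ × ℝ → ℝ) (I H : Set ℝ) : Prop where
  isOpen_left : IsOpen I
  isOpen_right : IsOpen H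
  ordConnected : I.OrdConnected
  zero_mem : 0 ∈ I
  continuousOn : ContinuousOn φ (I ×ˢ H)
  apply_zero : ∀ h ∈ H, φ (0, h) = h
  hasDerivAt : ∀ x ∈ I, ∀ h ∈ H, HasDerivAt (fun x => φ (x, h)) (F (x, φ (x, h))) x

lemma isLeafFamily_zero : IsLeafFamily 0 Prod.snd univ univ where
  isOpen_left := isOpen_univ
  isOpen_right := isOpen_univ
  ordConnected := ordConnected_univ
  zero_mem := mem_univ 0
  continuousOn := continuousOn_snd
  apply_zero _ _ := rfl
  hasDerivAt x _ h _ := hasDerivAt_const x h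

variable {F φ P Q : ℝ × ℝ → ℝ} {I H : Set ℝ} {L : NNReal} {p : ℝ}
  {e : OpenPartialHomeomorph (ℝ × ℝ) (ℝ × ℝ)}

lemma IsLeafFamily.strictMonoOn (hφ : IsLeafFamily F φ I H) (hF : LipschitzWith L F) {x : ℝ}
    (hx : x ∈ I) : StrictMonoOn (fun h => φ (x, h)) H := fun h hh h' hh' hlt =>
  lt_of_lt_of_hasDerivWithinAt_lipschitz hF hφ.ordConnected
    (fun x hx => (hφ.hasDerivAt x hx h hh).hasDerivWithinAt)
    (fun x hx => (hφ.hasDerivAt x hx h' hh').hasDerivWithinAt) hφ.zero_mem hx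
    (by rwa [hφ.apply_zero h hh, hφ.apply_zero h' hh'])

lemma IsLeafFamily.exists_openPartialHomeomorph (hφ : IsLeafFamily F φ I H)
    (hF : LipschitzWith L F) : ∃ e : OpenPartialHomeomorph (ℝ × ℝ) (ℝ × ℝ),
      e.source = I ×ˢ H ∧ ∀ z, e z = (z.1, φ z) :=
  exists_openPartialHomeomorph_eq_fst_prodMk (hφ.isOpen_left.prod hφ.isOpen_right) hφ.continuousOn
    fun _ _ hh _ hh' => hφ.strictMonoOn hF hh.1 hh.2 hh'.2

lemma strictMonoOn_fst_div_of_isPhaseCurve {V : Set (ℝ × ℝ)} {J : Set ℝ} {c : ℝ → ℝ × ℝ}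
    (hpos : ∀ z ∈ V, 0 < P z / p) (hc : IsPhaseCurve (fun z => (P z, Q z)) V J c) :
    StrictMonoOn (fun t => (c t).1 / p) J := by
  have hderiv (t : ℝ) (ht : t ∈ J) :
      HasDerivWithinAt (fun t => (c t).1 / p) (P (c t) / p) J t :=
    (hc.hasDerivWithinAt_fst ht).div_const p
  exact strictMonoOn_of_hasDerivWithinAt_pos hc.ordConnected.convex
    (fun t ht => (hderiv t ht).continuousWithinAt)
    (fun t ht => (hderiv t (interior_subset ht)).mono interior_subset)
    fun t ht => hpos _ (hc.mapsTo (interior_subset ht))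

lemma IsLeafFamily.snd_eq_of_isPhaseCurve (hφ : IsLeafFamily F φ I H) (hF : LipschitzWith L F)
    {V : Set (ℝ × ℝ)} {J : Set ℝ} {c : ℝ → ℝ × ℝ} (hVI : MapsTo Prod.fst V I)
    (hP : ContinuousOn P V) (hQ : ∀ z ∈ V, Q z = P z * F z)
    (hc : IsPhaseCurve (fun z => (P z, Q z)) V J c) {h s t : ℝ} (hh : h ∈ H) (hs : s ∈ J)
    (ht : t ∈ J) (hcs : (c s).2 = φ ((c s).1, h)) : (c t).2 = φ ((c t).1, h) := by
  have hderiv (t : ℝ) (ht : t ∈ J) : HasDerivWithinAt (fun t => (c t).2 - φ ((c t).1, h))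
      (P (c t) * (F (c t) - F ((c t).1, φ ((c t).1, h)))) J t := by
    have hcV := hc.mapsTo ht
    have hleaf := (hφ.hasDerivAt _ (hVI hcV) h hh).comp_hasDerivWithinAt t
      (hc.hasDerivWithinAt_fst ht)
    refine ((hc.hasDerivWithinAt_snd ht).sub hleaf).congr_deriv ?_
    simp only [hQ _ hcV]
    ring
  have hbound (t : ℝ) : ‖P (c t) * (F (c t) - F ((c t).1, φ ((c t).1, h)))‖ ≤
      |P (c t)| * L * ‖(c t).2 - φ ((c t).1, h)‖ := by
    rw [norm_mul, mul_assoc]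
    refine mul_le_mul_of_nonneg_left ?_ (abs_nonneg _)
    simpa [Prod.dist_eq, ← Real.dist_eq] using hF.dist_le_mul (c t) ((c t).1, φ ((c t).1, h))
  have hPc : ContinuousOn (fun t => P (c t)) J := hP.comp hc.continuousOn hc.mapsTo
  exact sub_eq_zero.1 <| eq_zero_of_norm_deriv_le_continuousOn_mul hc.ordConnected
    (hPc.abs.mul continuousOn_const) hderiv (fun t _ => hbound t) hs ht (sub_eq_zero.2 hcs)

lemma IsLeafFamily.isHorizontalArc_symm_comp (hφ : IsLeafFamily F φ I H) (hF : LipschitzWith L F)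
    (hsource : e.source = I ×ˢ H) (he : ∀ z, e z = (z.1, φ z)) (hP : ContinuousOn P e.target)
    (hpos : ∀ z ∈ e.target, 0 < P z / p) (hQ : ∀ z ∈ e.target, Q z = P z * F z) {J : Set ℝ}
    {c : ℝ → ℝ × ℝ} (hc : IsPhaseCurve (fun z => (P z, Q z)) e.target J c) :
    IsHorizontalArc p e.source J (e.symm ∘ c) := by
  have hfst (w : ℝ × ℝ) (hw : w ∈ e.target) : (e.symm w).1 = w.1 := by
    simpa only [he] using congrArg Prod.fst (e.right_inv hw)
  have hsnd (w : ℝ × ℝ) (hw : w ∈ e.target) : φ (w.1, (e.symm w).2) = w.2 := by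
    simpa only [he, ← hfst w hw] using congrArg Prod.snd (e.right_inv hw)
  have hbox (w : ℝ × ℝ) (hw : w ∈ e.target) : w.1 ∈ I ∧ (e.symm w).2 ∈ H := by
    simpa only [hsource, mem_prod, hfst w hw] using e.map_target hw
  refine ⟨hc.ordConnected, hc.nontrivial, e.mapsTo_symm.comp hc.mapsTo,
    e.continuousOn_symm.comp hc.continuousOn hc.mapsTo, fun s hs t ht => ?_, ?_⟩
  · have hcs := hc.mapsTo hs
    have hct := hc.mapsTo ht
    refine (hφ.strictMonoOn hF (hbox _ hct).1).injOn (hbox _ hcs).2 (hbox _ hct).2 ?_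
    refine Eq.trans ?_ (hsnd _ hct).symm
    exact (hφ.snd_eq_of_isPhaseCurve hF (fun w hw => (hbox w hw).1) hP hQ hc (hbox _ hcs).2 hs ht
      (hsnd _ hcs).symm).symm
  · exact (strictMonoOn_fst_div_of_isPhaseCurve hpos hc).congr fun t ht => by
      simp only [Function.comp_apply, hfst _ (hc.mapsTo ht)]

lemma IsLeafFamily.isReparamPhaseCurve_comp (hφ : IsLeafFamily F φ I H)
    (hsource : e.source = I ×ˢ H) (he : ∀ z, e z = (z.1, φ z)) (hP : ContinuousOn P e.target)
    (hpos : ∀ z ∈ e.target, 0 < P z / p) (hQ : ∀ z ∈ e.target, Q z = P z * F z) {J : Set ℝ}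
    {a : ℝ → ℝ × ℝ} (ha : IsHorizontalArc p e.source J a) :
    IsReparamPhaseCurve (fun z => (P z, Q z)) e.target J (e ∘ a) := by
  obtain ⟨t₀, ht₀⟩ := ha.nontrivial.nonempty
  have hbox (t : ℝ) (ht : t ∈ J) : (a t).1 ∈ I ∧ (a t).2 ∈ H := by
    simpa only [hsource, mem_prod] using ha.mapsTo ht
  have hp : p ≠ 0 := by
    rintro rfl
    simpa using hpos _ (e.map_source (ha.mapsTo ht₀))
  set h := (a t₀).2 with h_def
  have hh : h ∈ H := (hbox t₀ ht₀).2
  let leaf : ℝ → ℝ × ℝ := fun s => e (p * s, h)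
  have hleaf (s : ℝ) : leaf s = (p * s, φ (p * s, h)) := he _
  have hmem (s : ℝ) (hs : p * s ∈ I) : leaf s ∈ e.target := e.map_source (hsource ▸ ⟨hs, hh⟩)
  have hderiv (s : ℝ) (hs : p * s ∈ I) : HasDerivAt leaf (p, p * F (leaf s)) s := by
    have hlin : HasDerivAt (fun s => p * s) p s := by simpa using (hasDerivAt_id s).const_mul p
    rw [funext hleaf, mul_comm p (F _)]
    exact hlin.prodMk ((hφ.hasDerivAt _ hs h hh).comp s hlin)
  have haleaf (t : ℝ) (ht : t ∈ J) : leaf ((a t).1 / p) = e (a t) := by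
    simp only [leaf, mul_div_cancel₀ _ hp, h_def, ha.snd_eq t₀ ht₀ t ht]
  exact isReparamPhaseCurve_of_smul_deriv (f := fun s => P (leaf s) / p)
    (hφ.isOpen_left.preimage (continuous_const_mul p))
    (hφ.ordConnected.convex.smul_preimage p).ordConnected
    ((hP.comp (fun s hs => (hderiv s hs).continuousAt.continuousWithinAt) hmem).div_const p)
    (fun s hs => hpos _ (hmem s hs)) hderiv
    (fun s hs => by
      ext <;> simp only [hQ _ (hmem s hs), Prod.smul_mk, smul_eq_mul] <;> field_simp)
    ha.ordConnected ha.nontrivial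
    (ha.continuousOn.fst.div_const p) ha.strictMonoOn
    (fun t ht => by simpa [mul_div_cancel₀ _ hp] using (hbox t ht).1) haleaf
    (e.mapsTo.comp ha.mapsTo)

lemma IsLeafFamily.isRectifiedBy (hφ : IsLeafFamily F φ I H) (hF : LipschitzWith L F)
    (hsource : e.source = I ×ˢ H) (he : ∀ z, e z = (z.1, φ z)) (hP : ContinuousOn P e.target)
    (hpos : ∀ z ∈ e.target, 0 < P z / p) (hQ : ∀ z ∈ e.target, Q z = P z * F z) :
    IsRectifiedBy (fun z => (P z, Q z)) p e where
  isHorizontalArc := hφ.isHorizontalArc_symm_comp hF hsource he hP hpos hQ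
  isReparamPhaseCurve := hφ.isReparamPhaseCurve_comp hsource he hP hpos hQ

lemma isRectifiedBy_refl_const (hp : p ≠ 0) :
    IsRectifiedBy (fun _ => (p, 0)) p (.refl (ℝ × ℝ)) :=
  isLeafFamily_zero.isRectifiedBy (LipschitzWith.const 0) univ_prod_univ.symm (fun _ => rfl)
    continuousOn_const (fun _ _ => by simp [hp]) (fun _ _ => by simp)

lemma norm_le_mul_norm_of_lipschitzWith (hF : LipschitzWith L F) {x : ℝ} (hx : F (x, 0) = 0)
    (y : ℝ) : ‖F (x, y)‖ ≤ L * ‖y‖ := by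
  simpa [hx, Prod.dist_eq] using hF.dist_le_mul (x, y) (x, 0)

lemma exists_isLeafFamily_Ioo {r : ℝ} (hr : 0 < r) (hF : LipschitzWith L F)
    (hF0 : ∀ x ∈ Icc (-r) r, F (x, 0) = 0) (hLr : 2 * L * r ≤ 1) :
    ∃ φ, IsLeafFamily F φ (Ioo (-r) r) (Ioo (-(r / 2)) (r / 2)) := by
  have hzero : (0 : ℝ) ∈ Icc (-r) r := ⟨by linarith, hr.le⟩
  lift r to NNReal using hr.le
  have hPL : IsPicardLindelof (fun x y => F (x, y)) (⟨0, hzero⟩ : Icc (-(r : ℝ)) r) (0 : ℝ)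
      r (r / 2) (L * r) L := by
    refine ⟨fun x _ => ?_, fun y _ => ?_, fun x hx y hy => ?_, ?_⟩
    · simpa [Function.comp_def] using (hF.comp (LipschitzWith.prodMk_left x)).lipschitzOnWith
    · exact (hF.continuous.comp (by fun_prop)).continuousOn
    · refine (norm_le_mul_norm_of_lipschitzWith hF (hF0 x hx) y).trans ?_
      simpa using mul_le_mul_of_nonneg_left (mem_closedBall_zero_iff.1 hy) L.coe_nonneg
    · simp only [NNReal.coe_mul, sub_zero, sub_neg_eq_add, zero_add, max_self, NNReal.coe_div,
        NNReal.coe_ofNat]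
      linarith [mul_le_mul_of_nonneg_right hLr r.coe_nonneg]
  obtain ⟨α, hα, hαcont⟩ := hPL.exists_forall_mem_closedBall_eq_hasDerivWithinAt_continuousOn
  have hball {h : ℝ} (hh : h ∈ Ioo (-((r : ℝ) / 2)) (r / 2)) :
      h ∈ Metric.closedBall (0 : ℝ) (r / 2 : NNReal) := by
    simpa [abs_le] using Ioo_subset_Icc_self hh
  refine ⟨fun z => α z.swap, isOpen_Ioo, isOpen_Ioo, ordConnected_Ioo, ⟨by linarith, hr⟩,
    hαcont.comp continuous_swap.continuousOn fun z hz => ⟨hball hz.2, Ioo_subset_Icc_self hz.1⟩,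
    fun h hh => (hα h (hball hh)).1, fun x hx h hh => ?_⟩
  exact ((hα h (hball hh)).2 x (Ioo_subset_Icc_self hx)).hasDerivAt (Icc_mem_nhds hx.1 hx.2)

lemma IsLeafFamily.abs_le_abs_mul_exp (hφ : IsLeafFamily F φ I H) (hF : LipschitzWith L F)
    (hF0 : ∀ x ∈ I, F (x, 0) = 0) {x x' h : ℝ} (hx : x ∈ I) (hx' : x' ∈ I) (hh : h ∈ H) :
    |φ (x', h)| ≤ |φ (x, h)| * Real.exp (L * |x' - x|) :=
  norm_le_norm_mul_exp_of_norm_deriv_le hφ.ordConnected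
    (fun t ht => (hφ.hasDerivAt t ht h hh).hasDerivWithinAt)
    (fun t ht => norm_le_mul_norm_of_lipschitzWith hF (hF0 t ht) _) hx hx'

lemma IsLeafFamily.eq_zero_iff (hφ : IsLeafFamily F φ I H) (hF : LipschitzWith L F)
    (hF0 : ∀ x ∈ I, F (x, 0) = 0) {x h : ℝ} (hx : x ∈ I) (hh : h ∈ H) :
    φ (x, h) = 0 ↔ h = 0 := by
  have hleft := hφ.abs_le_abs_mul_exp hF hF0 hx hφ.zero_mem hh
  have hright := hφ.abs_le_abs_mul_exp hF hF0 hφ.zero_mem hx hh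
  rw [hφ.apply_zero h hh] at hleft hright
  exact ⟨fun h0 => by simpa [h0] using hleft, fun h0 => by simpa [h0] using hright⟩

end Leaves

section Impasse

lemma exp_le_one_add_two_mul {t : ℝ} (ht : 0 ≤ t) (ht' : t ≤ 1) : Real.exp t ≤ 1 + 2 * t := by
  have hsub := (le_abs_self _).trans (Real.abs_exp_sub_one_le ((abs_of_nonneg ht).trans_le ht'))
  rw [abs_of_nonneg ht] at hsub
  linarith

lemma rpow_abs_lt_rpow_abs_add {a k D y y' : ℝ} (ha : 0 < a) (hk : 0 ≤ k) (hD : 0 < D)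
    (haD : a * (k * D) ≤ 1) (hy : 2 * a * k * |y| ^ a < 1) (hy' : |y'| ≤ |y| * Real.exp (k * D)) :
    |y'| ^ a < |y| ^ a + D := by
  have hexp : Real.exp (a * (k * D)) ≤ 1 + 2 * (a * (k * D)) :=
    exp_le_one_add_two_mul (by positivity) haD
  calc |y'| ^ a ≤ (|y| * Real.exp (k * D)) ^ a := Real.rpow_le_rpow (abs_nonneg _) hy' ha.le
    _ = |y| ^ a * Real.exp (a * (k * D)) := by
      rw [Real.mul_rpow (abs_nonneg _) (Real.exp_nonneg _), ← Real.exp_mul, mul_comm a]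
    _ ≤ |y| ^ a * (1 + 2 * (a * (k * D))) := by gcongr
    _ = |y| ^ a + 2 * a * k * |y| ^ a * D := by ring
    _ < |y| ^ a + D := by simpa using mul_lt_mul_of_pos_right hy hD

variable {F φ P Q : ℝ × ℝ → ℝ} {I H : Set ℝ} {L : NNReal} {a p r : ℝ}

/-- Gaining `D` in `x` moves `|φ|` by a factor at most `exp (L * D)`, so near the axis `y = 0` the
term `|φ| ^ a` cannot outrun `x`. -/
lemma IsLeafFamily.strictMonoOn_sub_rpow_abs (hφ : IsLeafFamily F φ I H) (hF : LipschitzWith L F)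
    (hF0 : ∀ x ∈ I, F (x, 0) = 0) (hI : I ⊆ Ioo (-r) r) (ha : 0 < a) (har : 2 * a * L * r ≤ 1)
    (hra : 2 * a * L * r ^ a < 1) {h : ℝ} (hh : h ∈ H) (hφr : ∀ x ∈ I, |φ (x, h)| ≤ r) :
    StrictMonoOn (fun x => x - |φ (x, h)| ^ a) I := by
  intro x hx x' hx' hlt
  have hgrowth := hφ.abs_le_abs_mul_exp hF hF0 hx hx' hh
  rw [abs_of_pos (sub_pos.2 hlt)] at hgrowth
  have hdist : x' - x ≤ 2 * r := by linarith [(hI hx).1, (hI hx').2]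
  have hpow : 2 * a * L * |φ (x, h)| ^ a ≤ 2 * a * L * r ^ a := by
    gcongr
    exact hφr x hx
  have hbound := rpow_abs_lt_rpow_abs_add ha L.coe_nonneg (sub_pos.2 hlt)
    (calc a * (L * (x' - x)) ≤ a * (L * (2 * r)) := by gcongr
      _ = 2 * a * L * r := by ring
      _ ≤ 1 := har)
    (hpow.trans_lt hra) hgrowth
  change x - |φ (x, h)| ^ a < x' - |φ (x', h)| ^ a
  linarith

lemma IsLeafFamily.abs_le_radius (hr : 0 < r)
    (hφ : IsLeafFamily F φ (Ioo (-r) r) (Ioo (-(r / 2)) (r / 2))) (hF : LipschitzWith L F)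
    (hF0 : ∀ x ∈ Ioo (-r) r, F (x, 0) = 0) (hLr : 2 * L * r ≤ 1) {x h : ℝ} (hx : x ∈ Ioo (-r) r)
    (hh : h ∈ Ioo (-(r / 2)) (r / 2)) : |φ (x, h)| ≤ r := by
  have hgrowth := hφ.abs_le_abs_mul_exp hF hF0 hφ.zero_mem hx hh
  rw [hφ.apply_zero h hh, sub_zero] at hgrowth
  have hexponent : L * |x| ≤ 1 / 2 := by
    linarith [mul_le_mul_of_nonneg_left (abs_lt.2 hx).le L.coe_nonneg]
  have hexp : Real.exp (1 / 2) ≤ 2 := by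
    simpa [one_add_one_eq_two] using exp_le_one_add_two_mul (t := 1 / 2) (by norm_num) (by norm_num)
  calc |φ (x, h)| ≤ |h| * Real.exp (L * |x|) := hgrowth
    _ ≤ r / 2 * 2 := by
      gcongr
      · exact (abs_lt.2 hh).le
      · exact (Real.exp_le_exp.2 hexponent).trans hexp
    _ = r := by ring

lemma orbitallyEquivAt_const_of_closedBall {δ : ℝ × ℝ → ℝ} (ha : 0 < a)
    (hδ : ∀ z, δ z = 0 ↔ z.2 = 0 ∨ z.1 = |z.2| ^ a) (hr : 0 < r) (hLr : 2 * L * r ≤ 1)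
    (har : 2 * a * L * r ≤ 1) (hra : 2 * a * L * r ^ a < 1) (hF : LipschitzWith L F)
    (hF0 : ∀ x ∈ Icc (-r) r, F (x, 0) = 0)
    (hP : ContinuousOn P (Metric.closedBall 0 r)) (hpos : ∀ z ∈ Metric.closedBall 0 r, 0 < P z / p)
    (hQ : ∀ z ∈ Metric.closedBall 0 r, Q z = P z * F z) :
    OrbitallyEquivAt (fun z => (P z, Q z)) δ (0, 0) (fun _ => (p, 0)) δ (0, 0) := by
  have hp : p ≠ 0 := by
    rintro rfl
    simpa using hpos 0 (Metric.mem_closedBall_self hr.le)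
  obtain ⟨φ, hφ⟩ := exists_isLeafFamily_Ioo hr hF hF0 hLr
  have hF0' : ∀ x ∈ Ioo (-r) r, F (x, 0) = 0 := fun x hx => hF0 x (Ioo_subset_Icc_self hx)
  have hφr {x h : ℝ} := hφ.abs_le_radius (x := x) (h := h) hr hF hF0' hLr
  have hzero : (0 : ℝ) ∈ Ioo (-(r / 2)) (r / 2) := ⟨by linarith, by linarith⟩
  have hmono (h : ℝ) : StrictMonoOn (fun x => x - |φ (x, h)| ^ a + |h| ^ a)
      {x | (x, h) ∈ Ioo (-r) r ×ˢ Ioo (-(r / 2)) (r / 2)} := fun x hx x' hx' hlt => by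
    simpa using hφ.strictMonoOn_sub_rpow_abs hF hF0' Subset.rfl ha har hra hx.2
      (fun x hx' => hφr hx' hx.2) hx.1 hx'.1 hlt
  obtain ⟨e₁, hsource₁, he₁⟩ := hφ.exists_openPartialHomeomorph hF
  obtain ⟨e₂, hsource₂, he₂⟩ := exists_openPartialHomeomorph_eq_prodMk_snd
    (s := fun z => z.1 - |φ z| ^ a + |z.2| ^ a) (hφ.isOpen_left.prod hφ.isOpen_right)
    ((continuousOn_fst.sub (hφ.continuousOn.abs.rpow_const fun _ _ => .inr ha.le)).add
      (continuous_snd.abs.rpow_const fun _ => .inr ha.le).continuousOn) hmono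
  have htarget : e₁.target ⊆ Metric.closedBall 0 r := by
    rw [← e₁.image_source_eq_target, hsource₁]
    rintro _ ⟨z, hz, rfl⟩
    simpa [he₁, Prod.norm_def] using ⟨(abs_lt.2 hz.1).le, hφr hz.1 hz.2⟩
  refine .of_isRectifiedBy (hφ.isRectifiedBy hF hsource₁ he₁ (hP.mono htarget)
      (fun z hz => hpos z (htarget hz)) fun z hz => hQ z (htarget hz))
    ((isRectifiedBy_refl_const hp).of_shear he₂ (hsource₂ ▸ hmono))
    (hsource₁.trans hsource₂.symm) (fun z hz => ?_) (z₀ := (0, 0))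
    (hsource₁ ▸ ⟨hφ.zero_mem, hzero⟩) (by simp [he₁, hφ.apply_zero 0 hzero])
    (by simp [he₂, hφ.apply_zero 0 hzero])
  rw [hsource₁] at hz
  simp only [hδ, he₁, he₂, hφ.eq_zero_iff hF hF0' hz.1 hz.2, add_eq_right, sub_eq_zero]

lemma exists_closedBall_subset_mul_rpow_lt (L : NNReal) (ha : 0 < a) {N : Set (ℝ × ℝ)}
    (hN : N ∈ 𝓝 (0, 0)) : ∃ r > 0, Metric.closedBall 0 r ⊆ N ∧
      2 * L * r ≤ 1 ∧ 2 * a * L * r ≤ 1 ∧ 2 * a * L * r ^ a < 1 := by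
  have hlin (C : ℝ) : ∀ᶠ r in 𝓝 (0 : ℝ), C * r < 1 :=
    (continuous_const_mul C).tendsto' 0 0 (by simp) |>.eventually_lt_const one_pos
  have hpow : ∀ᶠ r in 𝓝 (0 : ℝ), 2 * a * L * r ^ a < 1 :=
    ((Real.continuous_rpow_const ha.le).const_mul _).tendsto' 0 0 (by simp [ha.ne'])
      |>.eventually_lt_const one_pos
  have hsmall := (eventually_closedBall_subset hN).and <|
    (hlin (2 * L)).and <| (hlin (2 * a * L)).and hpow
  obtain ⟨r, ⟨hball, hLr, har, hra⟩, hr⟩ :=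
    ((hsmall.filter_mono nhdsWithin_le_nhds).and (self_mem_nhdsWithin (s := Ioi 0))).exists
  exact ⟨r, hr, hball, hLr.le, har.le, hra⟩

end Impasse

theorem E7_case8_general {P Q δ : ℝ × ℝ → ℝ} {a : ℝ} (ha : 0 < a)
    (hδ : ∀ z, δ z = 0 ↔ z.2 = 0 ∨ z.1 = |z.2| ^ a)
    (hP : ∀ᶠ z in 𝓝 (0, 0), ContinuousAt P z) (hP0 : P (0, 0) ≠ 0)
    (hslope : ∃ L, ∃ s ∈ 𝓝 (0, 0), LipschitzOnWith L (Q / P) s)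
    (hQ0 : ∀ᶠ x in 𝓝 (0 : ℝ), Q (x, 0) = 0) :
    OrbitallyEquivAt (fun z => (P z, Q z)) δ (0, 0) (fun _ => (P (0, 0), 0)) δ (0, 0) := by
  obtain ⟨L, s, hs, hLip⟩ := hslope
  obtain ⟨F, hF, hFs⟩ := hLip.extend_real
  have hpos : ∀ᶠ z in 𝓝 (0, 0), 0 < P z / P (0, 0) :=
    (hP.self_of_nhds.div_const _).eventually_const_lt (by simp [hP0])
  have haxis : ∀ᶠ z in 𝓝 ((0 : ℝ), (0 : ℝ)), Q (z.1, 0) = 0 := hQ0.prod_inl_nhds 0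
  obtain ⟨r, hr, hball, hLr, har, hra⟩ := exists_closedBall_subset_mul_rpow_lt L ha
    (inter_mem hs (hP.and (hpos.and haxis)))
  refine orbitallyEquivAt_const_of_closedBall ha hδ hr hLr har hra hF (fun x hx => ?_)
    (fun z hz => (hball hz).2.1.continuousWithinAt) (fun z hz => (hball hz).2.2.1) fun z hz => ?_
  · have hxball : (x, (0 : ℝ)) ∈ Metric.closedBall 0 r := by
      simpa [Prod.norm_def, hr.le] using abs_le.2 hx
    have hQx : Q (x, 0) = 0 := (hball hxball).2.2.2
    simp [← hFs (hball hxball).1, hQx]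
  · have hPz : P z ≠ 0 := fun h => by simpa [h] using (hball hz).2.2.1
    rw [← hFs (hball hz).1, Pi.div_apply, mul_div_cancel₀ _ hPz]

lemma pow_three_sub_mul_pow_three_eq_zero_iff {x y : ℝ} :
    y ^ 3 - y * x ^ 3 = 0 ↔ y = 0 ∨ x = |y| ^ (2 / 3 : ℝ) := by
  have hcube : (|y| ^ (2 / 3 : ℝ)) ^ 3 = y ^ 2 := by
    rw [← Real.rpow_mul_natCast (abs_nonneg y)]
    norm_num
  rw [← (Odd.strictMono_pow (by decide : Odd 3)).injective.eq_iff (a := x), hcube,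
    show y ^ 3 - y * x ^ 3 = y * (y ^ 2 - x ^ 3) by ring, mul_eq_zero, sub_eq_zero,
    eq_comm (a := y ^ 2)]

/-- (`E₇`-type impasse curve, Case 8 of Table 2.)
If `δ(x,y) = y³ − y·x³` and `X = (P,Q)` is real-analytic near the origin with `P(0,0) ≠ 0`
and `Q(x,0) = 0` for all `x` near `0`, then `(X, δ)` is orientation-preserving
`C⁰`-orbitally equivalent at the origin to the system with constant adjoint vector field
`(P(0,0), 0)`. -/
theorem E7_case8 (P Q : ℝ × ℝ → ℝ)
    (hP : AnalyticAt ℝ P (0, 0)) (hQ : AnalyticAt ℝ Q (0, 0))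
    (hP0 : P (0, 0) ≠ 0)
    (hQ0 : ∀ᶠ x in nhds (0 : ℝ), Q (x, 0) = 0) :
    OrbitallyEquivAt (fun z => (P z, Q z))
      (fun z => z.2 ^ 3 - z.2 * z.1 ^ 3) (0, 0)
      (fun _ => (P (0, 0), (0 : ℝ)))
      (fun z => z.2 ^ 3 - z.2 * z.1 ^ 3) (0, 0) := by
  exact E7_case8_general (a := 2 / 3) (by norm_num)
    (fun _ => pow_three_sub_mul_pow_three_eq_zero_iff)
    (hP.eventually_analyticAt.mono fun _ h => h.continuousAt) hP0
    ((hQ.div hP hP0).contDiffAt (n := 1)).exists_lipschitzOnWith hQ0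
end

section
/- Let ε ∈ {1, −1} and δ(x, y) = x³ + ε·y⁴ (an E₆-type singular impasse curve). Let X = (P, Q) be real-analytic on a neighborhood of the origin in ℝ² with (P(0,0), Q(0,0)) ≠ (0, 0). Then, without any further assumption on the Taylor expansion of X, the constrained system (X, δ) is orientation-preserving C⁰-orbitally equivalent at (0, 0) to the constrained system (Y, δ), where Y is the constant vector field Y ≡ (P(0,0), Q(0,0)). -/
/-!
A chart straightening the orbits of `X` and one straightening the parallel orbits of the
constant field `X(0)`, defined on the same parameter domain, glue to a homeomorphism which
carries oriented orbits to oriented orbits. It remains to choose them so that the impasse curve,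
a graph `x = a |y| ^ (4/3)` of class `C¹`, has the same preimage under both.

If `X(0)` is transverse to the curve at `0`, the curve serves as the initial section of both charts.
If `X(0)` is tangent to it, an orbit climbing from height `y'` to height `y` drifts horizontally by
at most a multiple of `|y| |y - y'|`, and since `4/3 < 2` this is dominated by the increment of
`|y| ^ (4/3)`. Hence along the curve the orbit label, divided by `a`, is again a valley-shaped
function of the height. Any two valleys are conjugate by an increasing homeomorphism `η` of the
height axis, and the second chart is the height chart of `X` with its heights reparametrized by `η`.
-/

namespace ConstrainedSystem

open Set Filter Topology Metric

section LocalFlow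

variable {E : Type*} [NormedAddCommGroup E] [NormedSpace ℝ E]

/-- `φ` is a local flow of the vector field `X` near `x₀`: `t ↦ φ (p, t)` is the solution issued
from `p`. Every condition is required only near `(x₀, 0)`, so `φ` is unconstrained elsewhere. -/
structure IsLocalFlow (X : E → E) (x₀ : E) (φ : E × ℝ → E) : Prop where
  continuousAt : ContinuousAt φ (x₀, 0)
  initial : ∀ᶠ p in 𝓝 x₀, φ (p, 0) = p
  hasDerivAt : ∀ᶠ q : E × ℝ in 𝓝 (x₀, 0), HasDerivAt (fun t => φ (q.1, t)) (X (φ q)) q.2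
  lipschitz : ∃ L : ℝ, ∀ᶠ q : (E × E) × ℝ in 𝓝 ((x₀, x₀), 0),
    ‖φ (q.1.1, q.2) - φ (q.1.2, q.2)‖ ≤ L * ‖q.1.1 - q.1.2‖

theorem exists_isLocalFlow [CompleteSpace E] {X : E → E} {x₀ : E} (hX : ContDiffAt ℝ 1 X x₀) :
    ∃ φ, IsLocalFlow X x₀ φ := by
  obtain ⟨ε, hε, a, r, L, K, hr, hpl⟩ := IsPicardLindelof.of_contDiffAt_one hX
  obtain ⟨φ, hφ, L', hL'⟩ :=
    (hpl 0).exists_forall_mem_closedBall_eq_hasDerivWithinAt_lipschitzOnWith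
  simp only [zero_sub, zero_add] at hφ hL'
  have hball : ∀ᶠ p in 𝓝 x₀, p ∈ closedBall x₀ r := closedBall_mem_nhds _ (by exact_mod_cast hr)
  have htime : ∀ᶠ t in 𝓝 (0 : ℝ), t ∈ Ioo (-ε) ε := Ioo_mem_nhds (by simpa using hε) hε
  have hcont : ContinuousOn (fun q : E × ℝ => φ q.1 q.2) (closedBall x₀ r ×ˢ Icc (-ε) ε) :=
    continuousOn_prod_of_continuousOn_lipschitzOnWith _ L'
      (fun x hx => HasDerivWithinAt.continuousOn (hφ x hx).2) hL'
  refine ⟨fun q => φ q.1 q.2, hcont.continuousAt (prod_mem_nhds hball (htime.mono fun t ht =>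
    Ioo_subset_Icc_self ht)), hball.mono fun p hp => (hφ p hp).1, ?_, L', ?_⟩
  · filter_upwards [hball.prod_nhds htime] with q hq
    exact ((hφ q.1 hq.1).2 q.2 (Ioo_subset_Icc_self hq.2)).hasDerivAt
      (Icc_mem_nhds hq.2.1 hq.2.2)
  · filter_upwards [(hball.prod_nhds hball).prod_nhds htime] with q hq
    exact (hL' q.2 (Ioo_subset_Icc_self hq.2)).norm_sub_le hq.1.1 hq.1.2

namespace IsLocalFlow

variable {X : E → E} {x₀ : E} {φ : E × ℝ → E}

theorem apply_base (hφ : IsLocalFlow X x₀ φ) : φ (x₀, 0) = x₀ :=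
  hφ.initial.self_of_nhds

theorem tendsto (hφ : IsLocalFlow X x₀ φ) : Tendsto φ (𝓝 (x₀, 0)) (𝓝 x₀) := by
  simpa only [hφ.apply_base] using hφ.continuousAt.tendsto

theorem eventually_norm_time_increment_le (hφ : IsLocalFlow X x₀ φ) (hX : ContinuousAt X x₀)
    {e : ℝ} (he : 0 < e) : ∀ᶠ q : E × ℝ × ℝ in 𝓝 (x₀, 0, 0),
      ‖φ (q.1, q.2.1) - φ (q.1, q.2.2) - (q.2.1 - q.2.2) • X x₀‖ ≤ e * |q.2.1 - q.2.2| := by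
  have hclose : ∀ᶠ q in 𝓝 (x₀, (0 : ℝ)), ‖X (φ q) - X x₀‖ ≤ e := by
    filter_upwards [(hX.tendsto.comp hφ.tendsto).eventually (closedBall_mem_nhds (X x₀) he)]
      with q hq using by simpa [dist_eq_norm] using hq
  obtain ⟨ρ, hρ, hnear⟩ := eventually_nhds_iff_ball.1 (hφ.hasDerivAt.and hclose)
  rw [← ball_prod_same] at hnear
  filter_upwards [prod_mem_nhds (ball_mem_nhds x₀ hρ)
    (prod_mem_nhds (ball_mem_nhds (0 : ℝ) hρ) (ball_mem_nhds (0 : ℝ) hρ))]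
    with ⟨p, t, u⟩ ⟨hp, ht, hu⟩
  have hder : ∀ s ∈ ball (0 : ℝ) ρ, HasDerivWithinAt (fun s => φ (p, s) - s • X x₀)
      (X (φ (p, s)) - X x₀) (ball 0 ρ) s := fun s hs => by
    simpa using ((hnear (p, s) ⟨hp, hs⟩).1.fun_sub
      ((hasDerivAt_id s).smul_const (X x₀))).hasDerivWithinAt
  calc ‖φ (p, t) - φ (p, u) - (t - u) • X x₀‖
      = ‖φ (p, t) - t • X x₀ - (φ (p, u) - u • X x₀)‖ := by rw [sub_smul]; abel_nf
    _ ≤ e * ‖t - u‖ := (convex_ball 0 ρ).norm_image_sub_le_of_norm_hasDerivWithin_le hder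
        (fun s hs => (hnear (p, s) ⟨hp, hs⟩).2) hu ht

theorem eventually_norm_space_increment_le (hφ : IsLocalFlow X x₀ φ) (hX : ContDiffAt ℝ 1 X x₀)
    {e : ℝ} (he : 0 < e) : ∀ᶠ q : (E × E) × ℝ in 𝓝 ((x₀, x₀), 0),
      ‖φ (q.1.1, q.2) - φ (q.1.2, q.2) - (q.1.1 - q.1.2)‖ ≤ e * ‖q.1.1 - q.1.2‖ := by
  obtain ⟨K, s, hs, hK⟩ := hX.exists_lipschitzOnWith
  obtain ⟨L, hlip⟩ := hφ.lipschitz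
  have hfst : Tendsto (fun q : (E × E) × ℝ => (q.1.1, q.2)) (𝓝 ((x₀, x₀), 0)) (𝓝 (x₀, 0)) :=
    Continuous.tendsto' (by fun_prop) _ _ rfl
  have hsnd : Tendsto (fun q : (E × E) × ℝ => (q.1.2, q.2)) (𝓝 ((x₀, x₀), 0)) (𝓝 (x₀, 0)) :=
    Continuous.tendsto' (by fun_prop) _ _ rfl
  have hflow := hφ.hasDerivAt.and (hφ.tendsto.eventually hs)
  obtain ⟨ρ, hρ, hnear⟩ := eventually_nhds_iff_ball.1
    (((hfst.eventually hflow).and (hsnd.eventually hflow)).and hlip)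
  rw [← ball_prod_same] at hnear
  have hsmall : ∀ᶠ r : ℝ in 𝓝 0, |r| * (K * L) < e :=
    ContinuousAt.eventually_lt (by fun_prop) continuousAt_const (by simpa using he)
  filter_upwards [prod_mem_nhds (ball_mem_nhds (x₀, x₀) hρ)
      (inter_mem hsmall (ball_mem_nhds (0 : ℝ) hρ)),
    (hφ.initial.prod_nhds hφ.initial).prod_inl_nhds 0]
    with ⟨⟨p, q⟩, t⟩ ⟨hpq, hte, ht⟩ ⟨hp0, hq0⟩
  dsimp only at hp0 hq0 ⊢
  have hder : ∀ u ∈ ball (0 : ℝ) ρ, HasDerivWithinAt (fun u => φ (p, u) - φ (q, u))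
      (X (φ (p, u)) - X (φ (q, u))) (ball 0 ρ) u := fun u hu =>
    have ⟨⟨⟨hp, _⟩, hq, _⟩, _⟩ := hnear ((p, q), u) ⟨hpq, hu⟩
    (hp.sub hq).hasDerivWithinAt
  have hbound : ∀ u ∈ ball (0 : ℝ) ρ,
      ‖X (φ (p, u)) - X (φ (q, u))‖ ≤ K * (L * ‖p - q‖) := fun u hu => by
    obtain ⟨⟨⟨-, hp⟩, -, hq⟩, hL⟩ := hnear ((p, q), u) ⟨hpq, hu⟩
    calc ‖X (φ (p, u)) - X (φ (q, u))‖ ≤ K * ‖φ (p, u) - φ (q, u)‖ := hK.norm_sub_le hp hq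
      _ ≤ K * (L * ‖p - q‖) := by gcongr
  calc ‖φ (p, t) - φ (q, t) - (p - q)‖ = ‖φ (p, t) - φ (q, t) - (φ (p, 0) - φ (q, 0))‖ := by
        rw [hp0, hq0]
    _ ≤ K * (L * ‖p - q‖) * ‖t - 0‖ :=
        (convex_ball 0 ρ).norm_image_sub_le_of_norm_hasDerivWithin_le
          hder hbound (mem_ball_self hρ) ht
    _ = |t| * (K * L) * ‖p - q‖ := by rw [sub_zero, Real.norm_eq_abs]; ring
    _ ≤ e * ‖p - q‖ := mul_le_mul_of_nonneg_right (le_of_lt hte) (norm_nonneg _)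

theorem hasStrictFDerivAt (hφ : IsLocalFlow X x₀ φ) (hX : ContDiffAt ℝ 1 X x₀) :
    HasStrictFDerivAt φ (ContinuousLinearMap.fst ℝ E ℝ +
      (ContinuousLinearMap.snd ℝ E ℝ).smulRight (X x₀)) (x₀, 0) := by
  refine .of_isLittleO (Asymptotics.isLittleO_iff.2 fun e he => ?_)
  have htime : Tendsto (fun z : (E × ℝ) × (E × ℝ) => (z.1.1, z.1.2, z.2.2))
      (𝓝 ((x₀, 0), (x₀, 0))) (𝓝 (x₀, 0, 0)) := Continuous.tendsto' (by fun_prop) _ _ rfl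
  have hspace : Tendsto (fun z : (E × ℝ) × (E × ℝ) => ((z.1.1, z.2.1), z.2.2))
      (𝓝 ((x₀, 0), (x₀, 0))) (𝓝 ((x₀, x₀), 0)) := Continuous.tendsto' (by fun_prop) _ _ rfl
  filter_upwards [
    htime.eventually (hφ.eventually_norm_time_increment_le hX.continuousAt (half_pos he)),
    hspace.eventually (hφ.eventually_norm_space_increment_le hX (half_pos he))]
    with ⟨⟨p, t⟩, ⟨q, u⟩⟩ hT hS
  dsimp only at hT hS ⊢
  have hp : ‖p - q‖ ≤ ‖(p, t) - (q, u)‖ := norm_fst_le ((p, t) - (q, u))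
  have ht : |t - u| ≤ ‖(p, t) - (q, u)‖ := norm_snd_le ((p, t) - (q, u))
  calc _ = ‖(φ (p, t) - φ (p, u) - (t - u) • X x₀) + (φ (p, u) - φ (q, u) - (p - q))‖ := by
        simp only [add_apply, ContinuousLinearMap.smulRight_apply,
          ContinuousLinearMap.coe_fst', ContinuousLinearMap.coe_snd', Prod.mk_sub_mk]
        congr 1; abel
    _ ≤ e / 2 * |t - u| + e / 2 * ‖p - q‖ := (norm_add_le _ _).trans (add_le_add hT hS)
    _ ≤ e / 2 * ‖(p, t) - (q, u)‖ + e / 2 * ‖(p, t) - (q, u)‖ := by gcongr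
    _ = e * ‖(p, t) - (q, u)‖ := by ring

end IsLocalFlow
end LocalFlow

section FlowBox

variable {E S : Type*} [NormedAddCommGroup E] [NormedSpace ℝ E] [NormedAddCommGroup S]
  [NormedSpace ℝ S]

theorem exists_openPartialHomeomorph_lipschitzOnWith_symm [CompleteSpace S] {f : S → E}
    {f' : S ≃L[ℝ] E} {a : S} (hf : HasStrictFDerivAt f (f' : S →L[ℝ] E) a) {U : Set S}
    (hU : U ∈ 𝓝 a) :
    ∃ F : OpenPartialHomeomorph S E, ⇑F = f ∧ a ∈ F.source ∧ F.source ⊆ U ∧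
      ∃ K, LipschitzOnWith K F.symm F.target := by
  obtain ⟨K, s, hs, hK⟩ := hf.to_localInverse.exists_lipschitzOnWith
  let G := hf.toOpenPartialHomeomorph f
  have ha : a ∈ G.source := hf.mem_toOpenPartialHomeomorph_source
  let W := interior U ∩ (G.source ∩ G ⁻¹' interior s)
  have hWo : IsOpen W := isOpen_interior.inter (G.isOpen_inter_preimage isOpen_interior)
  have haW : a ∈ W := ⟨mem_interior_iff_mem_nhds.2 hU, ha, mem_interior_iff_mem_nhds.2 hs⟩
  refine ⟨G.restrOpen W hWo, rfl, ⟨ha, haW⟩, fun x hx => interior_subset hx.2.1, K,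
    hK.mono fun y hy => ?_⟩
  rw [← (G.restrOpen W hWo).right_inv hy]
  exact interior_subset ((G.restrOpen W hWo).map_target hy).2.2.2

/-- A flow box of the vector field `X`: a chart in which the orbits of `X` are the horizontal
lines, traversed at unit speed. The Lipschitz bound on the inverse is enough to transport
derivatives of phase curves to the chart, so differentiability of the inverse is not demanded. -/
structure IsFlowBox (X : E → E) (F : OpenPartialHomeomorph (ℝ × S) E) : Prop where
  hasDerivAt : ∀ p ∈ F.source, HasDerivAt (fun t => F (t, p.2)) (X (F p)) p.1
  lipschitzOnWith_symm : ∃ K, LipschitzOnWith K F.symm F.target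

theorem exists_isFlowBox [CompleteSpace E] [CompleteSpace S] {X : E → E} {h : S → E}
    {h' : S →L[ℝ] E} {s₀ : S} (hX : ContDiffAt ℝ 1 X (h s₀)) (hh : HasStrictFDerivAt h h' s₀)
    (e : (ℝ × S) ≃L[ℝ] E) (he : ∀ q, e q = q.1 • X (h s₀) + h' q.2) :
    ∃ F : OpenPartialHomeomorph (ℝ × S) E, IsFlowBox X F ∧ (0, s₀) ∈ F.source ∧
      (∀ p ∈ F.source, F (0, p.2) = h p.2) ∧
      HasStrictFDerivAt F (e : ℝ × S →L[ℝ] E) (0, s₀) := by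
  obtain ⟨φ, hφ⟩ := exists_isLocalFlow hX
  have hstart : HasStrictFDerivAt (fun q : ℝ × S => (h q.2, q.1))
      ((h'.comp (.snd ℝ ℝ S)).prod (.fst ℝ ℝ S)) (0, s₀) :=
    (hh.comp ((0 : ℝ), s₀) hasStrictFDerivAt_snd).prodMk hasStrictFDerivAt_fst
  have hder : HasStrictFDerivAt (fun q : ℝ × S => φ (h q.2, q.1)) (e : ℝ × S →L[ℝ] E) (0, s₀) := by
    refine ((hφ.hasStrictFDerivAt hX).comp ((0 : ℝ), s₀) hstart).congr_fderiv ?_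
    ext q <;> simp [he]
  have hU : ∀ᶠ q : ℝ × S in 𝓝 (0, s₀), φ (h q.2, 0) = h q.2 ∧
      HasDerivAt (fun t => φ (h q.2, t)) (X (φ (h q.2, q.1))) q.1 :=
    hstart.continuousAt.eventually ((hφ.initial.prod_inl_nhds 0).and hφ.hasDerivAt)
  obtain ⟨F, hF, h0, hFU, hlip⟩ := exists_openPartialHomeomorph_lipschitzOnWith_symm hder hU
  refine ⟨F, ⟨fun p hp => ?_, hlip⟩, h0, fun p hp => ?_, hF ▸ hder⟩
  · rw [hF]; exact (hFU hp).2
  · rw [hF]; exact (hFU hp).1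

theorem hasDerivWithinAt_comp_of_lipschitzOnWith {g : E → S} {K : NNReal} {s : Set E}
    (hg : LipschitzOnWith K g s) {u w : ℝ → E} {J : Set ℝ} {t : ℝ} {v : E} {b : S}
    (hu : HasDerivWithinAt u v J t) (hw : HasDerivWithinAt w v J t) (huw : u t = w t)
    (hus : ∀ᶠ x in 𝓝[J] t, u x ∈ s) (hws : ∀ᶠ x in 𝓝[J] t, w x ∈ s)
    (hgw : HasDerivWithinAt (fun x => g (w x)) b J t) :
    HasDerivWithinAt (fun x => g (u x)) b J t := by
  have hdiff := (hu.sub hw).isLittleO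
  have hg_diff : HasDerivWithinAt (fun x => g (u x) - g (w x)) 0 J t := by
    rw [hasDerivWithinAt_iff_isLittleO]
    refine Asymptotics.IsBigO.trans_isLittleO (.of_bound K ?_) hdiff
    filter_upwards [hus, hws] with x hx hx'
    simpa [huw] using hg.norm_sub_le hx hx'
  simpa using hg_diff.fun_add hgw

theorem exists_eq_add_smul_of_hasDerivWithinAt {J : Set ℝ} (hJ : J.OrdConnected) {f : ℝ → E}
    {v : E} (hf : ∀ t ∈ J, HasDerivWithinAt f v J t) : ∃ a, ∀ t ∈ J, f t = a + t • v := by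
  rcases J.eq_empty_or_nonempty with rfl | ⟨r, hr⟩
  · exact ⟨0, fun t ht => ht.elim⟩
  refine ⟨f r - r • v, fun t ht => ?_⟩
  have hconst := hJ.convex.norm_image_sub_le_of_norm_hasDerivWithin_le (C := 0)
    (fun t ht => (hf t ht).fun_sub ((hasDerivWithinAt_id t J).smul_const v)) (by simp) hr ht
  rw [zero_mul, norm_le_zero_iff, sub_eq_zero] at hconst
  exact eq_add_of_sub_eq hconst

theorem IsFlowBox.symm_comp_eq_of_hasDerivWithinAt {X : E → E}
    {F : OpenPartialHomeomorph (ℝ × S) E} (hF : IsFlowBox X F) {J : Set ℝ} (hJ : J.OrdConnected)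
    {c : ℝ → E} (hcF : ∀ t ∈ J, c t ∈ F.target)
    (hc : ∀ t ∈ J, HasDerivWithinAt c (X (c t)) J t) :
    ∃ t₀ s₀, ∀ t ∈ J, F.symm (c t) = (t + t₀, s₀) := by
  obtain ⟨K, hK⟩ := hF.lipschitzOnWith_symm
  have hder : ∀ t ∈ J, HasDerivWithinAt (fun x => F.symm (c x)) ((1 : ℝ), (0 : S)) J t := by
    intro t ht
    obtain ⟨⟨r, s⟩, hp, hpc⟩ : ∃ p ∈ F.source, F p = c t :=
      ⟨_, F.map_target (hcF t ht), F.right_inv (hcF t ht)⟩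
    have hshift : HasDerivAt (fun x : ℝ => (x + (r - t), s)) ((1 : ℝ), (0 : S)) t :=
      ((hasDerivAt_id t).add_const _).prodMk (hasDerivAt_const t s)
    have hline : HasDerivAt (fun x => F (x + (r - t), s)) (X (c t)) t :=
      HasDerivAt.comp_add_const (f := fun x => F (x, s)) t (r - t)
        (by simpa [hpc] using hF.hasDerivAt _ hp)
    have hsource : ∀ᶠ x in 𝓝[J] t, (x + (r - t), s) ∈ F.source :=
      nhdsWithin_le_nhds (hshift.continuousAt.eventually
        (F.open_source.mem_nhds (by simpa using hp)))
    refine hasDerivWithinAt_comp_of_lipschitzOnWith hK (hc t ht) hline.hasDerivWithinAt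
      (by simp [hpc]) (eventually_mem_nhdsWithin.mono hcF)
      (hsource.mono fun x hx => F.map_source hx) ?_
    exact hshift.hasDerivWithinAt.congr_of_eventuallyEq_of_mem
      (hsource.mono fun x hx => F.left_inv hx) ht
  obtain ⟨a, ha⟩ := exists_eq_add_smul_of_hasDerivWithinAt hJ hder
  refine ⟨a.1, a.2, fun t ht => ?_⟩
  rw [ha t ht]
  ext <;> simp [add_comm]

end FlowBox

section OrbitChart

/-- A chart `F` of the plane in which the oriented orbits of `X` are the horizontal lines directed
to the right. Unlike a flow box it forgets time: it only records that phase curves and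
nondegenerate horizontal intervals correspond up to continuous increasing reparametrization. -/
structure IsOrbitChart (X : ℝ × ℝ → ℝ × ℝ) (F : OpenPartialHomeomorph (ℝ × ℝ) (ℝ × ℝ)) :
    Prop where
  symm_comp_phaseCurve : ∀ {J : Set ℝ} {c : ℝ → ℝ × ℝ}, IsPhaseCurve X F.target J c →
    ∃ (T : ℝ → ℝ) (s : ℝ), ContinuousOn T J ∧ StrictMonoOn T J ∧
      ∀ t ∈ J, F.symm (c t) = (T t, s)
  exists_phaseCurve : ∀ {I : Set ℝ} {s : ℝ}, I.OrdConnected → I.Nontrivial →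
    (∀ u ∈ I, (u, s) ∈ F.source) →
    ∃ (d : ℝ → ℝ × ℝ) (τ : ℝ → ℝ), ContinuousOn τ I ∧ StrictMonoOn τ I ∧
      IsPhaseCurve X F.target (τ '' I) d ∧ ∀ u ∈ I, F (u, s) = d (τ u)

variable {X Y : ℝ × ℝ → ℝ × ℝ} {F N : OpenPartialHomeomorph (ℝ × ℝ) (ℝ × ℝ)}

theorem ordConnected_image_of_continuousOn {J : Set ℝ} {T : ℝ → ℝ} (hJ : J.OrdConnected)
    (hT : ContinuousOn T J) : (T '' J).OrdConnected :=
  (hJ.isPreconnected.image T hT).ordConnected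

theorem IsFlowBox.isOrbitChart (hF : IsFlowBox X F) : IsOrbitChart X F where
  symm_comp_phaseCurve := by
    rintro J c ⟨hJ, -, hcF, hc⟩
    obtain ⟨t₀, s, hsymm⟩ := hF.symm_comp_eq_of_hasDerivWithinAt hJ hcF hc
    exact ⟨fun t => t + t₀, s, by fun_prop, fun _ _ _ _ h => by simpa using h, hsymm⟩
  exists_phaseCurve := fun {I s} hI hIn hIF =>
    ⟨fun u => F (u, s), id, continuousOn_id, strictMonoOn_id,
      by simpa using ⟨hI, hIn, fun u hu => F.map_source (hIF u hu),
        fun u hu => (hF.hasDerivAt _ (hIF u hu)).hasDerivWithinAt⟩, fun _ _ => rfl⟩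

theorem isOrbitChart_const_of_strictMonoOn {b : ℝ} (hb : b ≠ 0)
    (hfst : ∀ p ∈ N.source, (N p).1 = p.2)
    (hmono : ∀ s, StrictMonoOn (fun t => b * (N (t, s)).2) {t | (t, s) ∈ N.source}) :
    IsOrbitChart (fun _ => (0, b)) N where
  symm_comp_phaseCurve := by
    rintro J c ⟨hJ, -, hcN, hc⟩
    obtain ⟨a, ha⟩ := exists_eq_add_smul_of_hasDerivWithinAt hJ hc
    have hsymm : ∀ t ∈ J, N.symm (c t) = ((N.symm (c t)).1, a.1) := fun t ht => by
      rw [Prod.ext_iff, ← hfst _ (N.map_target (hcN t ht)), N.right_inv (hcN t ht), ha t ht]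
      simp
    refine ⟨fun t => (N.symm (c t)).1, a.1, ?_, fun t ht u hu htu => ?_, hsymm⟩
    · exact continuous_fst.comp_continuousOn (N.continuousOn_symm.comp
        (fun t ht => (hc t ht).continuousWithinAt) hcN)
    · have hheight : ∀ t ∈ J, b * (N ((N.symm (c t)).1, a.1)).2 = b * a.2 + t * b ^ 2 :=
        fun t ht => by
          rw [← hsymm t ht, N.right_inv (hcN t ht), ha t ht, Prod.snd_add, Prod.smul_snd,
            smul_eq_mul]
          ring
      have hmem : ∀ t ∈ J, (N.symm (c t)).1 ∈ {r | (r, a.1) ∈ N.source} := fun t ht => by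
        simpa [← hsymm t ht] using N.map_target (hcN t ht)
      rw [← (hmono a.1).lt_iff_lt (hmem t ht) (hmem u hu), hheight t ht, hheight u hu]
      gcongr
  exists_phaseCurve := by
    intro I s hI hIn hIN
    have hheight : ContinuousOn (fun u => (N (u, s)).2 / b) I :=
      (continuous_snd.comp_continuousOn (N.continuousOn.comp (by fun_prop) hIN)).div_const b
    have hstrict : StrictMonoOn (fun u => (N (u, s)).2 / b) I := fun t ht u hu htu => by
      have := hmono s (hIN t ht) (hIN u hu) htu
      have : 0 < b ^ 2 := by positivity
      calc (N (t, s)).2 / b = b * (N (t, s)).2 / b ^ 2 := by field_simp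
        _ < b * (N (u, s)).2 / b ^ 2 := by gcongr
        _ = (N (u, s)).2 / b := by field_simp
    have hN : ∀ u ∈ I, N (u, s) = (s, b * ((N (u, s)).2 / b)) := fun u hu =>
      Prod.ext (hfst _ (hIN u hu)) (mul_div_cancel₀ _ hb).symm
    refine ⟨fun t => (s, b * t), fun u => (N (u, s)).2 / b, hheight, hstrict,
      ⟨ordConnected_image_of_continuousOn hI hheight, hIn.image_of_injOn hstrict.injOn, ?_,
        fun t _ => ?_⟩, hN⟩
    · rintro _ ⟨u, hu, rfl⟩
      simpa [← hN u hu] using N.map_source (hIN u hu)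
    · simpa using ((hasDerivAt_const t s).prodMk ((hasDerivAt_id t).const_mul b)).hasDerivWithinAt

theorem IsOrbitChart.exists_phaseCurve_comp_symm (hF : IsOrbitChart X F) (hN : IsOrbitChart Y N)
    {A : Set (ℝ × ℝ)} (hAF : A ⊆ F.source) (hAN : A ⊆ N.source) {J : Set ℝ} {c : ℝ → ℝ × ℝ}
    (hc : IsPhaseCurve X (F '' A) J c) :
    ∃ (J' : Set ℝ) (d : ℝ → ℝ × ℝ) (τ : ℝ → ℝ), IsPhaseCurve Y (N '' A) J' d ∧
      ContinuousOn τ J ∧ StrictMonoOn τ J ∧ τ '' J = J' ∧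
      ∀ t ∈ J, N (F.symm (c t)) = d (τ t) := by
  obtain ⟨hJ, hJn, hcA, hcd⟩ := hc
  have hFA : F '' A ⊆ F.target := image_subset_iff.2 fun p hp => F.map_source (hAF hp)
  obtain ⟨T, s, hT, hTm, hTc⟩ :=
    hF.symm_comp_phaseCurve ⟨hJ, hJn, fun t ht => hFA (hcA t ht), hcd⟩
  have hTA : ∀ t ∈ J, (T t, s) ∈ A := fun t ht => by
    obtain ⟨p, hp, hpc⟩ := hcA t ht
    rwa [← hTc t ht, ← hpc, F.left_inv (hAF hp)]
  obtain ⟨d, τ, hτ, hτm, ⟨hτJ, hτn, -, hd⟩, hNd⟩ := hN.exists_phaseCurve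
    (ordConnected_image_of_continuousOn hJ hT) (hJn.image_of_injOn hTm.injOn)
    (forall_mem_image.2 fun t ht => hAN (hTA t ht))
  refine ⟨τ '' (T '' J), d, τ ∘ T, ⟨hτJ, hτn, ?_, hd⟩, hτ.comp hT (mapsTo_image T J),
    hτm.comp hTm (mapsTo_image T J), image_comp τ T J, fun t ht => ?_⟩
  · rintro _ ⟨_, ⟨t, ht, rfl⟩, rfl⟩
    exact ⟨(T t, s), hTA t ht, hNd (T t) (mem_image_of_mem T ht)⟩
  · rw [hTc t ht]
    exact hNd (T t) (mem_image_of_mem T ht)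

theorem IsOrbitChart.orbitallyEquivAt (hF : IsOrbitChart X F) (hN : IsOrbitChart Y N) {a : ℝ × ℝ}
    (haF : a ∈ F.source) (haN : a ∈ N.source) {δ γ : ℝ × ℝ → ℝ}
    (hδγ : ∀ᶠ p in 𝓝 a, δ (F p) = 0 ↔ γ (N p) = 0) :
    OrbitallyEquivAt X δ (F a) Y γ (N a) := by
  obtain ⟨W, hWsub, hWo, haW⟩ := _root_.mem_nhds_iff.1
    (inter_mem hδγ (inter_mem (F.open_source.mem_nhds haF) (N.open_source.mem_nhds haN)))
  have hWF : W ⊆ F.source := fun p hp => (hWsub hp).2.1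
  have hWN : W ⊆ N.source := fun p hp => (hWsub hp).2.2
  have hzero : W ∩ F ⁻¹' {z | δ z = 0} = W ∩ N ⁻¹' {z | γ z = 0} := by
    ext p
    exact and_congr_right fun hp => (hWsub hp).1
  have hoff : W \ F ⁻¹' {z | δ z = 0} = W \ N ⁻¹' {z | γ z = 0} := by
    rw [← sdiff_self_inter, hzero, sdiff_self_inter]
  have hΦ : ∀ p ∈ W, N (F.symm (F p)) = N p := fun p hp => by rw [F.left_inv (hWF hp)]
  have hΦinv : ∀ p ∈ W, F (N.symm (N p)) = F p := fun p hp => by rw [N.left_inv (hWN hp)]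
  have hFW : F '' W ⊆ F.target := image_subset_iff.2 fun p hp => F.map_source (hWF hp)
  have hNW : N '' W ⊆ N.target := image_subset_iff.2 fun p hp => N.map_source (hWN hp)
  refine ⟨F '' W, N '' W, fun z => N (F.symm z), fun z => F (N.symm z),
    F.isOpen_image_of_subset_source hWo hWF, N.isOpen_image_of_subset_source hWo hWN,
    mem_image_of_mem F haW, mem_image_of_mem N haW,
    N.continuousOn.comp (F.continuousOn_symm.mono hFW) ?_,
    F.continuousOn.comp (N.continuousOn_symm.mono hNW) ?_,
    forall_mem_image.2 fun p hp => ⟨p, hp, (hΦ p hp).symm⟩,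
    forall_mem_image.2 fun p hp => ⟨p, hp, (hΦinv p hp).symm⟩,
    forall_mem_image.2 fun p hp => by simp only [hΦ p hp, hΦinv p hp],
    forall_mem_image.2 fun p hp => by simp only [hΦinv p hp, hΦ p hp], hΦ a haW, ?_, ?_, ?_⟩
  · exact forall_mem_image.2 fun p hp => by rw [F.left_inv (hWF hp)]; exact hWN hp
  · exact forall_mem_image.2 fun p hp => by rw [N.left_inv (hWN hp)]; exact hWF hp
  · rw [inter_comm, inter_comm _ (N '' W), ← image_inter_preimage, ← image_inter_preimage,
      ← hzero, image_image]
    exact image_congr fun p hp => hΦ p hp.1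
  · rw [← image_sdiff_preimage, ← image_sdiff_preimage, ← hoff]
    exact fun J c =>
      hF.exists_phaseCurve_comp_symm hN (sdiff_subset.trans hWF) (sdiff_subset.trans hWN)
  · rw [← image_sdiff_preimage, ← image_sdiff_preimage, ← hoff]
    exact fun J c =>
      hN.exists_phaseCurve_comp_symm hF (sdiff_subset.trans hWN) (sdiff_subset.trans hWF)

end OrbitChart

section Transversal

theorem exists_mem_nhds_strictMonoOn_slice {S : Type*} [NormedAddCommGroup S] [NormedSpace ℝ S]
    {f : ℝ × S → ℝ} {f' : ℝ × S →L[ℝ] ℝ} {a : ℝ × S} (hf : HasStrictFDerivAt f f' a)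
    (hf' : 0 < f' (1, 0)) :
    ∃ U ∈ 𝓝 a, ∀ s, StrictMonoOn (fun t => f (t, s)) {t | (t, s) ∈ U} := by
  obtain ⟨U, hU, hlin⟩ := hf.approximates_deriv_on_nhds (c := .mk _ (half_pos hf').le)
    (.inr (half_pos hf'))
  refine ⟨U, hU, fun s t ht u hu htu => ?_⟩
  have hsub : ((u, s) - (t, s) : ℝ × S) = (u - t) • (1, 0) := by simp
  have hnorm : ‖((u, s) - (t, s) : ℝ × S)‖ = u - t := by
    simp [abs_of_pos (sub_pos.2 htu), (sub_pos.2 htu).le]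
  have hbound := (abs_le.1 (hlin _ hu _ ht)).1
  rw [hnorm, hsub, map_smul, smul_eq_mul, NNReal.coe_mk] at hbound
  nlinarith [mul_pos (sub_pos.2 htu) hf']

theorem exists_continuousLinearEquiv_smul_add_smul {v w : ℝ × ℝ}
    (h : v.1 * w.2 - v.2 * w.1 ≠ 0) :
    ∃ e : (ℝ × ℝ) ≃L[ℝ] ℝ × ℝ, ∀ q, e q = q.1 • v + q.2 • w := by
  let f : ℝ × ℝ →ₗ[ℝ] ℝ × ℝ :=
    (LinearMap.fst ℝ ℝ ℝ).smulRight v + (LinearMap.snd ℝ ℝ ℝ).smulRight w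
  have hf : Function.Injective f := by
    refine (injective_iff_map_eq_zero f).2 fun q hq => ?_
    have h1 : q.1 * v.1 + q.2 * w.1 = 0 := congrArg Prod.fst hq
    have h2 : q.1 * v.2 + q.2 * w.2 = 0 := congrArg Prod.snd hq
    refine Prod.ext ((mul_eq_zero.1 ?_).resolve_right h) ((mul_eq_zero.1 ?_).resolve_right h)
    · linear_combination w.2 * h1 - w.1 * h2
    · linear_combination v.1 * h2 - v.2 * h1
  exact ⟨(LinearEquiv.ofInjectiveEndo f hf).toContinuousLinearEquiv, fun q => rfl⟩

theorem exists_isOrbitChart_of_transverse_graph {X : ℝ × ℝ → ℝ × ℝ} {g : ℝ → ℝ} {m : ℝ}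
    (hX : ContDiffAt ℝ 1 X (g 0, 0)) (hg : HasStrictDerivAt g m 0)
    (hXg : (X (g 0, 0)).1 ≠ m * (X (g 0, 0)).2) :
    ∃ F, IsOrbitChart X F ∧ (0, 0) ∈ F.source ∧ F (0, 0) = (g 0, 0) ∧
      ∀ᶠ q in 𝓝 (0, 0), (F q).1 = g (F q).2 ↔ q.1 = 0 := by
  obtain ⟨e, he⟩ := exists_continuousLinearEquiv_smul_add_smul (v := X (g 0, 0)) (w := (m, 1))
    (by simpa [mul_comm, sub_eq_zero] using hXg)
  obtain ⟨F, hF, h0, hF0, hFe⟩ := exists_isFlowBox (h := fun y => (g y, y)) hX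
    (hg.prodMk (hasStrictDerivAt_id 0)).hasStrictFDerivAt e (by simpa using he)
  have hF00 : F (0, 0) = (g 0, 0) := hF0 _ h0
  have hgF : HasStrictFDerivAt (fun q => g (F q).2) _ ((0 : ℝ), (0 : ℝ)) :=
    HasStrictFDerivAt.comp _ (by rw [hF00]; exact hg.hasStrictFDerivAt) hFe.snd
  -- The signed distance to the graph, oriented so that it increases along the orbits.
  obtain ⟨U, hU, hmono⟩ := exists_mem_nhds_strictMonoOn_slice
    ((hFe.fst.sub hgF).const_mul ((X (g 0, 0)).1 - m * (X (g 0, 0)).2))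
    (by simpa [he, mul_comm] using mul_self_pos.2 (sub_ne_zero.2 hXg))
  have hproj : Tendsto (fun q : ℝ × ℝ => ((0 : ℝ), q.2)) (𝓝 (0, 0)) (𝓝 (0, 0)) :=
    Continuous.tendsto' (by fun_prop) _ _ rfl
  refine ⟨F, hF.isOrbitChart, h0, hF00, ?_⟩
  filter_upwards [hU, F.open_source.mem_nhds h0, hproj.eventually hU] with q hqU hqF hq0
  have hzero := hF0 q hqF
  have := (hmono q.2).injOn.eq_iff hqU hq0
  simpa [hzero, sub_eq_zero, sub_ne_zero.2 hXg] using this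

end Transversal

section Valley

/-- `f` is a (germ of a) valley at `0`: it is continuous and increases strictly when moving away
from `0` on either side. -/
structure IsValley (f : ℝ → ℝ) : Prop where
  zero : f 0 = 0
  continuousAt : ∀ᶠ y in 𝓝 0, ContinuousAt f y
  lt : ∀ᶠ y in 𝓝 0, ∀ y' ∈ uIcc 0 y, y' ≠ y → f y' < f y

theorem exists_orderIso_eqOn_Icc {a b : ℝ} (hab : a ≤ b) {k : ℝ → ℝ}
    (hk : ContinuousOn k (Icc a b)) (hmono : StrictMonoOn k (Icc a b)) :
    ∃ H : ℝ ≃o ℝ, EqOn H k (Icc a b) := by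
  -- Extend `k` by translations on both sides.
  let H : ℝ → ℝ := fun x => k (projIcc a b hab x) + (x - projIcc a b hab x)
  have hcont : Continuous H := by
    have hproj : Continuous fun x => (projIcc a b hab x : ℝ) :=
      continuous_subtype_val.comp continuous_projIcc
    exact (hk.comp_continuous hproj fun x => (projIcc a b hab x).2).add
      (continuous_id.sub hproj)
  have hstrict : StrictMono H := by
    intro x y hxy
    rcases (monotone_projIcc hab hxy.le).eq_or_lt with heq | hlt
    · simpa [H, heq] using hxy
    · have hk_lt := hmono (projIcc a b hab x).2 (projIcc a b hab y).2 hlt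
      have hdist := (le_abs_self _).trans (abs_projIcc_sub_projIcc hab (c := y) (d := x))
      rw [abs_of_pos (sub_pos.2 hxy)] at hdist
      simp only [H]
      linarith
  have htop : Tendsto H atTop atTop := by
    refine (tendsto_atTop_add_const_left _ (k b) (tendsto_atTop_add_const_right _ (-b)
      tendsto_id)).congr' ?_
    filter_upwards [eventually_ge_atTop b] with x hx
    simp [H, projIcc_of_right_le hab hx, sub_eq_add_neg]
  have hbot : Tendsto H atBot atBot := by
    refine (tendsto_atBot_add_const_left _ (k a) (tendsto_atBot_add_const_right _ (-a)
      tendsto_id)).congr' ?_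
    filter_upwards [eventually_le_atBot a] with x hx
    simp [H, projIcc_of_le_left hab hx, sub_eq_add_neg]
  exact ⟨hstrict.orderIsoOfSurjective H (hcont.surjective htop hbot), fun x hx => by
    simp [H, projIcc_of_mem hab hx]⟩

theorem IsValley.exists_strictMonoOn_sub {f : ℝ → ℝ} (hf : IsValley f) :
    ∃ ρ > 0, (∀ y ∈ Icc (-ρ) ρ, 0 ≤ f y) ∧
      ContinuousOn (fun y => f (max y 0) - f (min y 0)) (Icc (-ρ) ρ) ∧
      StrictMonoOn (fun y => f (max y 0) - f (min y 0)) (Icc (-ρ) ρ) := by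
  obtain ⟨ρ, hρ, hball⟩ := nhds_basis_closedBall.eventually_iff.1 (hf.continuousAt.and hf.lt)
  rw [Real.closedBall_eq_Icc, zero_sub, zero_add] at hball
  have hmax : ∀ {y}, y ∈ Icc (-ρ) ρ → max y 0 ∈ Icc (-ρ) ρ := fun hy =>
    ⟨hy.1.trans (le_max_left _ _), max_le hy.2 hρ.le⟩
  have hmin : ∀ {y}, y ∈ Icc (-ρ) ρ → min y 0 ∈ Icc (-ρ) ρ := fun hy =>
    ⟨le_min hy.1 (by linarith), (min_le_left _ _).trans hy.2⟩
  have hfc : ContinuousOn f (Icc (-ρ) ρ) := fun y hy => (hball hy).1.continuousWithinAt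
  have hle : ∀ y ∈ Icc (-ρ) ρ, ∀ y' ∈ uIcc 0 y, f y' ≤ f y := fun y hy y' hy' => by
    rcases eq_or_ne y' y with rfl | hne
    exacts [le_rfl, ((hball hy).2 y' hy' hne).le]
  refine ⟨ρ, hρ, fun y hy => by simpa only [hf.zero] using hle y hy 0 left_mem_uIcc,
    (hfc.comp (by fun_prop) fun y => hmax).sub (hfc.comp (by fun_prop) fun y => hmin),
    fun x hx y hy hxy => ?_⟩
  rcases le_or_gt y 0 with hy0 | hy0
  · have hx0 : x ≤ 0 := hxy.le.trans hy0
    have hlt : f y < f x := (hball hx).2 y (uIcc_of_ge hx0 ▸ ⟨hxy.le, hy0⟩) hxy.ne'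
    simpa [hx0, hy0] using hlt
  · have hright : f (max x 0) < f y := (hball hy).2 _
      (uIcc_of_le hy0.le ▸ ⟨le_max_right _ _, max_le hxy.le hy0.le⟩) (max_lt hxy hy0).ne
    have hleft : f 0 ≤ f (min x 0) := hle _ (hmin hx) 0 left_mem_uIcc
    simp only [max_eq_left hy0.le, min_eq_right hy0.le]
    linarith

theorem IsValley.exists_orderIso_abs_eq {f : ℝ → ℝ} (hf : IsValley f) :
    ∃ H : ℝ ≃o ℝ, H 0 = 0 ∧ ∀ᶠ y in 𝓝 0, |H y| = f y := by
  obtain ⟨ρ, hρ, hnonneg, hcont, hmono⟩ := hf.exists_strictMonoOn_sub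
  obtain ⟨H, hH⟩ := exists_orderIso_eqOn_Icc (by linarith) hcont hmono
  refine ⟨H, by simpa using hH ⟨by linarith, hρ.le⟩, ?_⟩
  filter_upwards [Icc_mem_nhds (neg_lt_zero.2 hρ) hρ] with y hy
  rw [hH hy]
  rcases le_total y 0 with hy0 | hy0 <;> simp [hy0, hf.zero, hnonneg y hy]

theorem IsValley.exists_orderIso_comp_eq {f g : ℝ → ℝ} (hf : IsValley f) (hg : IsValley g) :
    ∃ η : ℝ ≃o ℝ, η 0 = 0 ∧ ∀ᶠ y in 𝓝 0, g (η y) = f y := by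
  obtain ⟨A, hA0, hA⟩ := hf.exists_orderIso_abs_eq
  obtain ⟨B, hB0, hB⟩ := hg.exists_orderIso_abs_eq
  have hη0 : (A.trans B.symm) 0 = 0 := B.symm_apply_eq.2 (hA0.trans hB0.symm)
  have hη : Tendsto (A.trans B.symm) (𝓝 0) (𝓝 0) :=
    (A.trans B.symm).continuous.tendsto' _ _ hη0
  refine ⟨A.trans B.symm, hη0, ?_⟩
  filter_upwards [hA, hη.eventually hB] with y hAy hBy
  rw [← hBy, ← hAy, OrderIso.trans_apply, OrderIso.apply_symm_apply]

end Valley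

section Tangency

variable {X : ℝ × ℝ → ℝ × ℝ} {b : ℝ}

theorem abs_sub_le_mul_abs_sub_of_abs_deriv_le {x y x' y' : ℝ → ℝ} {t₁ t₂ κ : ℝ}
    (hx : ∀ t ∈ uIcc t₁ t₂, HasDerivAt x (x' t) t)
    (hy : ∀ t ∈ uIcc t₁ t₂, HasDerivAt y (y' t) t)
    (hy' : ∀ t ∈ uIcc t₁ t₂, y' t ≠ 0) (hle : ∀ t ∈ uIcc t₁ t₂, |x' t| ≤ κ * |y' t|) :
    |x t₂ - x t₁| ≤ κ * |y t₂ - y t₁| := by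
  wlog ht : t₁ ≤ t₂ generalizing t₁ t₂
  · rw [abs_sub_comm, abs_sub_comm (y t₂)]
    rw [uIcc_comm] at hx hy hy' hle
    exact this hx hy hy' hle (le_of_not_ge ht)
  rcases ht.eq_or_lt with rfl | hlt
  · simp
  rw [uIcc_of_le ht] at hx hy hy' hle
  obtain ⟨c, hc, hratio⟩ := exists_ratio_hasDerivAt_eq_ratio_slope x x' hlt
    (fun t ht => (hx t ht).continuousAt.continuousWithinAt)
    (fun t ht => hx t (Ioo_subset_Icc_self ht)) y y'
    (fun t ht => (hy t ht).continuousAt.continuousWithinAt)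
    (fun t ht => hy t (Ioo_subset_Icc_self ht))
  have hcI := Ioo_subset_Icc_self hc
  refine le_of_mul_le_mul_right ?_ (abs_pos.2 (hy' c hcI))
  calc |x t₂ - x t₁| * |y' c| = |y t₂ - y t₁| * |x' c| := by rw [← abs_mul, ← abs_mul, hratio]
    _ ≤ |y t₂ - y t₁| * (κ * |y' c|) := by gcongr; exact hle c hcI
    _ = κ * |y t₂ - y t₁| * |y' c| := by ring

theorem abs_add_abs_sub_of_mem_uIcc {p q r : ℝ} (hp : p ∈ uIcc 0 r) (hq : q ∈ uIcc p r) :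
    |p| + |q - p| = |q| := by
  rcases le_total 0 r with hr | hr
  · rw [uIcc_of_le hr] at hp
    rw [uIcc_of_le hp.2] at hq
    rw [abs_of_nonneg hp.1, abs_of_nonneg (sub_nonneg.2 hq.1), abs_of_nonneg (hp.1.trans hq.1)]
    ring
  · rw [uIcc_of_ge hr] at hp
    rw [uIcc_of_ge hp.1] at hq
    rw [abs_of_nonpos hp.2, abs_of_nonpos (sub_nonpos.2 hq.2), abs_of_nonpos (hq.2.trans hp.2)]
    ring

theorem abs_fst_sub_le_of_hasDerivAt {c : ℝ → ℝ × ℝ} {K t₁ t₂ : ℝ}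
    (hK : 0 ≤ K) (hc : ∀ t ∈ uIcc t₁ t₂, HasDerivAt c (X (c t)) t)
    (hpos : ∀ t ∈ uIcc t₁ t₂, 0 < b * (X (c t)).2)
    (hslope : ∀ t ∈ uIcc t₁ t₂, |(X (c t)).1| ≤ K * ‖c t‖ * |(X (c t)).2|)
    (hsmall : ∀ t ∈ uIcc t₁ t₂, K * ‖c t‖ ≤ 1) (hcone : |(c t₁).1| ≤ |(c t₁).2|)
    (hbetween : (c t₁).2 ∈ uIcc 0 (c t₂).2) :
    |(c t₂).1 - (c t₁).1| ≤ K * |(c t₂).2| * |(c t₂).2 - (c t₁).2| := by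
  have hx : ∀ t ∈ uIcc t₁ t₂, HasDerivAt (fun t => (c t).1) (X (c t)).1 t :=
    fun t ht => (hc t ht).fst
  have hy : ∀ t ∈ uIcc t₁ t₂, HasDerivAt (fun t => (c t).2) (X (c t)).2 t :=
    fun t ht => (hc t ht).snd
  have hne : ∀ t ∈ uIcc t₁ t₂, (X (c t)).2 ≠ 0 := fun t ht => right_ne_zero_of_mul (hpos t ht).ne'
  have hsub : ∀ t ∈ uIcc t₁ t₂, uIcc t₁ t ⊆ uIcc t₁ t₂ := fun t ht => uIcc_subset_uIcc_left ht
  have hmono : StrictMonoOn (fun t => b * (c t).2) (uIcc t₁ t₂) :=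
    strictMonoOn_of_hasDerivWithinAt_pos (convex_uIcc _ _)
      (fun t ht => ((hy t ht).const_mul b).continuousAt.continuousWithinAt)
      (fun t ht => ((hy t (interior_subset ht)).const_mul b).hasDerivWithinAt)
      (fun t ht => hpos t (interior_subset ht))
  have hheight : ∀ t ∈ uIcc t₁ t₂, (c t).2 ∈ uIcc (c t₁).2 (c t₂).2 := fun t ht => by
    have hbt := hmono.monotoneOn.mapsTo_uIcc ht
    rw [← image_const_mul_uIcc] at hbt
    obtain ⟨y, hy, hby⟩ := hbt
    rwa [← mul_left_cancel₀ (left_ne_zero_of_mul (hpos t ht).ne') hby]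
  have hcone' : ∀ t ∈ uIcc t₁ t₂, ‖c t‖ ≤ |(c t₂).2| := by
    intro t ht
    have hbound := abs_sub_le_mul_abs_sub_of_abs_deriv_le (κ := 1)
      (fun u hu => hx u (hsub t ht hu)) (fun u hu => hy u (hsub t ht hu))
      (fun u hu => hne u (hsub t ht hu)) fun u hu => (hslope u (hsub t ht hu)).trans
        (mul_le_mul_of_nonneg_right (hsmall u (hsub t ht hu)) (abs_nonneg _))
    have hheight_abs : |(c t).2| ≤ |(c t₂).2| := by
      simpa using abs_sub_left_of_mem_uIcc (uIcc_subset_uIcc_right hbetween (hheight t ht))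
    have hsplit := abs_add_abs_sub_of_mem_uIcc hbetween (hheight t ht)
    have htri := abs_sub_abs_le_abs_sub (c t).1 (c t₁).1
    exact max_le (by rw [Real.norm_eq_abs]; linarith) hheight_abs
  refine abs_sub_le_mul_abs_sub_of_abs_deriv_le hx hy hne fun t ht => (hslope t ht).trans ?_
  gcongr
  exact hcone' t ht

theorem exists_eventually_abs_fst_le (hb : b ≠ 0)
    (hX : DifferentiableAt ℝ X (0, 0)) (hX0 : X (0, 0) = (0, b)) :
    ∃ K, 0 ≤ K ∧ ∀ᶠ z in 𝓝 (0, 0),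
      0 < b * (X z).2 ∧ |(X z).1| ≤ K * ‖z‖ * |(X z).2| ∧ K * ‖z‖ ≤ 1 := by
  obtain ⟨C, hC, hbound⟩ := hX.isBigO_sub.exists_pos
  have hnorm : ∀ᶠ z : ℝ × ℝ in 𝓝 (0, 0), C / (|b| / 2) * ‖z‖ < 1 :=
    ContinuousAt.eventually_lt (by fun_prop) continuousAt_const (by simp)
  have hpos : ∀ᶠ z in 𝓝 (0, 0), 0 < b * (X z).2 :=
    continuousAt_const.eventually_lt (hX.continuousAt.snd.const_mul b)
      (by simpa [hX0] using mul_self_pos.2 hb)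
  have habs : ∀ᶠ z in 𝓝 (0, 0), |b| / 2 < |(X z).2| :=
    continuousAt_const.eventually_lt hX.continuousAt.snd.abs (by simpa [hX0] using hb)
  refine ⟨C / (|b| / 2), by positivity, ?_⟩
  filter_upwards [hnorm, hpos, habs, hbound.bound] with z hz hzpos hzabs hzC
  refine ⟨hzpos, ?_, hz.le⟩
  have hfst : |(X z).1| ≤ C * ‖z‖ := by
    have := (norm_fst_le _).trans hzC
    rwa [Prod.fst_sub, hX0, sub_zero, ← Prod.zero_eq_mk, sub_zero] at this
  calc |(X z).1| ≤ C * ‖z‖ := hfst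
    _ = C / (|b| / 2) * ‖z‖ * (|b| / 2) := by field_simp
    _ ≤ C / (|b| / 2) * ‖z‖ * |(X z).2| := by gcongr

/-- A flow box at the origin of a field whose value there is the vertical vector `(0, b)`,
parametrized so that its second coordinate measures the position of an orbit on the `x`-axis to
first order. -/
structure IsVerticalFlowBox (X : ℝ × ℝ → ℝ × ℝ) (b : ℝ)
    (F : OpenPartialHomeomorph (ℝ × ℝ) (ℝ × ℝ)) : Prop extends IsFlowBox X F where
  zero_mem_source : (0, 0) ∈ F.source
  apply_zero : F (0, 0) = (0, 0)
  exists_hasStrictFDerivAt : ∃ e : (ℝ × ℝ) ≃L[ℝ] ℝ × ℝ, (∀ q, e q = (q.2, b * q.1)) ∧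
    HasStrictFDerivAt F (e : ℝ × ℝ →L[ℝ] ℝ × ℝ) (0, 0)

theorem exists_isVerticalFlowBox (hb : b ≠ 0) (hX : ContDiffAt ℝ 1 X (0, 0))
    (hX0 : X (0, 0) = (0, b)) : ∃ F, IsVerticalFlowBox X b F := by
  obtain ⟨e, he⟩ := exists_continuousLinearEquiv_smul_add_smul (v := (0, b)) (w := (1, 0))
    (by simpa using hb)
  obtain ⟨F, hF, h0, hF0, hFe⟩ := exists_isFlowBox (h := fun s : ℝ => (s, (0 : ℝ))) (s₀ := 0) hX
    (hasStrictFDerivAt_id (0 : ℝ) |>.prodMk (hasStrictFDerivAt_const 0 0)) e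
    (by simp [he, hX0])
  exact ⟨F, hF, h0, hF0 _ h0, e, by simp [he, mul_comm], hFe⟩

namespace IsVerticalFlowBox

variable {F : OpenPartialHomeomorph (ℝ × ℝ) (ℝ × ℝ)}

theorem zero_mem_target (hF : IsVerticalFlowBox X b F) : (0, 0) ∈ F.target := by
  simpa only [hF.apply_zero] using F.map_source hF.zero_mem_source

theorem symm_apply_zero (hF : IsVerticalFlowBox X b F) : F.symm (0, 0) = (0, 0) := by
  simpa only [hF.apply_zero] using F.left_inv hF.zero_mem_source

theorem tendsto (hF : IsVerticalFlowBox X b F) : Tendsto F (𝓝 (0, 0)) (𝓝 (0, 0)) := by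
  simpa only [ContinuousAt, hF.apply_zero] using F.continuousAt hF.zero_mem_source

theorem tendsto_symm (hF : IsVerticalFlowBox X b F) : Tendsto F.symm (𝓝 (0, 0)) (𝓝 (0, 0)) := by
  simpa only [hF.apply_zero] using F.tendsto_symm hF.zero_mem_source

theorem exists_strictMonoOn_symm_snd (hF : IsVerticalFlowBox X b F) :
    ∃ U ∈ 𝓝 (0, 0), ∀ y, StrictMonoOn (fun x => (F.symm (x, y)).2) {x | (x, y) ∈ U} := by
  obtain ⟨e, he, hFe⟩ := hF.exists_hasStrictFDerivAt
  rw [← hF.symm_apply_zero] at hFe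
  have hsymm := F.hasStrictFDerivAt_symm hF.zero_mem_target hFe
  have h10 : e.symm (1, 0) = (0, 1) := by rw [e.symm_apply_eq, he, mul_zero]
  exact exists_mem_nhds_strictMonoOn_slice hsymm.snd (by simp [h10])

theorem exists_heightChart (hF : IsVerticalFlowBox X b F) (hb : b ≠ 0) :
    ∃ M : OpenPartialHomeomorph (ℝ × ℝ) (ℝ × ℝ), (0, 0) ∈ M.source ∧ M.source ⊆ F.source ∧
      (∀ p, M p = (p.2, (F p).2)) ∧
      ∀ s, StrictMonoOn (fun t => b * (F (t, s)).2) {t | (t, s) ∈ M.source} := by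
  obtain ⟨e, he, hFe⟩ := hF.exists_hasStrictFDerivAt
  obtain ⟨U, hU, hmono⟩ := exists_mem_nhds_strictMonoOn_slice (hFe.snd.const_mul b)
    (by simpa [he] using mul_self_pos.2 hb)
  have hder : HasStrictFDerivAt (fun p => (p.2, (F p).2)) (e : ℝ × ℝ →L[ℝ] ℝ × ℝ) (0, 0) :=
    (hasStrictFDerivAt_snd.prodMk hFe.snd).congr_fderiv (by ext <;> simp [he])
  obtain ⟨M, hM, h0, hMU, -⟩ := exists_openPartialHomeomorph_lipschitzOnWith_symm hder
    (inter_mem (F.open_source.mem_nhds hF.zero_mem_source) hU)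
  exact ⟨M, h0, fun p hp => (hMU hp).1, congrFun hM, fun s =>
    (hmono s).mono fun t ht => (hMU ht).2⟩

theorem exists_eventually_abs_fst_sub_le (hF : IsVerticalFlowBox X b F) (hb : b ≠ 0)
    (hX : DifferentiableAt ℝ X (0, 0)) (hX0 : X (0, 0) = (0, b)) :
    ∃ K, ∀ᶠ p : ℝ × ℝ × ℝ in 𝓝 (0, 0, 0), |(F (p.1, p.2.2)).1| ≤ |(F (p.1, p.2.2)).2| →
      (F (p.1, p.2.2)).2 ∈ uIcc 0 (F (p.2.1, p.2.2)).2 →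
      |(F (p.2.1, p.2.2)).1 - (F (p.1, p.2.2)).1| ≤
        K * |(F (p.2.1, p.2.2)).2| * |(F (p.2.1, p.2.2)).2 - (F (p.1, p.2.2)).2| := by
  obtain ⟨K, hK, hXK⟩ := exists_eventually_abs_fst_le hb hX hX0
  refine ⟨K, ?_⟩
  obtain ⟨ρ, hρ, hball⟩ := eventually_nhds_iff_ball.1 ((hF.tendsto.eventually hXK).and
    (F.open_source.eventually_mem hF.zero_mem_source))
  rw [← ball_prod_same] at hball
  filter_upwards [prod_mem_nhds (ball_mem_nhds (0 : ℝ) hρ)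
    (prod_mem_nhds (ball_mem_nhds (0 : ℝ) hρ) (ball_mem_nhds (0 : ℝ) hρ))]
    with ⟨t₁, t₂, s⟩ ⟨ht₁, ht₂, hs⟩
  have hsegment : ∀ t ∈ uIcc t₁ t₂, (t, s) ∈ ball (0 : ℝ) ρ ×ˢ ball (0 : ℝ) ρ := fun t ht =>
    ⟨(convex_ball (0 : ℝ) ρ).ordConnected.uIcc_subset ht₁ ht₂ ht, hs⟩
  exact abs_fst_sub_le_of_hasDerivAt hK
    (fun t ht => hF.hasDerivAt _ (hball _ (hsegment t ht)).2)
    (fun t ht => (hball _ (hsegment t ht)).1.1) (fun t ht => (hball _ (hsegment t ht)).1.2.1)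
    (fun t ht => (hball _ (hsegment t ht)).1.2.2)

theorem exists_eventually_mem_orbit (hF : IsVerticalFlowBox X b F) (hb : b ≠ 0)
    (hX : DifferentiableAt ℝ X (0, 0)) (hX0 : X (0, 0) = (0, b)) :
    ∃ K, ∀ U ∈ 𝓝 (0, 0), ∀ᶠ q : (ℝ × ℝ) × ℝ in 𝓝 ((0, 0), 0),
      |q.1.1| ≤ |q.1.2| → q.1.2 ∈ uIcc 0 q.2 →
      ∃ x, (x, q.2) ∈ U ∧ (F.symm (x, q.2)).2 = (F.symm q.1).2 ∧
        |x - q.1.1| ≤ K * |q.2| * |q.2 - q.1.2| := by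
  obtain ⟨K, hFK⟩ := hF.exists_eventually_abs_fst_sub_le hb hX hX0
  obtain ⟨M, h0, hMF, hM, -⟩ := hF.exists_heightChart hb
  refine ⟨K, fun U hU => ?_⟩
  have hM0 : M (0, 0) = (0, 0) := by rw [hM, hF.apply_zero]
  have hMsymm : Tendsto M.symm (𝓝 (0, 0)) (𝓝 (0, 0)) := by
    simpa only [hM0] using M.tendsto_symm h0
  have hstart : Tendsto (fun q : (ℝ × ℝ) × ℝ => F.symm q.1) (𝓝 ((0, 0), 0)) (𝓝 (0, 0)) :=
    hF.tendsto_symm.comp continuous_fst.continuousAt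
  have hheight : Tendsto (fun q : (ℝ × ℝ) × ℝ => ((F.symm q.1).2, q.2)) (𝓝 ((0, 0), 0))
      (𝓝 (0, 0)) := hstart.snd_nhds.prodMk_nhds continuous_snd.continuousAt
  -- The end point of the arc that follows the orbit through `q.1` up to height `q.2`.
  have hend : Tendsto (fun q : (ℝ × ℝ) × ℝ => M.symm ((F.symm q.1).2, q.2)) (𝓝 ((0, 0), 0))
      (𝓝 (0, 0)) := hMsymm.comp hheight
  filter_upwards [
    (hstart.fst_nhds.prodMk_nhds (hend.fst_nhds.prodMk_nhds hstart.snd_nhds)).eventually hFK,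
    (hF.tendsto.comp hend).eventually hU,
    hheight.eventually (M.open_target.eventually_mem (hM0 ▸ M.map_source h0)),
    continuous_fst.continuousAt.eventually (F.open_target.eventually_mem hF.zero_mem_target)]
    with ⟨z, y⟩ hbound hzU hzM hzF hcone hbetween
  have hMz := M.right_inv hzM
  rw [hM, Prod.mk.injEq] at hMz
  set p := M.symm ((F.symm z).2, y)
  have hFp : F p = ((F p).1, y) := Prod.ext rfl hMz.2
  have hps : p = (p.1, (F.symm z).2) := Prod.ext rfl hMz.1
  refine ⟨(F p).1, by rw [← hFp]; exact hzU, ?_, ?_⟩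
  · rw [← hFp, F.left_inv (hMF (M.map_target hzM)), hMz.1]
  · dsimp only at hbound
    rw [← hps, Prod.mk.eta, F.right_inv hzF, hMz.2] at hbound
    exact hbound hcone hbetween

end IsVerticalFlowBox

end Tangency

section SteepValley

/-- A valley with horizontal tangent at `0` that is nevertheless steeper there than any parabola:
its increments towards `y` dominate every multiple of `|y| * |y - y'|`. -/
structure IsSteepValley (v : ℝ → ℝ) : Prop where
  zero : v 0 = 0
  continuous : Continuous v
  hasStrictDerivAt : HasStrictDerivAt v 0 0
  mul_lt : ∀ C, ∀ᶠ y in 𝓝 0, ∀ y' ∈ uIcc 0 y, y' ≠ y → C * |y| * |y - y'| < v y - v y'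

variable {X : ℝ × ℝ → ℝ × ℝ} {a b : ℝ} {v : ℝ → ℝ}
  {F : OpenPartialHomeomorph (ℝ × ℝ) (ℝ × ℝ)}

theorem IsSteepValley.isValley (hv : IsSteepValley v) : IsValley v where
  zero := hv.zero
  continuousAt := .of_forall fun _ => hv.continuous.continuousAt
  lt := (hv.mul_lt 0).mono fun y hy y' hy' hne => by simpa using hy y' hy' hne

theorem eventually_nhds_zero_forall_mem_uIcc {p : ℝ × ℝ → Prop}
    (h : ∀ᶠ q in 𝓝 (0, 0), p q) : ∀ᶠ y in 𝓝 0, ∀ y' ∈ uIcc 0 y, p (y', y) := by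
  obtain ⟨ρ, hρ, hball⟩ := eventually_nhds_iff_ball.1 h
  rw [← ball_prod_same] at hball
  filter_upwards [ball_mem_nhds (0 : ℝ) hρ] with y hy y' hy'
  exact hball (y', y)
    ⟨(convex_ball (0 : ℝ) ρ).ordConnected.uIcc_subset (mem_ball_self hρ) hy hy', hy⟩

theorem IsVerticalFlowBox.eventually_fst_eq_iff {w : ℝ → ℝ} (hF : IsVerticalFlowBox X b F)
    (hw : Continuous w) (hw0 : w 0 = 0) : ∀ᶠ p in 𝓝 (0, 0),
      (F p).1 = w (F p).2 ↔ p.2 = (F.symm (w (F p).2, (F p).2)).2 := by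
  obtain ⟨U, hU, hmono⟩ := hF.exists_strictMonoOn_symm_snd
  have hcurve : Tendsto (fun z : ℝ × ℝ => (w z.2, z.2)) (𝓝 (0, 0)) (𝓝 (0, 0)) :=
    Continuous.tendsto' (by fun_prop) _ _ (by simp [hw0])
  filter_upwards [hF.tendsto.eventually hU, (hcurve.comp hF.tendsto).eventually hU,
    F.open_source.eventually_mem hF.zero_mem_source] with p hpU hcU hpF
  simpa [F.left_inv hpF] using ((hmono (F p).2).injOn.eq_iff hpU hcU).symm

theorem IsVerticalFlowBox.isValley_orbit (hF : IsVerticalFlowBox X b F) (hb : b ≠ 0)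
    (hX : DifferentiableAt ℝ X (0, 0)) (hX0 : X (0, 0) = (0, b)) (hv : IsSteepValley v)
    (ha : a ≠ 0) : IsValley fun y => (F.symm (a * v y, y)).2 / a := by
  have hvc := hv.continuous
  have hcurve : Tendsto (fun y => (a * v y, y)) (𝓝 0) (𝓝 (0, 0)) :=
    Continuous.tendsto' (by fun_prop) _ _ (by simp [hv.zero])
  refine ⟨by simp [hv.zero, hF.symm_apply_zero], ?_, ?_⟩
  · filter_upwards [hcurve.eventually (F.open_target.eventually_mem hF.zero_mem_target)] with y hy
    have hsymm : ContinuousAt (fun y => F.symm (a * v y, y)) y :=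
      (F.continuousAt_symm hy).comp (f := fun y => (a * v y, y)) (by fun_prop)
    exact hsymm.snd.div_const a
  · obtain ⟨K, hK⟩ := hF.exists_eventually_mem_orbit hb hX hX0
    obtain ⟨U, hU, hmono⟩ := hF.exists_strictMonoOn_symm_snd
    have hpair : Tendsto (fun q : ℝ × ℝ => ((a * v q.1, q.1), q.2)) (𝓝 (0, 0))
        (𝓝 ((0, 0), 0)) := Continuous.tendsto' (by fun_prop) _ _ (by simp [hv.zero])
    have hcone : ∀ᶠ y in 𝓝 0, |a * v y| ≤ |y| := by
      have := (hv.hasStrictDerivAt.hasDerivAt.const_mul a).isLittleO.bound one_pos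
      simpa [hv.zero] using this
    filter_upwards [eventually_nhds_zero_forall_mem_uIcc (hpair.eventually (hK U hU)),
      eventually_nhds_zero_forall_mem_uIcc (hcone.prod_inl_nhds (0 : ℝ)),
      hcurve.eventually hU, hv.mul_lt (K / |a|)] with y horbit hy_cone hyU hsteep y' hy' hne
    obtain ⟨x, hxU, hx, hdist⟩ := horbit y' hy' (hy_cone y' hy') hy'
    have hlt : x / a < v y := by
      have hincr : x / a - v y' ≤ K / |a| * |y| * |y - y'| :=
        calc x / a - v y' = (x - a * v y') / a := by field_simp
          _ ≤ |x - a * v y'| / |a| := (le_abs_self _).trans_eq (abs_div _ _)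
          _ ≤ K * |y| * |y - y'| / |a| := by gcongr
          _ = K / |a| * |y| * |y - y'| := by ring
      linarith [hsteep y' hy' hne]
    rw [← hx]
    rcases ha.lt_or_gt with ha | ha
    · rw [div_lt_div_right_of_neg ha]
      exact hmono y hyU hxU (by rwa [div_lt_iff_of_neg' ha] at hlt)
    · rw [div_lt_div_iff_of_pos_right ha]
      exact hmono y hxU hyU (by rwa [div_lt_iff₀' ha] at hlt)

theorem orbitallyEquivAt_const_of_tangent (hX : ContDiffAt ℝ 1 X (0, 0))
    (hX0 : X (0, 0) = (0, b)) (hb : b ≠ 0) (hv : IsSteepValley v) (ha : a ≠ 0) {δ : ℝ × ℝ → ℝ}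
    (hδ : ∀ᶠ z in 𝓝 (0, 0), δ z = 0 ↔ z.1 = a * v z.2) :
    OrbitallyEquivAt X δ (0, 0) (fun _ => (0, b)) δ (0, 0) := by
  obtain ⟨F, hF⟩ := exists_isVerticalFlowBox hb hX hX0
  obtain ⟨M, h0, -, hM, hmono⟩ := hF.exists_heightChart hb
  obtain ⟨η, hη0, hη⟩ := (hF.isValley_orbit hb (hX.differentiableAt one_ne_zero) hX0 hv
    ha).exists_orderIso_comp_eq hv.isValley
  let N := M.transHomeomorph ((Homeomorph.refl ℝ).prodCongr η.toHomeomorph)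
  have hN : ∀ p, N p = (p.2, η (F p).2) := fun p => by
    simp [N, hM]
  have hN0 : N (0, 0) = (0, 0) := by rw [hN, hF.apply_zero, hη0]
  have hNchart : IsOrbitChart (fun _ => (0, b)) N := by
    refine isOrbitChart_const_of_strictMonoOn hb (fun p _ => by rw [hN]) fun s t ht u hu htu => ?_
    have := hmono s ht hu htu
    simp only [hN]
    rcases hb.lt_or_gt with hb | hb
    · simpa [mul_lt_mul_left_of_neg hb] using this
    · simpa [mul_lt_mul_iff_right₀ hb] using this
  have hNt : Tendsto N (𝓝 (0, 0)) (𝓝 (0, 0)) := by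
    simpa only [ContinuousAt, hN0] using N.continuousAt h0
  have hcurve : ∀ᶠ p in 𝓝 (0, 0), δ (F p) = 0 ↔ δ (N p) = 0 := by
    filter_upwards [hF.tendsto.eventually hδ, hNt.eventually hδ, hF.tendsto.eventually
      ((continuous_snd.tendsto _).eventually hη),
      hF.eventually_fst_eq_iff (hv.continuous.const_mul a) (by simp [hv.zero])]
      with p hp hNp hηp hiff
    rw [hp, hNp, hiff, hN, hηp, mul_div_cancel₀ _ ha]
  simpa only [hF.apply_zero, hN0] using
    hF.isOrbitChart.orbitallyEquivAt hNchart hF.zero_mem_source h0 hcurve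

theorem orbitallyEquivAt_const_of_transverse {g : ℝ → ℝ} {m : ℝ}
    (hX : ContDiffAt ℝ 1 X (0, 0)) (hg0 : g 0 = 0) (hg : HasStrictDerivAt g m 0)
    (hXg : (X (0, 0)).1 ≠ m * (X (0, 0)).2) {δ : ℝ × ℝ → ℝ}
    (hδ : ∀ᶠ z in 𝓝 (0, 0), δ z = 0 ↔ z.1 = g z.2) :
    OrbitallyEquivAt X δ (0, 0) (fun _ => X (0, 0)) δ (0, 0) := by
  obtain ⟨F, hF, hF0, hF00, hFg⟩ :=
    exists_isOrbitChart_of_transverse_graph (by rwa [hg0]) hg (by rwa [hg0])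
  obtain ⟨N, hN, hN0, hN00, hNg⟩ :=
    exists_isOrbitChart_of_transverse_graph (X := fun _ => X (0, 0)) contDiffAt_const hg hXg
  rw [hg0] at hF00 hN00
  have hFt := F.continuousAt hF0
  have hNt := N.continuousAt hN0
  rw [ContinuousAt, hF00] at hFt
  rw [ContinuousAt, hN00] at hNt
  have hcurve : ∀ᶠ p in 𝓝 (0, 0), δ (F p) = 0 ↔ δ (N p) = 0 := by
    filter_upwards [hFt.eventually hδ, hNt.eventually hδ, hFg, hNg] with p hFp hNp hFgp hNgp
    rw [hFp, hNp, hFgp, hNgp]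
  simpa only [hF00, hN00] using hF.orbitallyEquivAt hN hF0 hN0 hcurve

theorem orbitallyEquivAt_const_of_isSteepValley (hX : ContDiffAt ℝ 1 X (0, 0))
    (hX0 : X (0, 0) ≠ 0) (hv : IsSteepValley v) (ha : a ≠ 0)
    {δ : ℝ × ℝ → ℝ} (hδ : ∀ᶠ z in 𝓝 (0, 0), δ z = 0 ↔ z.1 = a * v z.2) :
    OrbitallyEquivAt X δ (0, 0) (fun _ => X (0, 0)) δ (0, 0) := by
  by_cases hfst : (X (0, 0)).1 = 0
  · have hvertical : X (0, 0) = (0, (X (0, 0)).2) := Prod.ext hfst rfl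
    have hsnd : (X (0, 0)).2 ≠ 0 := fun h => hX0 (Prod.ext hfst h)
    rw [hvertical]
    exact orbitallyEquivAt_const_of_tangent hX hvertical hsnd hv ha hδ
  · exact orbitallyEquivAt_const_of_transverse hX (by simp [hv.zero])
      (hv.hasStrictDerivAt.const_mul a) (by simpa using hfst) hδ

theorem isSteepValley_abs_rpow {p : ℝ} (hp₁ : 1 < p) (hp₂ : p < 2) :
    IsSteepValley fun y => |y| ^ p where
  zero := by simp [(zero_lt_one.trans hp₁).ne']
  continuous := continuous_abs.rpow_const fun _ => .inr (zero_lt_one.trans hp₁).le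
  hasStrictDerivAt := by
    have hdiff : ContDiff ℝ 1 fun y : ℝ => |y| ^ p := contDiff_norm_rpow hp₁
    simpa using hdiff.contDiffAt.hasStrictDerivAt' (hasDerivAt_abs_rpow 0 hp₁) one_ne_zero
  mul_lt := by
    intro C
    have hsmall : ∀ᶠ y : ℝ in 𝓝 0, C * |y| ^ (2 - p) < 1 := by
      have hcont : Continuous fun y : ℝ => C * |y| ^ (2 - p) :=
        (continuous_abs.rpow_const fun _ => .inr (sub_pos.2 hp₂).le).const_mul C
      exact hcont.continuousAt.eventually_lt continuousAt_const (by simp [(sub_pos.2 hp₂).ne'])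
    filter_upwards [hsmall] with y hy y' hy' hne
    have habs : |y'| + |y - y'| = |y| := abs_add_abs_sub_of_mem_uIcc hy' right_mem_uIcc
    have hdist : 0 < |y - y'| := abs_pos.2 (sub_ne_zero.2 hne.symm)
    have hy'y : |y'| ≤ |y| := by linarith
    have hy0 : 0 < |y| := by linarith [abs_nonneg y']
    have hsplit (x : ℝ) (hx : 0 ≤ x) : x * x ^ (p - 1) = x ^ p := by
      rw [← Real.rpow_one_add' hx (by linarith), add_sub_cancel]
    calc C * |y| * |y - y'| = C * |y| ^ (2 - p) * (|y| ^ (p - 1) * |y - y'|) := by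
          rw [← mul_assoc, mul_assoc C (_ ^ _), ← Real.rpow_add hy0,
            show 2 - p + (p - 1) = 1 by ring, Real.rpow_one]
      _ < |y| ^ (p - 1) * |y - y'| := mul_lt_of_lt_one_left (by positivity) hy
      _ = |y| ^ p - |y'| * |y| ^ (p - 1) := by
          rw [← hsplit _ hy0.le]; linear_combination |y| ^ (p - 1) * habs
      _ ≤ |y| ^ p - |y'| * |y'| ^ (p - 1) := by
          gcongr
      _ = |y| ^ p - |y'| ^ p := by rw [hsplit _ (abs_nonneg y')]

end SteepValley

section ImpasseCurve

theorem surjective_pow_of_odd {n : ℕ} (hn : Odd n) : Function.Surjective fun x : ℝ => x ^ n := by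
  have htop : Tendsto (fun x : ℝ => x ^ n) atTop atTop := tendsto_pow_atTop hn.pos.ne'
  have hbot : Tendsto (fun x : ℝ => x ^ n) atBot atBot := by
    simpa [hn.neg_pow, Function.comp_def] using
      tendsto_neg_atTop_atBot.comp (htop.comp tendsto_neg_atBot_atTop)
  exact (continuous_pow n).surjective htop hbot

theorem exists_pow_three_add_mul_pow_four_eq_zero_iff {ε : ℝ} (hε : ε ≠ 0) :
    ∃ a : ℝ, a ≠ 0 ∧ ∀ x y : ℝ, x ^ 3 + ε * y ^ 4 = 0 ↔ x = a * |y| ^ (4 / 3 : ℝ) := by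
  have hodd : Odd 3 := by decide
  obtain ⟨a, ha⟩ : ∃ a : ℝ, a ^ 3 = -ε := surjective_pow_of_odd hodd (-ε)
  have hpow (y : ℝ) : (|y| ^ (4 / 3 : ℝ)) ^ 3 = y ^ 4 := by
    rw [← Real.rpow_mul_natCast (abs_nonneg y), ← Even.pow_abs (by decide : Even 4),
      ← Real.rpow_natCast]
    norm_num
  refine ⟨a, ?_, fun x y => ?_⟩
  · rintro rfl
    exact hε (by simpa using ha)
  · rw [← hodd.pow_inj (a := x), mul_pow, hpow, ha, neg_mul, eq_neg_iff_add_eq_zero]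

end ImpasseCurve

end ConstrainedSystem

open ConstrainedSystem

theorem E6_case_general {ε : ℝ} (hε : ε ≠ 0) {X : ℝ × ℝ → ℝ × ℝ} (hX : ContDiffAt ℝ 1 X (0, 0))
    (hX0 : X (0, 0) ≠ 0) :
    OrbitallyEquivAt X (fun z => z.1 ^ 3 + ε * z.2 ^ 4) (0, 0)
      (fun _ => X (0, 0)) (fun z => z.1 ^ 3 + ε * z.2 ^ 4) (0, 0) := by
  obtain ⟨a, ha, hcurve⟩ := exists_pow_three_add_mul_pow_four_eq_zero_iff hε
  exact orbitallyEquivAt_const_of_isSteepValley hX hX0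
    (isSteepValley_abs_rpow (p := 4 / 3) (by norm_num) (by norm_num)) ha
    (.of_forall fun z => hcurve z.1 z.2)

/-- (`E₆`-type impasse curve.)
If `δ(x,y) = x³ + ε·y⁴` and `X = (P,Q)` is real-analytic near the origin with
`(P(0,0), Q(0,0)) ≠ (0,0)`, then without further assumptions on the Taylor expansion of `X`,
`(X, δ)` is orientation-preserving `C⁰`-orbitally equivalent at the origin to the system with
constant adjoint vector field `(P(0,0), Q(0,0))`. -/
theorem E6_case (ε : ℝ) (hε : ε = 1 ∨ ε = -1)
    (P Q : ℝ × ℝ → ℝ)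
    (hP : AnalyticAt ℝ P (0, 0)) (hQ : AnalyticAt ℝ Q (0, 0))
    (hX0 : (P (0, 0), Q (0, 0)) ≠ ((0 : ℝ), (0 : ℝ))) :
    OrbitallyEquivAt (fun z => (P z, Q z))
      (fun z => z.1 ^ 3 + ε * z.2 ^ 4) (0, 0)
      (fun _ => (P (0, 0), Q (0, 0)))
      (fun z => z.1 ^ 3 + ε * z.2 ^ 4) (0, 0) := by
  have hε0 : ε ≠ 0 := by rcases hε with rfl | rfl <;> norm_num
  exact E6_case_general hε0 (hP.contDiffAt.prodMk hQ.contDiffAt) hX0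
end

section
/- Let δ(x, y) = x³ + y⁵ (an E₈-type singular impasse curve). Let X = (P, Q) be real-analytic on a neighborhood of the origin in ℝ² with (P(0,0), Q(0,0)) ≠ (0, 0). Then, without any further assumption on the Taylor expansion of X, the constrained system (X, δ) is orientation-preserving C⁰-orbitally equivalent at (0, 0) to the constrained system (Y, δ), where Y is the constant vector field Y ≡ (P(0,0), Q(0,0)). -/
/-!
The orbits of `X` cross the impasse curve `{δ = 0}` topologically: near the origin the sign of `δ`
along an orbit through a point of the curve changes there, always in the same direction, although
an orbit may well be tangent to the curve at its singular point. On `x ^ m + y ^ n = 0` this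
follows by giving `x` and `y` the weights `n` and `m`, which shows what the leading term of the
derivative of `δ` along `X` is. Hence short orbits meet the curve at most once, the curve is a
topological cross-section, and the flow `φ` of `X` restricted to it is a homeomorphism from (curve)
`×` (time) onto a neighborhood of the origin. The same holds for the flow `ψ` of any other such
field `Y`, and `φ (ζ, t) ↦ ψ (ζ, t)`, for `ζ` on the curve, is the required equivalence.
-/

open Set Filter Topology Metric Asymptotics
open scoped NNReal

/-! ### Functions crossing zero upwards -/

/-- `h` crosses zero upwards at `t₀`: near `t₀`, its sign is that of `t - t₀`. -/
def IsUpcrossing (h : ℝ → ℝ) (t₀ : ℝ) : Prop :=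
  ∀ᶠ t in 𝓝 t₀, SignType.sign (h t) = SignType.sign (t - t₀)

namespace IsUpcrossing

variable {h : ℝ → ℝ} {t₀ : ℝ}

theorem eventually_left (hh : IsUpcrossing h t₀) : ∀ᶠ t in 𝓝[<] t₀, h t < 0 := by
  filter_upwards [nhdsWithin_le_nhds hh, self_mem_nhdsWithin] with t ht (hlt : t < t₀)
  rwa [sign_neg (sub_neg.2 hlt), sign_eq_neg_one_iff] at ht

theorem eventually_right (hh : IsUpcrossing h t₀) : ∀ᶠ t in 𝓝[>] t₀, 0 < h t := by
  filter_upwards [nhdsWithin_le_nhds hh, self_mem_nhdsWithin] with t ht (hlt : t₀ < t)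
  rwa [sign_pos (sub_pos.2 hlt), sign_eq_one_iff] at ht

end IsUpcrossing

theorem not_lt_of_forall_zero_isUpcrossing {h : ℝ → ℝ} {a b : ℝ}
    (hc : ContinuousOn h (Icc a b)) (hup : ∀ t ∈ Icc a b, h t = 0 → IsUpcrossing h t)
    (ha : h a = 0) (hb : h b = 0) : ¬ a < b := by
  intro hab
  have hpos : Icc a b ⊆ {t | 0 ≤ h t} := by
    refine IsClosed.Icc_subset_of_forall_mem_nhdsWithin ?_ ha.ge fun t ht ↦ ?_
    · rw [inter_comm]
      exact hc.preimage_isClosed_of_isClosed isClosed_Icc isClosed_Ici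
    · have hmem := Ico_subset_Icc_self ht.2
      rcases (show 0 ≤ h t from ht.1).eq_or_lt with h0 | h0
      · exact ((hup t hmem h0.symm).eventually_right).mono fun _ ↦ le_of_lt
      · have hle : 𝓝[>] t ≤ 𝓝[Icc a b] t :=
          nhdsWithin_le_of_mem <|
            mem_of_superset (Icc_mem_nhdsGT ht.2.2) (Icc_subset_Icc_left ht.2.1)
        exact (((hc t hmem).mono_left hle).eventually (lt_mem_nhds h0)).mono fun _ ↦ le_of_lt
  obtain ⟨t, hneg, ht⟩ :=
    (((hup b (right_mem_Icc.2 hab.le) hb).eventually_left).and (Ioo_mem_nhdsLT hab)).exists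
  exact (hpos (Ioo_subset_Icc_self ht)).not_gt hneg

theorem eq_of_forall_zero_isUpcrossing {h : ℝ → ℝ} {J : Set ℝ} (hJ : J.OrdConnected)
    (hc : ContinuousOn h J) (hup : ∀ t ∈ J, h t = 0 → IsUpcrossing h t) {a b : ℝ}
    (ha : a ∈ J) (hb : b ∈ J) (ha0 : h a = 0) (hb0 : h b = 0) : a = b := by
  have not_lt : ∀ {a b}, a ∈ J → b ∈ J → h a = 0 → h b = 0 → ¬ a < b := fun ha hb ↦
    not_lt_of_forall_zero_isUpcrossing (hc.mono (hJ.out ha hb))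
      fun t ht ↦ hup t (hJ.out ha hb ht)
  exact le_antisymm (le_of_not_gt (not_lt hb ha hb0 ha0)) (le_of_not_gt (not_lt ha hb ha0 hb0))

/-- A topological implicit function theorem: the zeros of `h` near `x₀` meet every nearby fibre. -/
theorem IsUpcrossing.nhds_le_map_fst {α : Type*} [TopologicalSpace α] {h : α × ℝ → ℝ}
    {x₀ : α × ℝ} (hc : ∀ᶠ x in 𝓝 x₀, ContinuousAt h x)
    (hup : IsUpcrossing (fun t ↦ h (x₀.1, t)) x₀.2) :
    𝓝 x₀.1 ≤ map Prod.fst (𝓝[{x | h x = 0}] x₀) := by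
  intro A hA
  obtain ⟨V, hV, W, hW, hVW⟩ := mem_nhds_prod_iff.1 <|
    (mem_nhdsWithin_iff_eventually.1 hA).and hc
  obtain ⟨a, b, ht₀, hab⟩ := mem_nhds_iff_exists_Ioo_subset.1 hW
  obtain ⟨t₁, hneg, ht₁⟩ := (hup.eventually_left.and (Ioo_mem_nhdsLT ht₀.1)).exists
  obtain ⟨t₂, hpos, ht₂⟩ := (hup.eventually_right.and (Ioo_mem_nhdsGT ht₀.2)).exists
  have hW' : Icc t₁ t₂ ⊆ W := (Icc_subset_Ioo ht₁.1 ht₂.2).trans hab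
  have ht : t₁ ≤ t₂ := (ht₁.2.trans ht₂.1).le
  have hcont : ∀ z ∈ V, ∀ t ∈ Icc t₁ t₂, ContinuousAt h (z, t) := fun z hz t ht ↦
    (hVW ⟨hz, hW' ht⟩).2
  have hslice : ∀ t ∈ Icc t₁ t₂, ContinuousAt (fun z ↦ h (z, t)) x₀.1 := fun t ht ↦
    ContinuousAt.comp (f := (·, t)) (hcont _ (mem_of_mem_nhds hV) t ht) (by fun_prop)
  filter_upwards [hV, (hslice t₁ (left_mem_Icc.2 ht)).eventually (gt_mem_nhds hneg),
    (hslice t₂ (right_mem_Icc.2 ht)).eventually (lt_mem_nhds hpos)] with z hz hz₁ hz₂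
  have hfib : ContinuousOn (fun t ↦ h (z, t)) (Icc t₁ t₂) := fun t ht ↦
    (ContinuousAt.comp (f := (z, ·)) (hcont z hz t ht) (by fun_prop)).continuousWithinAt
  obtain ⟨t, htI, hzero⟩ := intermediate_value_Icc ht hfib ⟨hz₁.le, hz₂.le⟩
  exact (hVW ⟨hz, hW' htI⟩).1 hzero

/-! ### Integral curves and local flows -/

theorem ball_prod_Ioo_eq_ball {α : Type*} [PseudoMetricSpace α] (p : α) (r : ℝ) :
    ball p r ×ˢ Ioo (-r) r = ball (p, (0 : ℝ)) r := by
  rw [← ball_prod_same, Real.ball_eq_Ioo, zero_sub, zero_add]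

theorem zero_mem_Ioo_of_mem {t ρ : ℝ} (ht : t ∈ Ioo (-ρ) ρ) : (0 : ℝ) ∈ Ioo (-ρ) ρ := by
  have := ht.1.trans ht.2
  constructor <;> linarith

section IntegralCurve

variable {E : Type*} [NormedAddCommGroup E] [NormedSpace ℝ E]

theorem eqOn_Icc_of_isIntegralCurveOn_of_eq_left {v : ℝ → E → E} {s : ℝ → Set E} {K : ℝ≥0}
    {a b : ℝ} {c d : ℝ → E} (hv : ∀ t ∈ Icc a b, LipschitzOnWith K (v t) (s t))
    (hc : IsIntegralCurveOn c v (Icc a b)) (hcs : ∀ t ∈ Icc a b, c t ∈ s t)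
    (hd : IsIntegralCurveOn d v (Icc a b)) (hds : ∀ t ∈ Icc a b, d t ∈ s t)
    (h : c a = d a) : EqOn c d (Icc a b) := by
  have hderiv {e : ℝ → E} (he : IsIntegralCurveOn e v (Icc a b)) :
      ∀ t ∈ Ico a b, HasDerivWithinAt e (v t (e t)) (Ici t) t := fun t ht ↦
    (he t (Ico_subset_Icc_self ht)).mono_of_mem_nhdsWithin (Icc_mem_nhdsGE_of_mem ht)
  exact ODE_solution_unique_of_mem_Icc_right (fun t ht ↦ hv t (Ico_subset_Icc_self ht))
    hc.continuousOn (hderiv hc) (fun t ht ↦ hcs t (Ico_subset_Icc_self ht))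
    hd.continuousOn (hderiv hd) (fun t ht ↦ hds t (Ico_subset_Icc_self ht)) h

theorem eqOn_Icc_of_isIntegralCurveOn_of_eq_right {v : ℝ → E → E} {s : ℝ → Set E} {K : ℝ≥0}
    {a b : ℝ} {c d : ℝ → E} (hv : ∀ t ∈ Icc a b, LipschitzOnWith K (v t) (s t))
    (hc : IsIntegralCurveOn c v (Icc a b)) (hcs : ∀ t ∈ Icc a b, c t ∈ s t)
    (hd : IsIntegralCurveOn d v (Icc a b)) (hds : ∀ t ∈ Icc a b, d t ∈ s t)
    (h : c b = d b) : EqOn c d (Icc a b) := by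
  have hderiv {e : ℝ → E} (he : IsIntegralCurveOn e v (Icc a b)) :
      ∀ t ∈ Ioc a b, HasDerivWithinAt e (v t (e t)) (Iic t) t := fun t ht ↦
    (he t (Ioc_subset_Icc_self ht)).mono_of_mem_nhdsWithin (Icc_mem_nhdsLE_of_mem ht)
  exact ODE_solution_unique_of_mem_Icc_left (fun t ht ↦ hv t (Ioc_subset_Icc_self ht))
    hc.continuousOn (hderiv hc) (fun t ht ↦ hcs t (Ioc_subset_Icc_self ht))
    hd.continuousOn (hderiv hd) (fun t ht ↦ hds t (Ioc_subset_Icc_self ht)) h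

theorem eqOn_of_isIntegralCurveOn {v : ℝ → E → E} {s : ℝ → Set E} {K : ℝ≥0} {J : Set ℝ}
    {t₀ : ℝ} {c d : ℝ → E} (hJ : J.OrdConnected) (ht₀ : t₀ ∈ J)
    (hv : ∀ t ∈ J, LipschitzOnWith K (v t) (s t))
    (hc : IsIntegralCurveOn c v J) (hcs : ∀ t ∈ J, c t ∈ s t)
    (hd : IsIntegralCurveOn d v J) (hds : ∀ t ∈ J, d t ∈ s t) (h : c t₀ = d t₀) :
    EqOn c d J := by
  intro t ht
  rcases le_total t₀ t with hle | hle
  · have hI := hJ.out ht₀ ht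
    exact eqOn_Icc_of_isIntegralCurveOn_of_eq_left (fun τ hτ ↦ hv τ (hI hτ))
      (hc.mono hI) (fun τ hτ ↦ hcs τ (hI hτ)) (hd.mono hI) (fun τ hτ ↦ hds τ (hI hτ)) h
      (right_mem_Icc.2 hle)
  · have hI := hJ.out ht ht₀
    exact eqOn_Icc_of_isIntegralCurveOn_of_eq_right (fun τ hτ ↦ hv τ (hI hτ))
      (hc.mono hI) (fun τ hτ ↦ hcs τ (hI hτ)) (hd.mono hI) (fun τ hτ ↦ hds τ (hI hτ)) h
      (left_mem_Icc.2 hle)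

theorem isIntegralCurveOn_add_right {X : E → E} {I : Set ℝ} {c : ℝ → E}
    (hc : IsIntegralCurveOn c (fun _ ↦ X) I) (u : ℝ) :
    IsIntegralCurveOn (fun t ↦ c (t + u)) (fun _ ↦ X) ((· + u) ⁻¹' I) := by
  refine (hc.comp_add u).mono fun t ht ↦ ?_
  simpa only [mem_vadd_set_iff_neg_vadd_mem, neg_neg, vadd_eq_add, add_comm u] using
    mem_preimage.1 ht

/-- The orbits of `X` through `z` cross the hypersurface `{f = 0}` at `z` from `{f < 0}` to
`{0 < f}`. No transversality is asked for, so this makes sense at singular points of `{f = 0}`. -/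
def CrossesUpwardAt (X : E → E) (f : E → ℝ) (z : E) : Prop :=
  ∀ c : ℝ → E, c 0 = z → IsIntegralCurveAt c (fun _ ↦ X) 0 → IsUpcrossing (fun t ↦ f (c t)) 0

theorem CrossesUpwardAt.isUpcrossing {X : E → E} {f : E → ℝ} {c : ℝ → E} {t₀ : ℝ}
    (h : CrossesUpwardAt X f (c t₀)) (hc : IsIntegralCurveAt c (fun _ ↦ X) t₀) :
    IsUpcrossing (fun t ↦ f (c t)) t₀ := by
  have hshift := h (fun t ↦ c (t + t₀)) (by simp)
    (by simpa [Function.comp_def] using hc.comp_add t₀)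
  have hsub : Tendsto (fun t : ℝ ↦ t - t₀) (𝓝 t₀) (𝓝 0) := by
    simpa using (continuous_sub_right t₀).tendsto t₀
  filter_upwards [hsub.eventually hshift] with t ht
  simpa using ht

/-- `φ` is a flow of `X`, defined on the ball of radius `ρ` about `p` for times in `(-ρ, ρ)` and
with orbits in `s`. -/
structure IsLocalFlow (X : E → E) (s : Set E) (p : E) (ρ : ℝ) (φ : E × ℝ → E) : Prop where
  continuousOn : ContinuousOn φ (ball p ρ ×ˢ Ioo (-ρ) ρ)
  mem : ∀ z ∈ ball p ρ, ∀ t ∈ Ioo (-ρ) ρ, φ (z, t) ∈ s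
  apply_zero : ∀ z ∈ ball p ρ, φ (z, 0) = z
  isIntegralCurveOn : ∀ z ∈ ball p ρ,
    IsIntegralCurveOn (fun t ↦ φ (z, t)) (fun _ ↦ X) (Ioo (-ρ) ρ)

theorem exists_isLocalFlow [CompleteSpace E] {X : E → E} {s : Set E} {p : E}
    (hX : ContDiffAt ℝ 1 X p) (hs : s ∈ 𝓝 p) : ∃ ρ > 0, ∃ φ, IsLocalFlow X s p ρ φ := by
  obtain ⟨ε, hε, a, r, L, K, hr, hpl⟩ := IsPicardLindelof.of_contDiffAt_one hX
  obtain ⟨φ, hφ, hcont⟩ :=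
    (hpl 0).exists_forall_mem_closedBall_eq_hasDerivWithinAt_continuousOn
  simp only [zero_sub, zero_add] at hφ hcont
  have hdom : closedBall p r ×ˢ Icc (-ε) ε ∈ 𝓝 (p, (0 : ℝ)) :=
    prod_mem_nhds (closedBall_mem_nhds p hr) (Icc_mem_nhds (neg_lt_zero.2 hε) hε)
  have hφp : φ (p, 0) = p := (hφ p (mem_closedBall_self r.2)).1
  have hs' : φ ⁻¹' s ∈ 𝓝 (p, (0 : ℝ)) :=
    (hcont.continuousAt hdom).preimage_mem_nhds (hφp.symm ▸ hs)
  obtain ⟨ρ, hρ, hball⟩ := Metric.mem_nhds_iff.1 (inter_mem hdom hs')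
  rw [← ball_prod_Ioo_eq_ball] at hball
  have hsub : ∀ z ∈ ball p ρ, ∀ t ∈ Ioo (-ρ) ρ, z ∈ closedBall p r ∧ t ∈ Icc (-ε) ε :=
    fun z hz t ht ↦ mem_prod.1 (hball (mk_mem_prod hz ht)).1
  have h0 : (0 : ℝ) ∈ Ioo (-ρ) ρ := ⟨neg_lt_zero.2 hρ, hρ⟩
  refine ⟨ρ, hρ, φ, hcont.mono fun x hx ↦ (hball hx).1, fun z hz t ht ↦ (hball ⟨hz, ht⟩).2,
    fun z hz ↦ (hφ z (hsub z hz 0 h0).1).1, fun z hz t ht ↦ ?_⟩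
  exact ((hφ z (hsub z hz t ht).1).2 t (hsub z hz t ht).2).mono fun τ hτ ↦ (hsub z hz τ hτ).2

namespace IsLocalFlow

variable {X : E → E} {s : Set E} {p : E} {ρ : ℝ} {φ : E × ℝ → E} {K : ℝ≥0}

theorem isIntegralCurveAt (hφ : IsLocalFlow X s p ρ φ) {z : E} (hz : z ∈ ball p ρ) {t : ℝ}
    (ht : t ∈ Ioo (-ρ) ρ) : IsIntegralCurveAt (fun t ↦ φ (z, t)) (fun _ ↦ X) t :=
  (hφ.isIntegralCurveOn z hz).isIntegralCurveAt (isOpen_Ioo.mem_nhds ht)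

theorem continuousAt (hφ : IsLocalFlow X s p ρ φ) {z : E} (hz : z ∈ ball p ρ) {t : ℝ}
    (ht : t ∈ Ioo (-ρ) ρ) : ContinuousAt φ (z, t) :=
  hφ.continuousOn.continuousAt (prod_mem_nhds (isOpen_ball.mem_nhds hz) (isOpen_Ioo.mem_nhds ht))

theorem flow_flow (hφ : IsLocalFlow X s p ρ φ) (hs : LipschitzOnWith K X s) {z : E}
    (hz : z ∈ ball p ρ) {t u : ℝ} (ht : t ∈ Ioo (-ρ) ρ) (hzt : φ (z, t) ∈ ball p ρ)
    (hu : u ∈ Ioo (-ρ) ρ) (htu : u + t ∈ Ioo (-ρ) ρ) : φ (φ (z, t), u) = φ (z, u + t) := by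
  let J := Ioo (-ρ) ρ ∩ (· + t) ⁻¹' Ioo (-ρ) ρ
  have hJ : J.OrdConnected := ordConnected_Ioo.inter <|
    ordConnected_Ioo.preimage_mono (add_left_mono)
  refine eqOn_of_isIntegralCurveOn hJ (t₀ := 0)
    ⟨zero_mem_Ioo_of_mem ht, by simpa using ht⟩ (fun _ _ ↦ hs)
    ((hφ.isIntegralCurveOn _ hzt).mono inter_subset_left) (fun τ hτ ↦ hφ.mem _ hzt τ hτ.1)
    ((isIntegralCurveOn_add_right (hφ.isIntegralCurveOn z hz) t).mono inter_subset_right)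
    (fun τ hτ ↦ hφ.mem z hz _ hτ.2) ?_ ⟨hu, htu⟩
  simp [hφ.apply_zero _ hzt]

theorem flow_flow_neg (hφ : IsLocalFlow X s p ρ φ) (hs : LipschitzOnWith K X s) {z : E}
    (hz : z ∈ ball p ρ) {t : ℝ} (ht : t ∈ Ioo (-ρ) ρ) (hzt : φ (z, t) ∈ ball p ρ) :
    φ (φ (z, t), -t) = z := by
  rw [hφ.flow_flow hs hz ht hzt (neg_mem_Ioo_iff.2 (by simpa using ht))
    (by rw [neg_add_cancel]; exact zero_mem_Ioo_of_mem ht), neg_add_cancel, hφ.apply_zero z hz]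

end IsLocalFlow

end IntegralCurve

/-! ### Flow boxes -/

section FlowBox

variable {E α : Type*} [NormedAddCommGroup E] [NormedSpace ℝ E] [TopologicalSpace α]

/-- `F` is a flow box of `X` around the set `Z`: it identifies the product of a parameter space
`S` and the time interval `(-r, r)` with an open set, in such a way that the lines `{z} × (-r, r)`
are orbits meeting `Z` exactly at time `0`. The field `map_nhdsWithin_eq` says that `F` is
continuous and open. -/
structure IsFlowBox (X : E → E) (Z : Set E) (S : Set α) (r : ℝ) (F : α × ℝ → E) : Prop where
  injOn : InjOn F (S ×ˢ Ioo (-r) r)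
  map_nhdsWithin_eq : ∀ x ∈ S ×ˢ Ioo (-r) r, map F (𝓝[S ×ˢ Ioo (-r) r] x) = 𝓝 (F x)
  isIntegralCurveOn : ∀ z ∈ S, IsIntegralCurveOn (fun t ↦ F (z, t)) (fun _ ↦ X) (Ioo (-r) r)
  mem_iff : ∀ z ∈ S, ∀ t ∈ Ioo (-r) r, F (z, t) ∈ Z ↔ t = 0
  lipschitzOnWith : ∃ K, LipschitzOnWith K X (F '' S ×ˢ Ioo (-r) r)

namespace IsFlowBox

variable {X : E → E} {Z : Set E} {S : Set α} {r : ℝ} {F : α × ℝ → E}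

theorem isOpen_image (hF : IsFlowBox X Z S r F) : IsOpen (F '' S ×ˢ Ioo (-r) r) := by
  refine isOpen_iff_mem_nhds.2 (forall_mem_image.2 fun x hx ↦ ?_)
  rw [← hF.map_nhdsWithin_eq x hx]
  exact image_mem_map self_mem_nhdsWithin

theorem inter_image_eq (hF : IsFlowBox X Z S r F) (hr : 0 < r) :
    Z ∩ F '' S ×ˢ Ioo (-r) r = (fun z ↦ F (z, 0)) '' S := by
  have h0 : (0 : ℝ) ∈ Ioo (-r) r := ⟨neg_lt_zero.2 hr, hr⟩
  ext w
  constructor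
  · rintro ⟨hw, ⟨z, t⟩, ⟨hz, ht⟩, rfl⟩
    obtain rfl := (hF.mem_iff z hz t ht).1 hw
    exact mem_image_of_mem _ hz
  · rintro ⟨z, hz, rfl⟩
    exact ⟨(hF.mem_iff z hz 0 h0).2 rfl, mem_image_of_mem F (mk_mem_prod hz h0)⟩

theorem eq_apply_add_sub (hF : IsFlowBox X Z S r F) {J : Set ℝ} (hJ : J.OrdConnected)
    {c : ℝ → E} (hc : IsIntegralCurveOn c (fun _ ↦ X) J)
    (hmem : ∀ t ∈ J, c t ∈ F '' S ×ˢ Ioo (-r) r) {t₀ u : ℝ} {z : α} (ht₀ : t₀ ∈ J)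
    (hz : z ∈ S) (hu : u ∈ Ioo (-r) r) (h : c t₀ = F (z, u)) {t : ℝ} (ht : t ∈ J)
    (htu : t + (u - t₀) ∈ Ioo (-r) r) : c t = F (z, t + (u - t₀)) := by
  obtain ⟨K, hK⟩ := hF.lipschitzOnWith
  let J' := J ∩ (· + (u - t₀)) ⁻¹' Ioo (-r) r
  have hJ' : J'.OrdConnected := hJ.inter (ordConnected_Ioo.preimage_mono add_left_mono)
  refine eqOn_of_isIntegralCurveOn (t₀ := t₀) hJ' ⟨ht₀, by rwa [mem_preimage, add_sub_cancel]⟩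
    (fun _ _ ↦ hK) (hc.mono inter_subset_left) (fun τ hτ ↦ hmem τ hτ.1)
    ((isIntegralCurveOn_add_right (hF.isIntegralCurveOn z hz) (u - t₀)).mono inter_subset_right)
    (fun τ hτ ↦ mem_image_of_mem F (mk_mem_prod hz hτ.2)) ?_ ⟨ht, htu⟩
  rw [h, add_sub_cancel]

theorem exists_forall_eq_apply_add (hF : IsFlowBox X Z S r F) {J : Set ℝ} (hJ : J.OrdConnected)
    (hne : J.Nonempty) {c : ℝ → E} (hc : IsIntegralCurveOn c (fun _ ↦ X) J)
    (hmem : ∀ t ∈ J, c t ∈ F '' S ×ˢ Ioo (-r) r) :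
    ∃ z ∈ S, ∃ u, ∀ t ∈ J, t + u ∈ Ioo (-r) r ∧ c t = F (z, t + u) := by
  obtain ⟨t₀, ht₀⟩ := hne
  have : Nonempty (α × ℝ) := ⟨(hmem t₀ ht₀).choose⟩
  choose! x hx hFx using hmem
  -- The parameter of `c t` and its time lag are locally constant, hence constant.
  have hlocal : ∀ t ∈ J, ∀ᶠ t' in 𝓝[J] t, (x t).1 = (x t').1 ∧ (x t).2 - t = (x t').2 - t' := by
    intro t ht
    have hnear : ∀ᶠ t' in 𝓝[J] t, t' + ((x t).2 - t) ∈ Ioo (-r) r := by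
      refine nhdsWithin_le_nhds <|
        (continuous_add_const _).continuousAt.eventually_mem (isOpen_Ioo.mem_nhds ?_)
      simpa using (hx t ht).2
    filter_upwards [hnear, self_mem_nhdsWithin] with t' hI ht'
    have heq := hF.eq_apply_add_sub hJ hc (fun τ hτ ↦ ⟨x τ, hx τ hτ, hFx τ hτ⟩) ht (hx t ht).1
      (hx t ht).2 (hFx t ht).symm ht' hI
    have hxt' := hF.injOn (hx t' ht') (mk_mem_prod (hx t ht).1 hI) ((hFx t' ht').trans heq)
    constructor <;> simp [hxt']
  have hconst : ∀ t ∈ J, (x t₀).1 = (x t).1 ∧ (x t₀).2 - t₀ = (x t).2 - t := fun t ht ↦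
    hJ.isPreconnected.induction₂ _ hlocal
      (fun _ _ _ _ _ _ h h' ↦ ⟨h.1.trans h'.1, h.2.trans h'.2⟩)
      (fun _ _ _ _ h ↦ ⟨h.1.symm, h.2.symm⟩) ht₀ ht
  refine ⟨(x t₀).1, (hx t₀ ht₀).1, (x t₀).2 - t₀, fun t ht ↦ ?_⟩
  rw [(hconst t ht).1, (hconst t ht).2, add_sub_cancel]
  exact ⟨(hx t ht).2, (hFx t ht).symm⟩

/-- The map carrying `F x` to `G x` for `x` in the domain of the flow box `F`. -/
noncomputable def transition [Nonempty (α × ℝ)] (F G : α × ℝ → E) (S : Set α) (r : ℝ) : E → E :=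
  G ∘ Function.invFunOn F (S ×ˢ Ioo (-r) r)

section Transition

variable [Nonempty (α × ℝ)] {Y : E → E} {Z' : Set E} {G : α × ℝ → E}

theorem transition_apply (hF : IsFlowBox X Z S r F) {x : α × ℝ} (hx : x ∈ S ×ˢ Ioo (-r) r) :
    transition F G S r (F x) = G x :=
  congrArg G (hF.injOn.leftInvOn_invFunOn hx)

theorem continuousOn_transition (hF : IsFlowBox X Z S r F) (hG : IsFlowBox Y Z' S r G) :
    ContinuousOn (transition F G S r) (F '' S ×ˢ Ioo (-r) r) := by
  refine forall_mem_image.2 fun x hx ↦ ContinuousAt.continuousWithinAt ?_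
  have heq : transition F G S r ∘ F =ᶠ[𝓝[S ×ˢ Ioo (-r) r] x] G := by
    filter_upwards [self_mem_nhdsWithin] with y hy using hF.transition_apply hy
  rw [ContinuousAt, ← hF.map_nhdsWithin_eq x hx, tendsto_map'_iff, hF.transition_apply hx]
  exact Tendsto.congr' heq.symm (hG.map_nhdsWithin_eq x hx).le

theorem mapsTo_transition (hF : IsFlowBox X Z S r F) :
    MapsTo (transition F G S r) (F '' S ×ˢ Ioo (-r) r) (G '' S ×ˢ Ioo (-r) r) :=
  forall_mem_image.2 fun x hx ↦ ⟨x, hx, (hF.transition_apply hx).symm⟩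

theorem leftInvOn_transition (hF : IsFlowBox X Z S r F) (hG : IsFlowBox Y Z' S r G) :
    LeftInvOn (transition G F S r) (transition F G S r) (F '' S ×ˢ Ioo (-r) r) :=
  forall_mem_image.2 fun x hx ↦ by rw [hF.transition_apply hx, hG.transition_apply hx]

theorem image_transition (hF : IsFlowBox X Z S r F) (hG : IsFlowBox Y Z' S r G) (hr : 0 < r) :
    transition F G S r '' (Z ∩ F '' S ×ˢ Ioo (-r) r) = Z' ∩ G '' S ×ˢ Ioo (-r) r := by
  rw [hF.inter_image_eq hr, hG.inter_image_eq hr, image_image]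
  exact image_congr fun z hz ↦
    hF.transition_apply (mk_mem_prod hz ⟨neg_lt_zero.2 hr, hr⟩)

end Transition

end IsFlowBox

end FlowBox

section Planar

variable {α : Type*} [TopologicalSpace α] {X Y : ℝ × ℝ → ℝ × ℝ}
  {δ γ : ℝ × ℝ → ℝ} {S : Set α} {r : ℝ} {F G : α × ℝ → ℝ × ℝ}

theorem IsFlowBox.exists_isPhaseCurve [Nonempty (α × ℝ)]
    (hF : IsFlowBox X {z | δ z = 0} S r F) (hG : IsFlowBox Y {z | γ z = 0} S r G)
    {J : Set ℝ} {c : ℝ → ℝ × ℝ}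
    (hc : IsPhaseCurve X (F '' S ×ˢ Ioo (-r) r \ {z | δ z = 0}) J c) :
    ∃ (J' : Set ℝ) (d : ℝ → ℝ × ℝ) (τ : ℝ → ℝ),
      IsPhaseCurve Y (G '' S ×ˢ Ioo (-r) r \ {z | γ z = 0}) J' d ∧
      ContinuousOn τ J ∧ StrictMonoOn τ J ∧ τ '' J = J' ∧
      ∀ t ∈ J, IsFlowBox.transition F G S r (c t) = d (τ t) := by
  obtain ⟨hJ, hJnt, hmem, hderiv⟩ := hc
  obtain ⟨z, hz, u, hu⟩ :=
    hF.exists_forall_eq_apply_add hJ hJnt.nonempty hderiv fun t ht ↦ (hmem t ht).1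
  have hGcurve : IsIntegralCurveOn (fun t ↦ G (z, t + u)) (fun _ ↦ Y) J :=
    (isIntegralCurveOn_add_right (hG.isIntegralCurveOn z hz) u).mono fun t ht ↦ (hu t ht).1
  refine ⟨J, fun t ↦ G (z, t + u), id, ⟨hJ, hJnt, fun t ht ↦ ⟨?_, ?_⟩, hGcurve⟩,
    continuousOn_id, strictMonoOn_id, image_id J, fun t ht ↦ ?_⟩
  · exact mem_image_of_mem G (mk_mem_prod hz (hu t ht).1)
  · intro hγ
    refine (hmem t ht).2 ?_
    rw [(hu t ht).2, hF.mem_iff z hz _ (hu t ht).1]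
    exact (hG.mem_iff z hz _ (hu t ht).1).1 hγ
  · rw [(hu t ht).2, hF.transition_apply (mk_mem_prod hz (hu t ht).1), id]

theorem IsFlowBox.orbitallyEquivAt (hF : IsFlowBox X {z | δ z = 0} S r F)
    (hG : IsFlowBox Y {z | γ z = 0} S r G) (hr : 0 < r) {a : α} (ha : a ∈ S) :
    OrbitallyEquivAt X δ (F (a, 0)) Y γ (G (a, 0)) := by
  have ha' : (a, (0 : ℝ)) ∈ S ×ˢ Ioo (-r) r := mk_mem_prod ha ⟨neg_lt_zero.2 hr, hr⟩
  have : Nonempty (α × ℝ) := ⟨(a, 0)⟩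
  exact ⟨F '' S ×ˢ Ioo (-r) r, G '' S ×ˢ Ioo (-r) r, IsFlowBox.transition F G S r,
    IsFlowBox.transition G F S r, hF.isOpen_image, hG.isOpen_image, mem_image_of_mem F ha',
    mem_image_of_mem G ha', hF.continuousOn_transition hG, hG.continuousOn_transition hF,
    hF.mapsTo_transition, hG.mapsTo_transition, hF.leftInvOn_transition hG,
    hG.leftInvOn_transition hF, hF.transition_apply ha', hF.image_transition hG hr,
    fun _ _ ↦ hF.exists_isPhaseCurve hG, fun _ _ ↦ hG.exists_isPhaseCurve hF⟩

end Planar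

/-! ### Flow boxes around a topological cross-section -/

section FlowBoxOfCrossing

variable {E : Type*} [NormedAddCommGroup E] [NormedSpace ℝ E]
  {X : E → E} {s : Set E} {p : E} {ρ r : ℝ} {φ : E × ℝ → E} {K : ℝ≥0} {f : E → ℝ}

namespace IsLocalFlow

theorem isUpcrossing (hφ : IsLocalFlow X s p ρ φ)
    (hcross : ∀ z ∈ s, f z = 0 → CrossesUpwardAt X f z) {z : E} (hz : z ∈ ball p ρ) {t : ℝ}
    (ht : t ∈ Ioo (-ρ) ρ) (h0 : f (φ (z, t)) = 0) : IsUpcrossing (fun t ↦ f (φ (z, t))) t :=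
  (hcross _ (hφ.mem z hz t ht) h0).isUpcrossing (hφ.isIntegralCurveAt hz ht)

theorem eq_of_apply_eq_zero (hφ : IsLocalFlow X s p ρ φ)
    (hcross : ∀ z ∈ s, f z = 0 → CrossesUpwardAt X f z) (hf : Continuous f) {z : E}
    (hz : z ∈ ball p ρ) {t u : ℝ} (ht : t ∈ Ioo (-ρ) ρ) (hu : u ∈ Ioo (-ρ) ρ)
    (ht0 : f (φ (z, t)) = 0) (hu0 : f (φ (z, u)) = 0) : t = u :=
  eq_of_forall_zero_isUpcrossing ordConnected_Ioo
    (hf.comp_continuousOn (hφ.isIntegralCurveOn z hz).continuousOn)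
    (fun _ hτ ↦ hφ.isUpcrossing hcross hz hτ) ht hu ht0 hu0

theorem injOn_zeroSet_prod (hφ : IsLocalFlow X s p ρ φ) (hs : LipschitzOnWith K X s)
    (hcross : ∀ z ∈ s, f z = 0 → CrossesUpwardAt X f z) (hf : Continuous f) (hr : r ≤ ρ)
    (hmaps : MapsTo φ (ball p r ×ˢ Ioo (-r) r) (ball p ρ)) :
    InjOn φ (({z | f z = 0} ∩ ball p r) ×ˢ Ioo (-r) r) := by
  have hI : Ioo (-r) r ⊆ Ioo (-ρ) ρ := Ioo_subset_Ioo (neg_le_neg hr) hr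
  rintro ⟨z, t⟩ ⟨⟨hz0, hz⟩, ht⟩ ⟨z', t'⟩ ⟨⟨hz0', hz'⟩, ht'⟩ heq
  -- Flow back to `{f = 0}`: the common orbit meets this set only once.
  have hback : φ (φ (z, t), -t) = z :=
    hφ.flow_flow_neg hs (ball_subset_ball hr hz) (hI ht) (hmaps ⟨hz, ht⟩)
  have hback' : φ (φ (z, t), -t') = z' := by
    rw [heq]
    exact hφ.flow_flow_neg hs (ball_subset_ball hr hz') (hI ht') (hmaps ⟨hz', ht'⟩)
  have htt' : -t = -t' := hφ.eq_of_apply_eq_zero hcross hf (hmaps ⟨hz, ht⟩)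
    (neg_mem_Ioo_iff.2 (by simpa using hI ht)) (neg_mem_Ioo_iff.2 (by simpa using hI ht'))
    (hback.symm ▸ hz0) (hback'.symm ▸ hz0')
  rw [← hback, ← hback', neg_injective htt']

theorem nhds_le_map_nhdsWithin_zeroSet_prod (hφ : IsLocalFlow X s p ρ φ)
    (hs : LipschitzOnWith K X s) (hcross : ∀ z ∈ s, f z = 0 → CrossesUpwardAt X f z)
    (hf : Continuous f) (hr : r ≤ ρ) {z : E} (hz0 : f z = 0) (hz : z ∈ ball p r) {t : ℝ}
    (ht : t ∈ Ioo (-r) r) (hzt : φ (z, t) ∈ ball p ρ) :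
    𝓝 (φ (z, t)) ≤ map φ (𝓝[({z | f z = 0} ∩ ball p r) ×ˢ Ioo (-r) r] (z, t)) := by
  have hI : Ioo (-r) r ⊆ Ioo (-ρ) ρ := Ioo_subset_Ioo (neg_le_neg hr) hr
  have ht' : -t ∈ Ioo (-ρ) ρ := neg_mem_Ioo_iff.2 (by simpa using hI ht)
  have hback : φ (φ (z, t), -t) = z := hφ.flow_flow_neg hs (ball_subset_ball hr hz) (hI ht) hzt
  let L := 𝓝[{x | f (φ x) = 0}] (φ (z, t), -t)
  have hdom : ∀ᶠ x in 𝓝 (φ (z, t), -t), x ∈ ball p ρ ×ˢ Ioo (-ρ) ρ :=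
    prod_mem_nhds (isOpen_ball.mem_nhds hzt) (isOpen_Ioo.mem_nhds ht')
  have hzeros : 𝓝 (φ (z, t)) ≤ map Prod.fst L :=
    IsUpcrossing.nhds_le_map_fst (h := f ∘ φ)
      (hdom.mono fun x hx ↦ hf.continuousAt.comp (hφ.continuousAt hx.1 hx.2))
      (hφ.isUpcrossing hcross hzt ht' (hback.symm ▸ hz0))
  -- `κ` is the inverse of `φ` wherever it takes values in the box.
  let κ : E × ℝ → E × ℝ := fun x ↦ (φ x, -x.2)
  have hκ_nhds : Tendsto κ L (𝓝 (z, t)) := by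
    have hκ : ContinuousAt κ (φ (z, t), -t) := (hφ.continuousAt hzt ht').prodMk (by fun_prop)
    have hκ_apply : κ (φ (z, t), -t) = (z, t) := Prod.ext hback (neg_neg t)
    exact hκ_apply ▸ hκ.mono_left nhdsWithin_le_nhds
  have hκ_mem : ∀ᶠ x in L, κ x ∈ ({z | f z = 0} ∩ ball p r) ×ˢ Ioo (-r) r := by
    filter_upwards [self_mem_nhdsWithin, hκ_nhds.eventually
      (prod_mem_nhds (isOpen_ball.mem_nhds hz) (isOpen_Ioo.mem_nhds ht))] with x hx0 hx
    exact ⟨⟨hx0, hx.1⟩, hx.2⟩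
  have hφκ : φ ∘ κ =ᶠ[L] Prod.fst := by
    filter_upwards [hκ_mem, nhdsWithin_le_nhds hdom] with x hx hxdom
    exact hφ.flow_flow_neg hs hxdom.1 hxdom.2 (ball_subset_ball hr hx.1.2)
  calc 𝓝 (φ (z, t)) ≤ map Prod.fst L := hzeros
    _ = map φ (map κ L) := by rw [map_map, map_congr hφκ]
    _ ≤ map φ (𝓝[({z | f z = 0} ∩ ball p r) ×ˢ Ioo (-r) r] (z, t)) :=
      map_mono (tendsto_nhdsWithin_iff.2 ⟨hκ_nhds, hκ_mem⟩)

theorem isFlowBox (hφ : IsLocalFlow X s p ρ φ) (hs : LipschitzOnWith K X s)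
    (hcross : ∀ z ∈ s, f z = 0 → CrossesUpwardAt X f z) (hf : Continuous f) (hr : r ≤ ρ)
    (hmaps : MapsTo φ (ball p r ×ˢ Ioo (-r) r) (ball p ρ)) :
    IsFlowBox X {z | f z = 0} ({z | f z = 0} ∩ ball p r) r φ := by
  have hI : Ioo (-r) r ⊆ Ioo (-ρ) ρ := Ioo_subset_Ioo (neg_le_neg hr) hr
  have hball : ball p r ⊆ ball p ρ := ball_subset_ball hr
  refine ⟨hφ.injOn_zeroSet_prod hs hcross hf hr hmaps, ?_,
    fun z hz ↦ (hφ.isIntegralCurveOn z (hball hz.2)).mono hI, ?_, K, hs.mono ?_⟩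
  · rintro ⟨z, t⟩ ⟨⟨hz0, hz⟩, ht⟩
    exact le_antisymm (hφ.continuousAt (hball hz) (hI ht)).continuousWithinAt
      (hφ.nhds_le_map_nhdsWithin_zeroSet_prod hs hcross hf hr hz0 hz ht (hmaps ⟨hz, ht⟩))
  · rintro z ⟨hz0, hz⟩ t ht
    have hzero : f (φ (z, 0)) = 0 := by rwa [hφ.apply_zero z (hball hz)]
    refine ⟨fun h ↦ ?_, fun h ↦ h ▸ hzero⟩
    exact hφ.eq_of_apply_eq_zero hcross hf (hball hz) (hI ht)
      (zero_mem_Ioo_of_mem (hI ht)) h hzero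
  · rintro _ ⟨⟨z, t⟩, ⟨⟨-, hz⟩, ht⟩, rfl⟩
    exact hφ.mem z (hball hz) t (hI ht)

end IsLocalFlow

theorem eventually_exists_isFlowBox [CompleteSpace E] (hX : ContDiffAt ℝ 1 X p)
    (hf : Continuous f) (hcross : ∀ᶠ z in 𝓝 p, f z = 0 → CrossesUpwardAt X f z) :
    ∀ᶠ r in 𝓝[>] 0, ∃ F : E × ℝ → E, F (p, 0) = p ∧
      IsFlowBox X {z | f z = 0} ({z | f z = 0} ∩ ball p r) r F := by
  obtain ⟨K, s, hs, hK⟩ := hX.exists_lipschitzOnWith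
  obtain ⟨ρ, hρ, φ, hφ⟩ := exists_isLocalFlow hX (inter_mem hs hcross)
  have hp : p ∈ ball p ρ := mem_ball_self hρ
  have hcont := hφ.continuousAt hp ⟨neg_lt_zero.2 hρ, hρ⟩
  rw [ContinuousAt, hφ.apply_zero p hp] at hcont
  obtain ⟨r₀, hr₀, hmaps⟩ := Metric.mem_nhds_iff.1 (hcont (isOpen_ball.mem_nhds hp))
  filter_upwards [Ioc_mem_nhdsGT (lt_min hr₀ hρ)] with r hr
  refine ⟨φ, hφ.apply_zero p hp, hφ.isFlowBox (hK.mono inter_subset_left) (fun z hz ↦ hz.2) hf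
    (hr.2.trans (min_le_right _ _)) ?_⟩
  rw [ball_prod_Ioo_eq_ball]
  exact (ball_subset_ball (hr.2.trans (min_le_left _ _))).trans hmaps

end FlowBoxOfCrossing

/-! ### Asymptotic criteria -/

theorem CrossesUpwardAt.of_hasFDerivAt {E : Type*} [NormedAddCommGroup E] [NormedSpace ℝ E]
    {X : E → E} {f : E → ℝ} {f' : E →L[ℝ] ℝ} {z : E} (hf : HasFDerivAt f f' z) (h0 : f z = 0)
    (hpos : 0 < f' (X z)) : CrossesUpwardAt X f z := by
  rintro c rfl hc
  have hderiv : HasDerivAt (f ∘ c) (f' (X (c 0))) 0 := hf.comp_hasDerivAt 0 hc.hasDerivAt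
  exact eventually_nhdsWithin_sign_eq_of_deriv_pos (hderiv.deriv ▸ hpos) h0

theorem isUpcrossing_zero_of_isEquivalent_pow {h : ℝ → ℝ} {C : ℝ} {k : ℕ}
    (hh : h ~[𝓝 0] fun t ↦ C * t ^ k) (hk : Odd k) (hC : 0 < C) : IsUpcrossing h 0 := by
  obtain ⟨φ, hφ, heq⟩ := hh.exists_pos_eq_mul
  filter_upwards [hφ, heq] with t hφt ht
  rw [ht, Pi.mul_apply, sign_mul, sign_mul, sign_pos hφt, sign_pos hC, one_mul, one_mul, sign_pow,
    sub_zero]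
  rcases lt_trichotomy t 0 with h | rfl | h
  · rw [sign_neg h, hk.neg_one_pow]
  · rw [sign_zero, zero_pow hk.pos.ne']
  · rw [sign_pos h, one_pow]

theorem hasDerivAt_fst_comp {E F : Type*} [NormedAddCommGroup E] [NormedSpace ℝ E]
    [NormedAddCommGroup F] [NormedSpace ℝ F] {c : ℝ → E × F} {v : E × F} {t : ℝ}
    (hc : HasDerivAt c v t) : HasDerivAt (fun t ↦ (c t).1) v.1 t :=
  (hasFDerivAt_fst (𝕜 := ℝ) (p := c t)).comp_hasDerivAt t hc

theorem hasDerivAt_snd_comp {E F : Type*} [NormedAddCommGroup E] [NormedSpace ℝ E]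
    [NormedAddCommGroup F] [NormedSpace ℝ F] {c : ℝ → E × F} {v : E × F} {t : ℝ}
    (hc : HasDerivAt c v t) : HasDerivAt (fun t ↦ (c t).2) v.2 t :=
  (hasFDerivAt_snd (𝕜 := ℝ) (p := c t)).comp_hasDerivAt t hc

theorem eventually_mul_pos_of_isEquivalent_even_pow {α : Type*} {l : Filter α} {g u : α → ℝ}
    {a b : ℝ} {k : ℕ} (hg : g ~[l] fun x ↦ b * u x ^ k * a) (hb : 0 < b) (hk : Even k)
    (ha : a ≠ 0) : ∀ᶠ x in l, u x ≠ 0 → 0 < a * g x := by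
  obtain ⟨φ, hφ, heq⟩ := hg.exists_pos_eq_mul
  filter_upwards [hφ, heq] with x hφx hx hux
  have hpos := hk.pow_pos hux
  calc 0 < φ x * (b * u x ^ k) * a ^ 2 := by positivity
    _ = a * g x := by rw [hx, Pi.mul_apply]; ring

theorem isEquivalent_const_mul_of_hasDerivAt_zero {f : ℝ → ℝ} {a : ℝ} (hf : HasDerivAt f a 0)
    (h0 : f 0 = 0) (ha : a ≠ 0) : f ~[𝓝 0] fun t ↦ a * t := by
  refine IsLittleO.trans_isBigO ?_ (isBigO_self_const_mul ha _ _)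
  simpa [Pi.sub_def, h0, mul_comm] using hasDerivAt_iff_isLittleO.1 hf

theorem isBigO_pow_succ_of_deriv {E : Type*} [NormedAddCommGroup E] [NormedSpace ℝ E]
    {f : ℝ → E} {k : ℕ} (hf : ∀ᶠ t in 𝓝 0, DifferentiableAt ℝ f t)
    (hderiv : deriv f =O[𝓝 0] fun t ↦ t ^ k) (h0 : f 0 = 0) :
    f =O[𝓝 0] fun t ↦ t ^ (k + 1) := by
  have hfderiv : fderiv ℝ f =O[𝓝 0] fun t ↦ ‖t - 0‖ ^ (k : ℝ) := by
    rw [← isBigO_norm_left]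
    simpa only [← norm_deriv_eq_norm_fderiv, Real.rpow_natCast, sub_zero, ← norm_pow,
      isBigO_norm_right, isBigO_norm_left] using hderiv
  simpa only [← Nat.cast_succ, Real.rpow_natCast, sub_zero, ← norm_pow, isBigO_norm_right] using
    isBigO_norm_rpow_add_one_of_fderiv_of_apply_eq_zero k.cast_nonneg hf hfderiv h0

/-- Where `u ^ m` and `v ^ n` are comparable, `u` has weight `n` and `v` has weight `m`. -/
theorem isLittleO_mul_pow_of_weight_lt {α : Type*} {l : Filter α} {u v : α → ℝ} {m n i j i' j' : ℕ}
    (hm : m ≠ 0) (huv : (fun x ↦ u x ^ m) =Θ[l] fun x ↦ v x ^ n) (hv : Tendsto v l (𝓝 0))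
    (hw : n * i' + m * j' < n * i + m * j) :
    (fun x ↦ u x ^ i * v x ^ j) =o[l] fun x ↦ u x ^ i' * v x ^ j' := by
  have hweight (i j : ℕ) :
      ((fun x ↦ u x ^ i * v x ^ j) ^ m) =Θ[l] fun x ↦ v x ^ (n * i + m * j) := by
    have hmul := (huv.pow i).mul (isTheta_refl (fun x ↦ (v x ^ j) ^ m) l)
    simpa only [Pi.pow_def, mul_pow, ← pow_mul, pow_add, mul_comm] using hmul
  refine IsLittleO.of_pow ?_ hm
  exact (hweight i j).trans_isLittleO <|
    ((isLittleO_pow_pow hw).comp_tendsto hv).trans_isTheta (hweight i' j').symm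

/-! ### Orbits crossing the curve `x ^ m + y ^ n = 0` -/

section Cusp

variable {m n : ℕ} {X : ℝ × ℝ → ℝ × ℝ}

/-- The function `x ^ m + y ^ n`, whose zero set is singular at the origin if `2 ≤ m` and
`2 ≤ n`; for `m = 3` and `n = 5` it is the `E₈` curve. -/
def cusp (m n : ℕ) : ℝ × ℝ → ℝ := fun z ↦ z.1 ^ m + z.2 ^ n

theorem differentiable_cusp : Differentiable ℝ (cusp m n) := by
  unfold cusp
  fun_prop

theorem fderiv_cusp_apply (z v : ℝ × ℝ) :
    fderiv ℝ (cusp m n) z v = m * z.1 ^ (m - 1) * v.1 + n * z.2 ^ (n - 1) * v.2 := by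
  have h : HasFDerivAt (cusp m n) _ z :=
    ((hasFDerivAt_fst (𝕜 := ℝ)).pow m).add ((hasFDerivAt_snd (𝕜 := ℝ)).pow n)
  simp [h.fderiv]

theorem crossesUpwardAt_const_mul_cusp {σ : ℝ} {z : ℝ × ℝ} (h0 : cusp m n z = 0)
    (hpos : 0 < σ * fderiv ℝ (cusp m n) z (X z)) :
    CrossesUpwardAt X (fun z ↦ σ * cusp m n z) z :=
  .of_hasFDerivAt ((differentiable_cusp z).hasFDerivAt.const_mul σ) (mul_eq_zero_of_right σ h0) hpos

theorem isTheta_pow_nhdsWithin_cusp_eq_zero (p : ℝ × ℝ) :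
    (fun z : ℝ × ℝ ↦ z.1 ^ m) =Θ[𝓝[{z | cusp m n z = 0}] p] fun z ↦ z.2 ^ n := by
  refine .of_norm_eventuallyEq_norm (eventually_nhdsWithin_of_forall fun z hz ↦ ?_)
  change ‖z.1 ^ m‖ = ‖z.2 ^ n‖
  rw [eq_neg_of_add_eq_zero_left hz, norm_neg]

theorem isLittleO_nhdsWithin_cusp_eq_zero (hm : m ≠ 0) {i j i' j' : ℕ}
    (hw : n * i' + m * j' < n * i + m * j) :
    (fun z : ℝ × ℝ ↦ z.1 ^ i * z.2 ^ j) =o[𝓝[{z | cusp m n z = 0}] 0]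
      fun z ↦ z.1 ^ i' * z.2 ^ j' :=
  isLittleO_mul_pow_of_weight_lt hm (isTheta_pow_nhdsWithin_cusp_eq_zero 0)
    ((continuous_snd.tendsto (0 : ℝ × ℝ)).mono_left nhdsWithin_le_nhds) hw

theorem fst_eq_zero_iff_snd_eq_zero_of_cusp_eq_zero (hm : m ≠ 0) (hn : n ≠ 0) {z : ℝ × ℝ}
    (hz : cusp m n z = 0) : z.1 = 0 ↔ z.2 = 0 := by
  rw [← pow_eq_zero_iff hm, eq_neg_of_add_eq_zero_left hz, neg_eq_zero, pow_eq_zero_iff hn]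

theorem fderiv_cusp_isEquivalent_of_fst_ne_zero (hm : m ≠ 0) (hmn : m < n)
    (hX : ContinuousAt X 0) (ha : (X 0).1 ≠ 0) :
    (fun z ↦ fderiv ℝ (cusp m n) z (X z)) ~[𝓝[{z | cusp m n z = 0}] 0]
      fun z ↦ m * z.1 ^ (m - 1) * (X 0).1 := by
  have hX' : Tendsto X (𝓝[{z | cusp m n z = 0}] 0) (𝓝 (X 0)) := hX.mono_left nhdsWithin_le_nhds
  have hweight : n * (m - 1) + m * 0 < n * 0 + m * (n - 1) := by
    zify [Nat.one_le_iff_ne_zero.2 hm, Nat.one_le_of_lt hmn]; linarith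
  have hpow : (fun z : ℝ × ℝ ↦ z.2 ^ (n - 1)) =o[𝓝[{z | cusp m n z = 0}] 0]
      fun z ↦ z.1 ^ (m - 1) := by
    simpa using isLittleO_nhdsWithin_cusp_eq_zero hm hweight
  have hsnd : (fun z ↦ n * z.2 ^ (n - 1) * (X z).2) =o[𝓝[{z | cusp m n z = 0}] 0]
      fun z ↦ m * z.1 ^ (m - 1) * (X 0).1 :=
    ((hpow.const_mul_left n).const_mul_right (Nat.cast_ne_zero.2 hm)).mul_isBigO
      (isBigO_const_of_tendsto hX'.snd_nhds ha)
  have hfst := IsEquivalent.refl (u := fun z : ℝ × ℝ ↦ m * z.1 ^ (m - 1)).mul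
    ((isEquivalent_const_iff_tendsto ha).2 hX'.fst_nhds)
  simp only [fderiv_cusp_apply]
  exact hfst.add_isLittleO hsnd

theorem fderiv_cusp_isEquivalent_of_fst_eq_zero (hm : m ≠ 0) (hmn : m < n) (hnm : n < 2 * m)
    (hX : DifferentiableAt ℝ X 0) (ha : (X 0).1 = 0) (hb : (X 0).2 ≠ 0) :
    (fun z ↦ fderiv ℝ (cusp m n) z (X z)) ~[𝓝[{z | cusp m n z = 0}] 0]
      fun z ↦ n * z.2 ^ (n - 1) * (X 0).2 := by
  let L := 𝓝[{z | cusp m n z = 0}] (0 : ℝ × ℝ)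
  have hL : L ≤ 𝓝 0 := nhdsWithin_le_nhds
  have hweight : n * 0 + m * (n - 1) < n * (m - 1) + m * 1 := by
    zify [Nat.one_le_iff_ne_zero.2 hm, Nat.one_le_of_lt hmn]; nlinarith
  have hpow : (fun z : ℝ × ℝ ↦ z.1 ^ (m - 1) * z.2) =o[L] fun z ↦ z.2 ^ (n - 1) := by
    simpa using isLittleO_nhdsWithin_cusp_eq_zero hm hweight
  have hfst_isLittleO : (fun z : ℝ × ℝ ↦ z.1) =o[L] fun z ↦ z.2 := by
    simpa using isLittleO_nhdsWithin_cusp_eq_zero hm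
      (show n * 0 + m * 1 < n * 1 + m * 0 by simpa)
  have hX1 : (fun z ↦ (X z).1) =O[L] fun z ↦ z.2 := calc
    (fun z ↦ (X z).1) =O[L] fun z ↦ z := by
      simpa [ha] using hX.fst.isBigO_sub.mono hL
    _ =O[L] fun z ↦ z.2 := hfst_isLittleO.isBigO.prod_left (isBigO_refl _ _)
  have hfst : (fun z ↦ m * z.1 ^ (m - 1) * (X z).1) =o[L] fun z ↦ n * z.2 ^ (n - 1) * (X 0).2 := by
    have := (((isBigO_refl _ _).const_mul_left (m : ℝ)).mul hX1).trans_isLittleO hpow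
    refine (this.const_mul_right (c := n * (X 0).2) ?_).congr_right fun z ↦ mul_right_comm _ _ _
    exact mul_ne_zero (Nat.cast_ne_zero.2 (Nat.ne_zero_of_lt hmn)) hb
  have hsnd := IsEquivalent.refl (u := fun z : ℝ × ℝ ↦ n * z.2 ^ (n - 1)).mul
    ((isEquivalent_const_iff_tendsto hb).2 (hX.continuousAt.mono_left hL).snd_nhds)
  simp only [fderiv_cusp_apply]
  exact (hsnd.add_isLittleO hfst).congr_left (.of_eq (add_comm _ _))

theorem crossesUpwardAt_zero_const_mul_cusp_of_fst_ne_zero (hm : Odd m) (hmn : m < n)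
    (ha : (X 0).1 ≠ 0) : CrossesUpwardAt X (fun z ↦ (X 0).1 * cusp m n z) 0 := by
  intro c hc0 hc
  have hderiv : HasDerivAt c (X 0) 0 := hc0 ▸ hc.hasDerivAt
  have hfst : (fun t ↦ (c t).1) ~[𝓝 0] fun t ↦ (X 0).1 * t :=
    isEquivalent_const_mul_of_hasDerivAt_zero (hasDerivAt_fst_comp hderiv)
      (by rw [hc0, Prod.fst_zero]) ha
  have hsnd : (fun t ↦ (c t).2) =O[𝓝 0] fun t ↦ t := by
    simpa [hc0] using (hasDerivAt_snd_comp hderiv).hasFDerivAt.isBigO_sub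
  have hsnd_pow : (fun t ↦ (c t).2 ^ n) =o[𝓝 0] fun t ↦ ((X 0).1 * t) ^ m := by
    simp only [mul_pow]
    exact ((hsnd.pow n).trans_isLittleO (isLittleO_pow_pow hmn)).const_mul_right (pow_ne_zero m ha)
  have hcusp : (fun t ↦ (X 0).1 * cusp m n (c t)) ~[𝓝 0] fun t ↦ (X 0).1 * ((X 0).1 * t) ^ m :=
    IsEquivalent.refl.mul ((hfst.pow m).add_isLittleO hsnd_pow)
  refine isUpcrossing_zero_of_isEquivalent_pow (C := (X 0).1 ^ (m + 1)) ?_ hm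
    (hm.add_one.pow_pos ha)
  exact hcusp.congr_right (.of_eq (funext fun t ↦ by ring))

theorem crossesUpwardAt_zero_const_mul_cusp_of_fst_eq_zero (hn : Odd n) (hnm : n < 2 * m)
    (hX : DifferentiableAt ℝ X 0) (ha : (X 0).1 = 0) (hb : (X 0).2 ≠ 0) :
    CrossesUpwardAt X (fun z ↦ (X 0).2 * cusp m n z) 0 := by
  intro c hc0 hc
  have hderiv : HasDerivAt c (X 0) 0 := hc0 ▸ hc.hasDerivAt
  have hsnd : (fun t ↦ (c t).2) ~[𝓝 0] fun t ↦ (X 0).2 * t :=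
    isEquivalent_const_mul_of_hasDerivAt_zero (hasDerivAt_snd_comp hderiv)
      (by rw [hc0, Prod.snd_zero]) hb
  have hfst_deriv : ∀ᶠ t in 𝓝 0, HasDerivAt (fun t ↦ (c t).1) (X (c t)).1 t :=
    hc.mono fun t ht ↦ hasDerivAt_fst_comp ht
  have hXc : (fun t ↦ (X (c t)).1) =O[𝓝 0] fun t ↦ t := by
    have := (hX.hasFDerivAt.comp_hasDerivAt_of_eq 0 hderiv hc0.symm).hasFDerivAt.fst.isBigO_sub
    simpa [hc0, ha] using this
  have hfst : (fun t ↦ (c t).1) =O[𝓝 0] fun t ↦ t ^ 2 := by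
    refine isBigO_pow_succ_of_deriv (hfst_deriv.mono fun t ht ↦ ht.differentiableAt) ?_
      (by rw [hc0, Prod.fst_zero])
    simpa only [pow_one] using hXc.congr' (hfst_deriv.mono fun t ht ↦ ht.deriv.symm) .rfl
  have hfst_pow : (fun t ↦ (c t).1 ^ m) =o[𝓝 0] fun t ↦ ((X 0).2 * t) ^ n := by
    have := (hfst.pow m).congr_right fun t ↦ (pow_mul t 2 m).symm
    simp only [mul_pow]
    exact (this.trans_isLittleO (isLittleO_pow_pow hnm)).const_mul_right (pow_ne_zero n hb)
  have hcusp : (fun t ↦ (X 0).2 * cusp m n (c t)) ~[𝓝 0] fun t ↦ (X 0).2 * ((X 0).2 * t) ^ n :=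
    IsEquivalent.refl.mul <|
      ((hsnd.pow n).add_isLittleO hfst_pow).congr_left (.of_eq (add_comm _ _))
  refine isUpcrossing_zero_of_isEquivalent_pow (C := (X 0).2 ^ (n + 1)) ?_ hn
    (hn.add_one.pow_pos hb)
  exact hcusp.congr_right (.of_eq (funext fun t ↦ by ring))

theorem eventually_crossesUpwardAt_const_mul_cusp {σ : ℝ}
    (h0 : CrossesUpwardAt X (fun z ↦ σ * cusp m n z) 0)
    (hpos : ∀ᶠ z in 𝓝[{z | cusp m n z = 0}] 0, z ≠ 0 → 0 < σ * fderiv ℝ (cusp m n) z (X z)) :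
    ∀ᶠ z in 𝓝 0, cusp m n z = 0 → CrossesUpwardAt X (fun z ↦ σ * cusp m n z) z := by
  filter_upwards [eventually_nhdsWithin_iff.1 hpos] with z hz hcusp
  rcases eq_or_ne z 0 with rfl | hne
  · exact h0
  · exact crossesUpwardAt_const_mul_cusp hcusp (hz hcusp hne)

theorem exists_eventually_crossesUpwardAt_const_mul_cusp (hm : Odd m) (hn : Odd n) (hmn : m < n)
    (hnm : n < 2 * m) (hX : DifferentiableAt ℝ X 0) (h0 : X 0 ≠ 0) :
    ∃ σ ≠ 0, ∀ᶠ z in 𝓝 0, cusp m n z = 0 → CrossesUpwardAt X (fun z ↦ σ * cusp m n z) z := by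
  have fst_eq_zero_iff {z : ℝ × ℝ} (hz : cusp m n z = 0) : z.1 = 0 ↔ z.2 = 0 :=
    fst_eq_zero_iff_snd_eq_zero_of_cusp_eq_zero hm.pos.ne' hn.pos.ne' hz
  by_cases ha : (X 0).1 = 0
  · have hb : (X 0).2 ≠ 0 := fun hb ↦ h0 (Prod.ext ha hb)
    refine ⟨(X 0).2, hb, eventually_crossesUpwardAt_const_mul_cusp
      (crossesUpwardAt_zero_const_mul_cusp_of_fst_eq_zero hn hnm hX ha hb) ?_⟩
    filter_upwards [self_mem_nhdsWithin, eventually_mul_pos_of_isEquivalent_even_pow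
      (fderiv_cusp_isEquivalent_of_fst_eq_zero hm.pos.ne' hmn hnm hX ha hb)
      (Nat.cast_pos.2 hn.pos) (Nat.Odd.sub_odd hn odd_one) hb] with z hz hpos hne
    exact hpos fun h2 ↦ hne (Prod.ext ((fst_eq_zero_iff hz).2 h2) h2)
  · refine ⟨(X 0).1, ha, eventually_crossesUpwardAt_const_mul_cusp
      (crossesUpwardAt_zero_const_mul_cusp_of_fst_ne_zero hm hmn ha) ?_⟩
    filter_upwards [self_mem_nhdsWithin, eventually_mul_pos_of_isEquivalent_even_pow
      (fderiv_cusp_isEquivalent_of_fst_ne_zero hm.pos.ne' hmn hX.continuousAt ha)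
      (Nat.cast_pos.2 hm.pos) (Nat.Odd.sub_odd hm odd_one) ha] with z hz hpos hne
    exact hpos fun h1 ↦ hne (Prod.ext h1 ((fst_eq_zero_iff hz).1 h1))

end Cusp

theorem E8_case_general {m n : ℕ} (hm : Odd m) (hn : Odd n) (hmn : m < n) (hnm : n < 2 * m)
    {X Y : ℝ × ℝ → ℝ × ℝ} (hX : ContDiffAt ℝ 1 X 0) (hY : ContDiffAt ℝ 1 Y 0)
    (hX0 : X 0 ≠ 0) (hY0 : Y 0 ≠ 0) :
    OrbitallyEquivAt X (cusp m n) 0 Y (cusp m n) 0 := by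
  have hflowBox {Z : ℝ × ℝ → ℝ × ℝ} (hZ : ContDiffAt ℝ 1 Z 0) (hZ0 : Z 0 ≠ 0) :
      ∀ᶠ r in 𝓝[>] 0, ∃ F : (ℝ × ℝ) × ℝ → ℝ × ℝ, F (0, 0) = 0 ∧
        IsFlowBox Z {z | cusp m n z = 0} ({z | cusp m n z = 0} ∩ ball 0 r) r F := by
    obtain ⟨σ, hσ, hcross⟩ := exists_eventually_crossesUpwardAt_const_mul_cusp hm hn hmn hnm
      (hZ.differentiableAt one_ne_zero) hZ0
    simpa only [mul_eq_zero, hσ, false_or] using eventually_exists_isFlowBox hZ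
      (differentiable_cusp.continuous.const_mul σ) (by simpa only [mul_eq_zero, hσ, false_or])
  obtain ⟨r, ⟨⟨F, hF0, hF⟩, G, hG0, hG⟩, hr⟩ :=
    ((hflowBox hX hX0).and (hflowBox hY hY0) |>.and self_mem_nhdsWithin).exists
  have h0 : (0 : ℝ × ℝ) ∈ {z | cusp m n z = 0} ∩ ball 0 r :=
    ⟨by simp [cusp, hm.pos.ne', hn.pos.ne'], mem_ball_self hr⟩
  simpa only [hF0, hG0] using hF.orbitallyEquivAt hG hr h0

/-- (`E₈`-type impasse curve.)
If `δ(x,y) = x³ + y⁵` and `X = (P,Q)` is real-analytic near the origin with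
`(P(0,0), Q(0,0)) ≠ (0,0)`, then without further assumptions on the Taylor expansion of `X`,
`(X, δ)` is orientation-preserving `C⁰`-orbitally equivalent at the origin to the system with
constant adjoint vector field `(P(0,0), Q(0,0))`. -/
theorem E8_case (P Q : ℝ × ℝ → ℝ)
    (hP : AnalyticAt ℝ P (0, 0)) (hQ : AnalyticAt ℝ Q (0, 0))
    (hX0 : (P (0, 0), Q (0, 0)) ≠ ((0 : ℝ), (0 : ℝ))) :
    OrbitallyEquivAt (fun z => (P z, Q z))
      (fun z => z.1 ^ 3 + z.2 ^ 5) (0, 0)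
      (fun _ => (P (0, 0), Q (0, 0)))
      (fun z => z.1 ^ 3 + z.2 ^ 5) (0, 0) :=
  E8_case_general (m := 3) (n := 5) (by decide) (by decide) (by norm_num) (by norm_num)
    (hP.prod hQ).contDiffAt contDiffAt_const hX0 hX0
end
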